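/- arXiv:1612.06335 — 4 statements merged into one kernel-verified Lean document; each statement's English description precedes it below -/
import Mathlib

section
/- Let n > t ≥ 0 be integers and let C ⊆ {0,1}^n be a set of binary words of length n with |C| ≥ 2. Then the following are equivalent: (1) every common subsequence of any two distinct codewords of C has length at most n−t−1; (2) C is decodable under up to t deletions, i.e., no two distinct codewords of C have a common subsequence of length at least n−t; (3) C is decodable under up to t insertions, i.e., no two distinct codewords of C have a common supersequence of length at most n+t; (4) C is decodable under up to t combined insertions and deletions, i.e., there is no word z and distinct x, y ∈ C such that z is obtainable from each of x and y by a total of at most t insertions and deletions (z is obtainable from x by a total of at most t insertions and deletions means there exists a word w with w a subsequence of x, w a subsequence of z, and (|x|−|w|) + (|z|−|w|) ≤ t). -/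
/-!
Two subsequences `u`, `v` of a word `z` overlap in at least `|u| + |v| - |z|` positions of `z`
(`exists_common_sublist`); dually, two words `u`, `v` with a common subsequence `w` can be merged
along `w` into a common supersequence of length at most `|u| + |v| - |w|`
(`exists_common_superlist`).

For words of length `n` this turns a common subsequence of length at least `n - t` into a common
supersequence of length at most `n + t` and back, which relates deletions to insertions.
If `z` arises from `x` by `a` deletions and `b` insertions and from `y` by `c` deletions and `d`
insertions, the surviving parts of `x` and `y` in `z` overlap in at least `n - a - d` and
in at least `n - c - b` positions. The average of these two bounds is at least `n - t` when
`a + b ≤ t` and `c + d ≤ t`, so `x` and `y` have a common subsequence of length at least `n - t`.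
-/

/-- Two subsequences of `z` have a common subsequence of length at least `|u| + |v| - |z|`. -/
theorem exists_common_sublist {α : Type*} {u z : List α} (hu : u.Sublist z) :
    ∀ {v : List α}, v.Sublist z →
      ∃ w : List α, w.Sublist u ∧ w.Sublist v ∧ u.length + v.length ≤ w.length + z.length := by
  induction hu with
  | slnil =>
    intro v hv
    exact ⟨[], by simp, by simp, by simpa using hv.length_le⟩
  | cons a _ ih =>
    intro v hv
    cases hv with
    | cons _ hv =>
      obtain ⟨w, h1, h2, h3⟩ := ih hv
      exact ⟨w, h1, h2, by simp only [List.length_cons]; omega⟩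
    | cons_cons _ hv =>
      obtain ⟨w, h1, h2, h3⟩ := ih hv
      exact ⟨w, h1, h2.cons a, by simp only [List.length_cons]; omega⟩
  | cons_cons a _ ih =>
    intro v hv
    cases hv with
    | cons _ hv =>
      obtain ⟨w, h1, h2, h3⟩ := ih hv
      exact ⟨w, h1.cons a, h2, by simp only [List.length_cons]; omega⟩
    | cons_cons _ hv =>
      obtain ⟨w, h1, h2, h3⟩ := ih hv
      exact ⟨a :: w, h1.cons_cons a, h2.cons_cons a, by simp only [List.length_cons]; omega⟩

/-- Two words with common subsequence `w` have a common supersequence of length at most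
`|u| + |v| - |w|`. -/
theorem exists_common_superlist {α : Type*} {w u : List α} (hu : w.Sublist u) :
    ∀ {v : List α}, w.Sublist v →
      ∃ z : List α, u.Sublist z ∧ v.Sublist z ∧ z.length + w.length ≤ u.length + v.length := by
  induction hu with
  | slnil =>
    intro v _
    exact ⟨v, by simp, List.Sublist.refl v, by simp⟩
  | cons a _ ih =>
    intro v hv
    obtain ⟨z, h1, h2, h3⟩ := ih hv
    exact ⟨a :: z, h1.cons_cons a, h2.cons a, by simp only [List.length_cons]; omega⟩
  | cons_cons a _ ih =>
    intro v hv
    -- Letters of `v` before the matched occurrence of `a` are put in front of the merged word.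
    induction v with
    | nil => simp at hv
    | cons b v ihv =>
      cases hv with
      | cons _ hv =>
        obtain ⟨z, h1, h2, h3⟩ := ihv hv
        exact ⟨b :: z, h1.cons b, h2.cons_cons b, by simp only [List.length_cons] at *; omega⟩
      | cons_cons _ hv =>
        obtain ⟨z, h1, h2, h3⟩ := ih hv
        exact ⟨a :: z, h1.cons_cons a, h2.cons_cons a, by simp only [List.length_cons]; omega⟩

/-- Levenshtein's lemma: equivalence of decodability under deletions, insertions,
and combined insertions/deletions, in terms of common subsequences. -/
theorem levenshtein_equivalences (n t : ℕ) (hnt : t < n)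
    (C : Finset (Fin n → Bool)) (hC : 2 ≤ C.card) :
    List.TFAE [
      -- (1) every common subsequence of two distinct codewords has length ≤ n − t − 1
      (∀ x ∈ C, ∀ y ∈ C, x ≠ y → ∀ z : List Bool,
        z.Sublist (List.ofFn x) → z.Sublist (List.ofFn y) → z.length ≤ n - t - 1),
      -- (2) decodable under up to t deletions
      (∀ x ∈ C, ∀ y ∈ C, x ≠ y → ¬ ∃ z : List Bool,
        z.Sublist (List.ofFn x) ∧ z.Sublist (List.ofFn y) ∧ n - t ≤ z.length),
      -- (3) decodable under up to t insertions
      (∀ x ∈ C, ∀ y ∈ C, x ≠ y → ¬ ∃ z : List Bool,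
        (List.ofFn x).Sublist z ∧ (List.ofFn y).Sublist z ∧ z.length ≤ n + t),
      -- (4) decodable under up to t combined insertions and deletions
      (∀ x ∈ C, ∀ y ∈ C, x ≠ y → ¬ ∃ z : List Bool,
        (∃ w : List Bool, w.Sublist (List.ofFn x) ∧ w.Sublist z ∧
          (n - w.length) + (z.length - w.length) ≤ t) ∧
        (∃ w : List Bool, w.Sublist (List.ofFn y) ∧ w.Sublist z ∧
          (n - w.length) + (z.length - w.length) ≤ t))
    ] := by
  tfae_have 1 ↔ 2 := by
    constructor
    · rintro h x hx y hy hxy ⟨z, h1, h2, h3⟩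
      have := h x hx y hy hxy z h1 h2
      omega
    · intro h x hx y hy hxy z h1 h2
      by_contra hlt
      exact h x hx y hy hxy ⟨z, h1, h2, by omega⟩
  tfae_have 2 → 3 := by
    rintro h x hx y hy hxy ⟨z, h1, h2, h3⟩
    obtain ⟨w, hw1, hw2, hw3⟩ := exists_common_sublist h1 h2
    simp only [List.length_ofFn] at hw3
    exact h x hx y hy hxy ⟨w, hw1, hw2, by omega⟩
  tfae_have 3 → 2 := by
    rintro h x hx y hy hxy ⟨w, h1, h2, h3⟩
    obtain ⟨z, hz1, hz2, hz3⟩ := exists_common_superlist h1 h2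
    simp only [List.length_ofFn] at hz3
    exact h x hx y hy hxy ⟨z, hz1, hz2, by omega⟩
  tfae_have 2 → 4 := by
    rintro h x hx y hy hxy ⟨z, ⟨u, hux, huz, hu⟩, ⟨v, hvy, hvz, hv⟩⟩
    obtain ⟨w, hw1, hw2, hw3⟩ := exists_common_sublist huz hvz
    -- These bounds ensure that no subtraction in `hu` and `hv` is truncated.
    have h1 := hux.length_le
    have h2 := hvy.length_le
    have h3 := huz.length_le
    have h4 := hvz.length_le
    simp only [List.length_ofFn] at h1 h2
    exact h x hx y hy hxy ⟨w, hw1.trans hux, hw2.trans hvy, by omega⟩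
  tfae_have 4 → 2 := by
    rintro h x hx y hy hxy ⟨z, h1, h2, h3⟩
    -- The common subsequence itself is reached from both words by deletions alone.
    exact h x hx y hy hxy
      ⟨z, ⟨z, h1, List.Sublist.refl z, by omega⟩, ⟨z, h2, List.Sublist.refl z, by omega⟩⟩
  tfae_finish
end

section
/- For every p ∈ (0,1) there exists R > 0 such that for every ε > 0 there are infinitely many positive integers n for which the following holds: there exist a nonempty finite set Ω, a randomized encoder Enc : {0,1}^⌊Rn⌋ × Ω → {0,1}^n, and a deterministic decoder Dec : {0,1}^(n−⌊pn⌋) → {0,1}^⌊Rn⌋ ∪ {⊥}, such that for every deletion pattern τ ∈ D(n, ⌊pn⌋) and every message m ∈ {0,1}^⌊Rn⌋, the number of ω ∈ Ω with Dec(τ(Enc(m,ω))) ≠ m is at most ε·|Ω|. -/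
/-!
The code words are built from `N` blocks of constant length `L = M ^ K`. A block carries a letter
`i < K`, written as the square wave with run length `M ^ i` (`tick`, `wordOf`). Set `δ = (1 - p) / 2`,
so that a pattern of `⌊p n⌋` deletions, `n = N L`, retains at least `2 δ n` positions, and hence at
least `δ N` blocks keep a fraction `δ` of their positions; call these blocks dense.

The heart of the proof is `Par.count_embeds`: for any set `U` of `2 δ n` retained positions and any
admissible sequence `y`, only a fraction `exp (-N / 2 ^ T)` of the sequences `x ∈ [K] ^ N` are such
that the word of `x` restricted to `U` is a subsequence of the word of `y`.

* A set of density `δ` in a block meets both halves of many cells of length `2 M ^ i`, for all but a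
  bounded number of scales `i` (`badScales_card`). For such `i`, the retained wave of scale `i` still
  oscillates often, so it cannot be embedded in a stretch of slower waves (`bothCells_le`). Hence the
  greedy embedding, given a letter `i` below a threshold `thr t = B * 2 ^ (T - t)`, jumps over `2 ^ t`
  blocks of `y` if those have no letters below that threshold (`Par.nxt_far`).
* A uniform letter falls in the class of `t` with probability about `1 / (C * 2 ^ t)`, and the jump
  is `2 ^ t` blocks. Each `t` therefore contributes about `1 / C` blocks to the expected jump, and a
  number `T` of classes much larger than `C / δ` makes the expected jump larger than the number
  `1 / δ` of blocks available per dense block. The exponential form of this is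
  `Par.good_step`.
* Admissible sequences `y`, at least half of all sequences (`Par.adm_card`), have few blocks at which
  more than half of the window sizes fail (`Par.bad_count`). The steps wasted there are charged to
  `Par.cap`. The resulting potential `Par.pot` is a supermartingale along the greedy run
  (`Par.pot_step`, `Par.sum_trace`), and Markov's inequality gives the bound.

The code takes for each message `k` independent random admissible sequences, with `k` a constant
depending on `ε`. For a given pattern and message, given the words of the other messages, each of the
`k` words is confusable with probability exponentially small in `N`, so more than `ε k` of them are
with probability at most `exp (-c ε k N)`. For large `k` this beats the union bound over at most `2 ^ n`
patterns and `2 ^ (R n)` messages, as `n = N L` (`exists_code`).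
-/

/-- Apply a deletion pattern `τ` (a set of coordinates of `{0,…,n−1}`) to a length-`n`
word `w`, producing the subsequence of bits at positions not in `τ`. -/
def applyDel {n : ℕ} {α : Type*} (τ : Finset (Fin n)) (w : Fin n → α) : List α :=
  ((List.finRange n).filter (fun i => i ∉ τ)).map w

/-! ### Square waves and occupied cells -/

/-- Indices `c` of the aligned cells `[2cr, 2(c+1)r)` of length `2r` both of whose halves meet `S`. -/
def bothCells (S : Finset ℕ) (r : ℕ) : Finset ℕ :=
  (S.image (· / (2 * r))).filter (fun c => 2 * c ∈ S.image (· / r) ∧ 2 * c + 1 ∈ S.image (· / r))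

/-- The number of aligned cells of length `r` that meet `S`. -/
def occ (S : Finset ℕ) (r : ℕ) : ℕ := (S.image (· / r)).card

/-- A cell of length `2r` meeting `S` contributes one occupied half, or two if it is in `bothCells`. -/
lemma occ_eq (S : Finset ℕ) (r : ℕ) : occ S r = occ S (2 * r) + (bothCells S r).card := by
  classical
  have hcard : occ S r = ∑ c ∈ S.image (· / (2 * r)),
      ((S.image (· / r)).filter (fun h => h / 2 = c)).card := by
    unfold occ
    apply Finset.card_eq_sum_card_fiberwise
    intro h hh
    simp only [Finset.coe_image, Set.mem_image, Finset.mem_coe] at hh ⊢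
    obtain ⟨x, hx, rfl⟩ := hh
    exact ⟨x, hx, by rw [Nat.div_div_eq_div_mul, mul_comm]⟩
  rw [hcard, bothCells, occ, Finset.card_filter, Finset.card_eq_sum_ones, ← Finset.sum_add_distrib]
  apply Finset.sum_congr rfl
  intro c hc
  have hsub : (S.image (· / r)).filter (fun h => h / 2 = c)
      = ({2 * c, 2 * c + 1} : Finset ℕ).filter (fun h => h ∈ S.image (· / r)) := by
    ext h
    simp only [Finset.mem_filter, Finset.mem_insert, Finset.mem_singleton]
    constructor
    · rintro ⟨h1, h2⟩; exact ⟨by omega, h1⟩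
    · rintro ⟨h1, h2⟩; exact ⟨h2, by omega⟩
  have hne : 2 * c ∈ S.image (· / r) ∨ 2 * c + 1 ∈ S.image (· / r) := by
    obtain ⟨x, hx, rfl⟩ := Finset.mem_image.1 hc
    have : x / (2 * r) = x / r / 2 := by rw [Nat.div_div_eq_div_mul, mul_comm]
    have hm : x / r ∈ S.image (· / r) := Finset.mem_image_of_mem _ hx
    simp only [this]
    rcases Nat.mod_two_eq_zero_or_one (x / r) with h | h
    · left; convert hm using 1; omega
    · right; convert hm using 1; omega
  rw [hsub, Finset.filter_insert, Finset.filter_singleton]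
  by_cases h1 : 2 * c ∈ S.image (· / r) <;> by_cases h2 : 2 * c + 1 ∈ S.image (· / r)
  · rw [if_pos h1, if_pos h2, if_pos ⟨h1, h2⟩, Finset.card_pair (by omega)]
  · rw [if_pos h1, if_neg h2, if_neg (by tauto)]; simp
  · rw [if_neg h1, if_pos h2, if_neg (by tauto)]; simp
  · tauto

lemma card_fiber_div_le (S : Finset ℕ) {s : ℕ} (hs : 0 < s) (c : ℕ) :
    (S.filter (fun h => h / s = c)).card ≤ s := by
  calc _ ≤ (Finset.Ico (c * s) (c * s + s)).card := by
        apply Finset.card_le_card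
        intro h hh
        have := (Finset.mem_filter.1 hh).2
        rw [Finset.mem_Ico]
        subst this
        have h1 := Nat.div_add_mod h s
        have h2 := Nat.mod_lt h hs
        constructor
        · exact Nat.div_mul_le_self h s
        · nlinarith
    _ = s := by simp

lemma occ_le_mul (S : Finset ℕ) (r s : ℕ) (hs : 0 < s) : occ S r ≤ s * occ S (r * s) := by
  classical
  unfold occ
  apply Finset.card_le_mul_card_image_of_maps_to (f := fun h => h / s)
  · intro h hh
    obtain ⟨x, hx, rfl⟩ := Finset.mem_image.1 hh
    exact Finset.mem_image.2 ⟨x, hx, by rw [Nat.div_div_eq_div_mul]⟩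
  · intro c _
    exact card_fiber_div_le _ hs c

/-- The scales `i < k` that are bad for `S`: fewer than `(δ/4) M ^ K / M ^ i` cells of length
`2 * M ^ i` have both halves met by `S`. -/
noncomputable def badScales (M K : ℕ) (δ : ℝ) (S : Finset ℕ) (k : ℕ) : Finset ℕ :=
  (Finset.range k).filter
    (fun i => (((bothCells S (M ^ i)).card : ℝ) * (M : ℝ) ^ i < δ / 4 * (M : ℝ) ^ K))

/-- Passing from scale `M ^ k` to `M ^ (k + 1)`, the total length of the occupied cells does not
decrease, and at a bad scale it grows by a factor at least `3 / 2`, because almost every occupied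
cell has exactly one occupied half. -/
lemma badScales_aux (M K : ℕ) (δ : ℝ) (S : Finset ℕ) (hM : 0 < M) (hM2 : 2 ∣ M)
    (hδ : 0 < δ) (hS : δ * (M : ℝ) ^ K ≤ S.card) (k : ℕ) :
    (3 / 2 : ℝ) ^ (badScales M K δ S k).card * (δ * (M : ℝ) ^ K) ≤ occ S (M ^ k) * (M : ℝ) ^ k := by
  induction k with
  | zero => simpa [badScales, occ] using hS
  | succ k ih =>
    have hMr : (0 : ℝ) < (M : ℝ) ^ k := by positivity
    have hL : (0 : ℝ) < (M : ℝ) ^ K := by positivity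
    have hmono : (occ S (2 * M ^ k) : ℝ) * (2 * (M : ℝ) ^ k) ≤ occ S (M ^ (k + 1)) * (M : ℝ) ^ (k + 1) := by
      obtain ⟨s, rfl⟩ := hM2
      have h := occ_le_mul S (2 * (2 * s) ^ k) s (by omega)
      have e : 2 * (2 * s) ^ k * s = (2 * s) ^ (k + 1) := by ring
      rw [e] at h
      have h' : (occ S (2 * (2 * s) ^ k) : ℝ) ≤ s * occ S ((2 * s) ^ (k + 1)) := by exact_mod_cast h
      calc _ ≤ (s * occ S ((2 * s) ^ (k + 1)) : ℝ) * (2 * ((2 * s : ℕ) : ℝ) ^ k) := by gcongr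
        _ = _ := by push_cast; ring
    have heq : (occ S (M ^ k) : ℝ) = occ S (2 * M ^ k) + (bothCells S (M ^ k)).card := by
      exact_mod_cast occ_eq S (M ^ k)
    by_cases hb : ((bothCells S (M ^ k)).card : ℝ) * (M : ℝ) ^ k < δ / 4 * (M : ℝ) ^ K
    · have hc : (badScales M K δ S (k + 1)).card = (badScales M K δ S k).card + 1 := by
        unfold badScales
        rw [Finset.range_add_one, Finset.filter_insert, if_pos hb, Finset.card_insert_of_notMem (by simp)]
      rw [hc, pow_succ]
      have h1 : (1 : ℝ) ≤ (3 / 2 : ℝ) ^ (badScales M K δ S k).card := one_le_pow₀ (by norm_num)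
      have h2 : δ * (M : ℝ) ^ K ≤ (3 / 2 : ℝ) ^ (badScales M K δ S k).card * (δ * (M : ℝ) ^ K) :=
        le_mul_of_one_le_left (by positivity) h1
      rw [heq] at ih
      nlinarith
    · have hc : (badScales M K δ S (k + 1)).card = (badScales M K δ S k).card := by
        unfold badScales
        rw [Finset.range_add_one, Finset.filter_insert, if_neg hb]
      rw [hc]
      have hle : occ S (M ^ k) ≤ 2 * occ S (2 * M ^ k) := by
        simpa [mul_comm] using occ_le_mul S (M ^ k) 2 (by norm_num)
      have hle' : (occ S (M ^ k) : ℝ) ≤ 2 * occ S (2 * M ^ k) := by exact_mod_cast hle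
      nlinarith

/-- A subset of density at least `δ` of one block of length `M ^ K` has at most `b` bad scales: the
occupied length at scale `K` cannot exceed the length of the block. -/
lemma badScales_card (M K b j : ℕ) (δ : ℝ) (S : Finset ℕ) (hM : 0 < M) (hM2 : 2 ∣ M)
    (hδ : 0 < δ) (hS : δ * (M : ℝ) ^ K ≤ S.card) (hSj : ∀ x ∈ S, x / M ^ K = j)
    (hb : 1 < (3 / 2 : ℝ) ^ b * δ) :
    (badScales M K δ S K).card ≤ b := by
  have h := badScales_aux M K δ S hM hM2 hδ hS K
  have hL : (0 : ℝ) < (M : ℝ) ^ K := by positivity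
  have ho : occ S (M ^ K) ≤ 1 := by
    unfold occ
    apply Finset.card_le_one.2
    intro a ha b hb
    obtain ⟨x, hx, rfl⟩ := Finset.mem_image.1 ha
    obtain ⟨y, hy, rfl⟩ := Finset.mem_image.1 hb
    simp [hSj x hx, hSj y hy]
  have ho' : (occ S (M ^ K) : ℝ) ≤ 1 := by exact_mod_cast ho
  by_contra! hlt
  have hp : (3 / 2 : ℝ) ^ b ≤ (3 / 2 : ℝ) ^ (badScales M K δ S K).card :=
    pow_le_pow_right₀ (by norm_num) hlt.le
  have : (3 / 2 : ℝ) ^ (badScales M K δ S K).card * δ ≤ 1 := by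
    by_contra! h3
    nlinarith
  nlinarith

/-- The square wave with runs of length `M ^ i`, as a bit in `{0, 1}`. -/
def tick (M i x : ℕ) : ℕ := x / M ^ i % 2

/-- The binary word of a sequence `y` of letters: the block `v` of length `M ^ K` carries the square
wave of scale `y v`. -/
def wordOf (M K : ℕ) (y : ℕ → ℕ) (x : ℕ) : ℕ := tick M (y (x / M ^ K)) x

/-- The restriction of the word `X` to the positions `U` is a subsequence of `Y` on the
window from `q` (included) to the last argument (excluded). -/
def Embeds (U : Finset ℕ) (X Y : ℕ → ℕ) (q q' : ℕ) : Prop :=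
  ∃ φ : ℕ → ℕ, StrictMonoOn φ U ∧ ∀ x ∈ U, q ≤ φ x ∧ φ x < q' ∧ Y (φ x) = X x

/-- If a wave of scale `i` on `S` embeds in `d + 1` blocks whose waves are all slower, each cell met
by `S` in both halves uses up a run of length at least `M ^ (i + 1)`, so there are few such cells. -/
lemma bothCells_le (M K i u d q q' : ℕ) (S : Finset ℕ) (y : ℕ → ℕ) (hM : 0 < M) (hi : i < K)
    (hy : ∀ v, u ≤ v → v ≤ u + d → i < y v) (hq : u * M ^ K ≤ q)
    (hq' : q' ≤ (u + d + 1) * M ^ K) (hE : Embeds S (tick M i) (wordOf M K y) q q') :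
    (bothCells S (M ^ i)).card ≤ (d + 1) * M ^ (K - i - 1) := by
  classical
  obtain ⟨φ, hφ, hφ'⟩ := hE
  set R := M ^ (i + 1) with hR
  have hRpos : 0 < R := by positivity
  have hLR : M ^ K = R * M ^ (K - i - 1) := by
    rw [hR, ← pow_add]; congr 1; omega
  have hex : ∀ c ∈ bothCells S (M ^ i), ∃ x ∈ S, x / M ^ i = 2 * c := by
    intro c hc
    have := (Finset.mem_filter.1 hc).2.1
    simpa using this
  have hex' : ∀ c ∈ bothCells S (M ^ i), ∃ x ∈ S, x / M ^ i = 2 * c + 1 := by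
    intro c hc
    have := (Finset.mem_filter.1 hc).2.2
    simpa using this
  choose! f hfS hf using hex
  choose! f' hfS' hf' using hex'
  have hlt : ∀ a b, a / M ^ i < b / M ^ i → a < b := by
    intro a b h
    by_contra! h'
    exact absurd (Nat.div_le_div_right (c := M ^ i) h') (by omega)
  -- `Y` is constant on the aligned intervals of length `R` inside the window
  have hconst : ∀ P Q, q ≤ P → P < q' → P / R = Q / R → wordOf M K y P = wordOf M K y Q := by
    intro P Q h1 h2 h3
    have hdiv : ∀ e, R ∣ e → P / e = Q / e := by
      rintro e ⟨s, rfl⟩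
      rw [← Nat.div_div_eq_div_mul, ← Nat.div_div_eq_div_mul, h3]
    have hb : P / M ^ K = Q / M ^ K := hdiv _ ⟨_, hLR⟩
    have hv := hy (P / M ^ K) ((Nat.le_div_iff_mul_le (by positivity)).2 (by omega))
      (by
        have : P / M ^ K < u + d + 1 := (Nat.div_lt_iff_lt_mul (by positivity)).2 (by omega)
        omega)
    unfold wordOf tick
    rw [← hb, hdiv _ (pow_dvd_pow M (by omega))]
  have hmono : ∀ c ∈ bothCells S (M ^ i), ∀ c' ∈ bothCells S (M ^ i), c < c' →
      φ (f c) / R < φ (f c') / R := by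
    intro c hc c' hc' hcc
    have h1 : φ (f c) < φ (f' c) := hφ (hfS c hc) (hfS' c hc) (hlt _ _ (by rw [hf c hc, hf' c hc]; omega))
    have h2 : φ (f' c) < φ (f c') := hφ (hfS' c hc) (hfS c' hc')
      (hlt _ _ (by rw [hf c' hc', hf' c hc]; omega))
    have h3 : φ (f c) / R ≠ φ (f' c) / R := by
      intro h
      obtain ⟨g1, g2, g3⟩ := hφ' _ (hfS c hc)
      obtain ⟨k1, k2, k3⟩ := hφ' _ (hfS' c hc)
      have := hconst _ _ g1 g2 h
      rw [g3, k3] at this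
      unfold tick at this
      rw [hf c hc, hf' c hc] at this
      omega
    have h4 := Nat.div_le_div_right (c := R) h1.le
    have h5 := Nat.div_le_div_right (c := R) h2.le
    omega
  calc (bothCells S (M ^ i)).card
      ≤ (Finset.Ico (u * M ^ (K - i - 1)) ((u + d + 1) * M ^ (K - i - 1))).card := by
        apply Finset.card_le_card_of_injOn (fun c => φ (f c) / R)
        · intro c hc
          obtain ⟨g1, g2, g3⟩ := hφ' _ (hfS c hc)
          simp only [Finset.coe_Ico, Set.mem_Ico]
          constructor
          · rw [Nat.le_div_iff_mul_le hRpos]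
            calc _ = u * M ^ K := by rw [hLR]; ring
              _ ≤ _ := by omega
          · rw [Nat.div_lt_iff_lt_mul hRpos]
            calc φ (f c) < (u + d + 1) * M ^ K := by omega
              _ = _ := by rw [hLR]; ring
        · intro c hc c' hc' h
          by_contra hne
          rcases Nat.lt_or_gt_of_ne hne with h' | h'
          · exact absurd h (hmono c hc c' hc' h').ne
          · exact absurd h (hmono c' hc' c hc h').ne'
    _ = (d + 1) * M ^ (K - i - 1) := by
        rw [Nat.card_Ico, ← Nat.sub_mul]; congr 1; omega

/-! ### The greedy embedding -/

/-- The constants of the construction, in terms of a density `δ`. -/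
structure Par where
  /-- ratio of consecutive run lengths -/
  M : ℕ
  /-- number of dyadic window sizes `2 ^ t`, `t < T`, measured in blocks -/
  T : ℕ
  /-- the alphabet is `C` times larger than the largest threshold `B * 2 ^ T` -/
  C : ℕ
  /-- bound on the number of bad scales of a set of density `δ` in a block -/
  b : ℕ
  /-- unit of the thresholds `thr`; at least twice the number of bad scales -/
  B : ℕ
  /-- density from which a block of retained positions counts as dense -/
  δ : ℝ
  hδ : 0 < δ
  hδ1 : δ ≤ 1
  hM0 : 0 < M
  hM2 : 2 ∣ M
  hMbig : 4 * (2 ^ T + 1) < δ * M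
  hb : 1 < (3 / 2 : ℝ) ^ b * δ
  hB0 : 0 < B
  hB : 2 * b ≤ B
  hC0 : 0 < C
  hC : 32 ≤ C * δ ^ 2
  hT : 64 * C ≤ T * δ

namespace Par
variable (P : Par)

/-- The alphabet size, that is, the number of scales. -/
def K : ℕ := P.B * 2 ^ P.T * P.C

/-- The block length. -/
def L : ℕ := P.M ^ P.K

/-- The threshold for windows of `2 ^ t` blocks: a letter is below it with probability
`1 / (C * 2 ^ t)`. -/
def thr (t : ℕ) : ℕ := P.B * 2 ^ (P.T - t)

lemma L_pos : 0 < P.L := pow_pos P.hM0 _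
lemma K_pos : 0 < P.K := by unfold K; have := P.hB0; have := P.hC0; positivity
lemma T_pos : 0 < P.T := by
  have h1 := P.hT
  have h2 : (0 : ℝ) < P.C := by exact_mod_cast P.hC0
  rcases Nat.eq_zero_or_pos P.T with h | h
  · rw [h] at h1; norm_num at h1; linarith
  · exact h
lemma thr_le_K (t : ℕ) : P.thr t ≤ P.K := by
  unfold thr K
  have := P.hC0
  calc P.B * 2 ^ (P.T - t) ≤ P.B * 2 ^ P.T := by gcongr <;> omega
    _ ≤ _ := Nat.le_mul_of_pos_right _ this

/-- No letter among the blocks `u, …, u + 2 ^ t` of `y` is below the threshold `thr t`. -/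
def Far (y : ℕ → ℕ) (u t : ℕ) : Prop := ∀ v, u ≤ v → v ≤ u + 2 ^ t → P.thr t ≤ y v

open Classical in
/-- The window sizes `t < T` with `Far y u t`. -/
noncomputable def farSet (y : ℕ → ℕ) (u : ℕ) : Finset ℕ := (Finset.range P.T).filter (P.Far y u)

/-- The block `u` of `y` is bad if fast waves follow it soon for more than half of the window
sizes. -/
def BadBlk (y : ℕ → ℕ) (u : ℕ) : Prop := 2 * (P.farSet y u).card < P.T

/-- The positions of `U` in block `j`. -/
def blk (U : Finset ℕ) (j : ℕ) : Finset ℕ := U.filter (fun x => x / P.L = j)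

/-- `U` has density at least `δ` in block `j`. -/
def GoodJ (U : Finset ℕ) (j : ℕ) : Prop := P.δ * P.L ≤ (P.blk U j).card

open Classical in
/-- Greedy step: the least end position of an embedding, starting at position `q` of the word of `y`,
of the wave of scale `i` on the retained part of block `j`. If there is no embedding, the value is
chosen large enough that `le_nxt` and `nxt_far` hold. -/
noncomputable def nxt (U : Finset ℕ) (y : ℕ → ℕ) (j i q : ℕ) : ℕ :=
  if h : ∃ q', q ≤ q' ∧ Embeds (P.blk U j) (tick P.M i) (wordOf P.M P.K y) q q' then Nat.find h
  else q + (P.blk U j).card + 2 ^ P.T * P.L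

variable {P}

lemma nxt_le {U : Finset ℕ} {y : ℕ → ℕ} {j i q e : ℕ} (hqe : q ≤ e)
    (h : Embeds (P.blk U j) (tick P.M i) (wordOf P.M P.K y) q e) : P.nxt U y j i q ≤ e := by
  classical
  unfold nxt
  have hex : ∃ q', q ≤ q' ∧ Embeds (P.blk U j) (tick P.M i) (wordOf P.M P.K y) q q' := ⟨e, hqe, h⟩
  rw [dif_pos hex]
  exact Nat.find_min' hex ⟨hqe, h⟩

lemma le_nxt (U : Finset ℕ) (y : ℕ → ℕ) (j i q : ℕ) :
    q + (P.blk U j).card ≤ P.nxt U y j i q := by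
  classical
  unfold nxt
  split_ifs with h
  · obtain ⟨h0, φ, h1, h2⟩ := Nat.find_spec h
    have : (P.blk U j).card ≤ (Finset.Ico q (Nat.find h)).card := by
      apply Finset.card_le_card_of_injOn φ
      · intro x hx
        obtain ⟨a, b, -⟩ := h2 x hx
        simp only [Finset.coe_Ico, Set.mem_Ico]
        exact ⟨a, b⟩
      · exact h1.injOn
    rw [Nat.card_Ico] at this
    omega
  · omega

/-- A dense block with a letter `i` below `thr t`, at a scale that is not bad, cannot be embedded
within the next `2 ^ t` blocks when these have no letter below `thr t`. -/
lemma nxt_far (U : Finset ℕ) (y : ℕ → ℕ) (j i q t : ℕ) (hi : i < P.K)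
    (hgi : i ∉ badScales P.M P.K P.δ (P.blk U j) P.K) (ht : t < P.T)
    (hfar : P.Far y (q / P.L) t) (hit : i < P.thr t) :
    q + 2 ^ t * P.L ≤ P.nxt U y j i q := by
  classical
  have hpow : 2 ^ t ≤ 2 ^ P.T := Nat.pow_le_pow_right (by norm_num) ht.le
  unfold nxt
  split_ifs with h
  · by_contra! hlt
    obtain ⟨h0, hE⟩ := Nat.find_spec h
    have hL := P.L_pos
    have hq1 : q / P.L * P.L ≤ q := Nat.div_mul_le_self _ _
    have hq2 : q < (q / P.L + 1) * P.L := Nat.lt_mul_of_div_lt (Nat.lt_succ_self _) hL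
    have hc := bothCells_le P.M P.K i (q / P.L) (2 ^ t) q (Nat.find h) (P.blk U j) y P.hM0 hi
      (fun v h1 h2 => lt_of_lt_of_le hit (hfar v h1 h2)) hq1
      (by
        change _ ≤ _ * P.L
        nlinarith) hE
    have hnb : P.δ / 4 * (P.M : ℝ) ^ P.K ≤ ((bothCells (P.blk U j) (P.M ^ i)).card : ℝ) * (P.M : ℝ) ^ i := by
      by_contra! hh
      exact hgi (Finset.mem_filter.2 ⟨Finset.mem_range.2 hi, hh⟩)
    have hc' : ((bothCells (P.blk U j) (P.M ^ i)).card : ℝ) ≤ (2 ^ P.T + 1) * (P.M : ℝ) ^ (P.K - i - 1) := by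
      calc ((bothCells (P.blk U j) (P.M ^ i)).card : ℝ) ≤ ((2 ^ t + 1) * P.M ^ (P.K - i - 1) : ℕ) := by
            exact_mod_cast hc
        _ ≤ ((2 ^ P.T + 1) * P.M ^ (P.K - i - 1) : ℕ) := by
            exact_mod_cast Nat.mul_le_mul_right _ (by omega)
        _ = _ := by push_cast; ring
    have hM : (0 : ℝ) < P.M := by exact_mod_cast P.hM0
    have hK : (P.M : ℝ) ^ P.K = P.M * ((P.M : ℝ) ^ (P.K - i - 1) * (P.M : ℝ) ^ i) := by
      rw [← pow_add, ← pow_succ']; congr 1; omega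
    have hX : (0 : ℝ) < (P.M : ℝ) ^ (P.K - i - 1) * (P.M : ℝ) ^ i := by positivity
    have h3 : ((bothCells (P.blk U j) (P.M ^ i)).card : ℝ) * (P.M : ℝ) ^ i
        ≤ (2 ^ P.T + 1) * ((P.M : ℝ) ^ (P.K - i - 1) * (P.M : ℝ) ^ i) := by
      calc _ ≤ (2 ^ P.T + 1) * (P.M : ℝ) ^ (P.K - i - 1) * (P.M : ℝ) ^ i := by gcongr
        _ = _ := by ring
    rw [hK] at hnb
    have := P.hMbig
    nlinarith
  · have : 2 ^ t * P.L ≤ 2 ^ P.T * P.L := Nat.mul_le_mul_right _ hpow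
    omega

/-- The position reached after `j` greedy steps `nx` with the letters `x`, from position `0`. -/
def trace (nx : ℕ → ℕ → ℕ → ℕ) (x : ℕ → ℕ) : ℕ → ℕ
  | 0 => 0
  | j + 1 => nx j (x j) (trace nx x j)

lemma trace_congr (nx : ℕ → ℕ → ℕ → ℕ) (x x' : ℕ → ℕ) (j : ℕ) (h : ∀ k < j, x k = x' k) :
    trace nx x j = trace nx x' j := by
  induction j with
  | zero => rfl
  | succ j ih => rw [trace, trace, ih (fun k hk => h k (by omega)), h j (by omega)]

/-- Extension of a finite sequence of letters to all of `ℕ` by the letter `K`, slower than all the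
others. -/
def ext {K N : ℕ} (x : Fin N → Fin K) (v : ℕ) : ℕ := if h : v < N then (x ⟨v, h⟩ : ℕ) else K

/-- If `V` is a supermartingale along the greedy run with uniform random letters, its mean after `N`
steps is at most its initial value. -/
lemma sum_trace (K : ℕ) (nx : ℕ → ℕ → ℕ → ℕ) (V : ℕ → ℕ → ℝ)
    (hV : ∀ j q, ∑ i : Fin K, V (j + 1) (nx j i q) ≤ K * V j q) (N : ℕ) :
    ∑ x : Fin N → Fin K, V N (trace nx (ext x) N) ≤ (K : ℝ) ^ N * V 0 0 := by
  induction N with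
  | zero => simp [trace]
  | succ N ih =>
    rw [← (Fin.snocEquiv (fun _ : Fin (N + 1) => Fin K)).sum_comp, Fintype.sum_prod_type_right]
    calc _ = ∑ x : Fin N → Fin K, ∑ i : Fin K, V (N + 1) (nx N i (trace nx (ext x) N)) := by
          apply Finset.sum_congr rfl; intro x _
          apply Finset.sum_congr rfl; intro i _
          rw [trace]
          congr 2
          · simp [ext, Fin.snocEquiv, Fin.snoc]
          · apply trace_congr
            intro k hk
            simp [ext, Fin.snocEquiv, Fin.snoc, hk, Nat.lt_succ_of_lt hk]
      _ ≤ ∑ x : Fin N → Fin K, K * V N (trace nx (ext x) N) := Finset.sum_le_sum fun x _ => hV _ _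
      _ = K * ∑ x : Fin N → Fin K, V N (trace nx (ext x) N) := by rw [Finset.mul_sum]
      _ ≤ K * ((K : ℝ) ^ N * V 0 0) := by gcongr
      _ = _ := by ring

/-- The greedy run ends no later than any embedding of the whole word. -/
lemma trace_le (U : Finset ℕ) (x y : ℕ → ℕ) (n : ℕ)
    (h : Embeds U (wordOf P.M P.K x) (wordOf P.M P.K y) 0 n) (j : ℕ) :
    trace (P.nxt U y) x j ≤ n := by
  obtain ⟨φ, h1, h2⟩ := h
  suffices H : trace (P.nxt U y) x j ≤ n ∧ ∀ p ∈ U, j ≤ p / P.L → trace (P.nxt U y) x j ≤ φ p from H.1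
  induction j with
  | zero => simp [trace]
  | succ j ih =>
    have key : ∀ e, trace (P.nxt U y) x j ≤ e → (∀ p ∈ P.blk U j, φ p < e) →
        trace (P.nxt U y) x (j + 1) ≤ e := by
      intro e he hp
      rw [trace]
      apply nxt_le he
      refine ⟨φ, h1.mono fun p hp => (Finset.mem_filter.1 hp).1, fun p hpb => ?_⟩
      obtain ⟨hpU, hpj⟩ := Finset.mem_filter.1 hpb
      refine ⟨ih.2 p hpU hpj.ge, hp p hpb, ?_⟩
      rw [(h2 p hpU).2.2, wordOf]
      change tick P.M (x (p / P.L)) p = _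
      rw [hpj]
    refine ⟨key n ih.1 fun p hp => (h2 p (Finset.mem_filter.1 hp).1).2.1, fun p hp hjp => ?_⟩
    apply key _ (ih.2 p hp (by omega))
    intro p' hp'
    obtain ⟨hpU, hpj⟩ := Finset.mem_filter.1 hp'
    apply h1 hpU hp
    by_contra! hle
    have := Nat.div_le_div_right (c := P.L) hle
    omega

end Par

/-! ### The potential -/

namespace Par

/-- Rate at which the potential decreases with the position in the word of `y`. -/
noncomputable def lam (P : Par) : ℝ := 1 / (2 ^ P.T * P.L)

/-- Exponential gain of a greedy step on a dense block that starts in a block which is not bad. -/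
noncomputable def mu (P : Par) : ℝ := P.T / (16 * P.C * 2 ^ P.T)

variable {P : Par}

lemma lam_pos : 0 < P.lam := by
  have : (0 : ℝ) < P.L := by exact_mod_cast P.L_pos
  unfold lam; positivity

lemma mu_nonneg : 0 ≤ P.mu := by unfold mu; positivity

/-- The dyadic class of letters between the thresholds `thr (t + 1)` and `thr t` (for `t < T`). -/
def cls (P : Par) (t : ℕ) : Finset ℕ := Finset.Ico (P.B * 2 ^ (P.T - t - 1)) (P.thr t)

lemma cls_disjoint {t t' : ℕ} (h : t < t') (hT : t' < P.T) : Disjoint (P.cls t) (P.cls t') := by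
  rw [Finset.disjoint_left]
  intro i hi hi'
  simp only [cls, thr, Finset.mem_Ico] at hi hi'
  have : P.B * 2 ^ (P.T - t') ≤ P.B * 2 ^ (P.T - t - 1) :=
    Nat.mul_le_mul_left _ (Nat.pow_le_pow_right (by norm_num) (by omega))
  omega

lemma exp_half {x : ℝ} (h0 : 0 ≤ x) (h1 : x ≤ 1) : Real.exp (-x) ≤ 1 - x / 2 := by
  have h2 : Real.exp (-x) * Real.exp x = 1 := by rw [← Real.exp_add]; simp
  have h3 := Real.add_one_le_exp x
  have h4 := Real.exp_pos (-x)
  have h5 : Real.exp (-x) * (x + 1) ≤ 1 :=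
    (mul_le_mul_of_nonneg_left h3 h4.le).trans h2.le
  by_contra! h6
  nlinarith

/-- On a dense block, starting in a block `u` that is not bad, each of the at least `T / 2` values of
`t` with `Far y u t` contributes to the mean of `1 - exp (-lam * jump)` an amount of order
`1 / (C * 2 ^ T)`: a letter in `cls t` at a scale that is not bad has probability about
`1 / (C * 2 ^ t)` and forces a jump of `2 ^ t` blocks. -/
lemma good_step (U : Finset ℕ) (y : ℕ → ℕ) (j q : ℕ) (hj : P.GoodJ U j)
    (hu : ¬ P.BadBlk y (q / P.L)) :
    ∑ i : Fin P.K, Real.exp (-P.lam * ((P.nxt U y j i q : ℝ) - q)) ≤ P.K * Real.exp (-P.mu) := by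
  classical
  have hL : (0 : ℝ) < P.L := by exact_mod_cast P.L_pos
  have hC : (0 : ℝ) < P.C := by exact_mod_cast P.hC0
  have hB : (0 : ℝ) < P.B := by exact_mod_cast P.hB0
  set f : ℕ → ℝ := fun i => Real.exp (-P.lam * ((P.nxt U y j i q : ℝ) - q)) with hf
  set bad := badScales P.M P.K P.δ (P.blk U j) P.K with hbad
  have hbc : bad.card ≤ P.b := by
    apply badScales_card P.M P.K P.b j P.δ _ P.hM0 P.hM2 P.hδ _ _ P.hb
    · have : P.δ * P.L ≤ (P.blk U j).card := hj
      rw [L] at this; push_cast at this; exact this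
    · intro x hx; exact (Finset.mem_filter.1 hx).2
  have hf1 : ∀ i, f i ≤ 1 := by
    intro i
    rw [hf, Real.exp_le_one_iff]
    have h1 : q ≤ P.nxt U y j i q := le_trans (by omega) (le_nxt U y j i q)
    have h2 : (q : ℝ) ≤ P.nxt U y j i q := by exact_mod_cast h1
    have := lam_pos (P := P)
    nlinarith
  have hpow : ∀ t < P.T, (2 : ℝ) ^ t ≤ 2 ^ P.T := fun t ht => pow_le_pow_right₀ (by norm_num) ht.le
  have hfar : ∀ t ∈ P.farSet y (q / P.L), ∀ i ∈ P.cls t \ bad, (2 : ℝ) ^ t / (2 * 2 ^ P.T) ≤ 1 - f i := by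
    intro t ht i hi
    obtain ⟨ht1, ht2⟩ := Finset.mem_filter.1 ht
    rw [Finset.mem_range] at ht1
    obtain ⟨hi1, hi2⟩ := Finset.mem_sdiff.1 hi
    have hi3 := (Finset.mem_Ico.1 hi1).2
    have h := nxt_far U y j i q t (lt_of_lt_of_le hi3 (P.thr_le_K t)) hi2 ht1 ht2 hi3
    have h' : (q : ℝ) + 2 ^ t * P.L ≤ P.nxt U y j i q := by exact_mod_cast h
    have h3 : f i ≤ Real.exp (-((2 : ℝ) ^ t / 2 ^ P.T)) := by
      rw [hf]
      apply Real.exp_le_exp.2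
      have e : (2 : ℝ) ^ t / 2 ^ P.T = P.lam * (2 ^ t * P.L) := by
        unfold lam; field_simp
      rw [e]
      have := lam_pos (P := P)
      nlinarith
    have h4 := exp_half (x := (2 : ℝ) ^ t / 2 ^ P.T) (by positivity)
      (by rw [div_le_one (by positivity)]; exact hpow t ht1)
    have e2 : (2 : ℝ) ^ t / (2 * 2 ^ P.T) = (2 : ℝ) ^ t / 2 ^ P.T / 2 := by field_simp
    rw [e2]; linarith
  have hcls : ∀ t < P.T, (P.B : ℝ) * 2 ^ P.T / (4 * 2 ^ t) ≤ ((P.cls t \ bad).card : ℝ) := by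
    intro t ht
    have h1 : (P.cls t).card - bad.card ≤ (P.cls t \ bad).card := Finset.le_card_sdiff _ _
    have h2 : (P.cls t).card = P.B * 2 ^ (P.T - t - 1) := by
      rw [cls, Nat.card_Ico, thr]
      obtain ⟨s, hs⟩ : ∃ s, P.T - t = s + 1 := ⟨P.T - t - 1, by omega⟩
      rw [hs, Nat.add_sub_cancel, pow_succ, ← mul_assoc]
      omega
    have h3 : P.B ≤ P.B * 2 ^ (P.T - t - 1) := Nat.le_mul_of_pos_right _ (by positivity)
    have h4 := P.hB
    have h5 : P.B * 2 ^ (P.T - t - 1) ≤ 2 * (P.cls t \ bad).card := by omega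
    have h6 : (P.B : ℝ) * 2 ^ (P.T - t - 1) ≤ 2 * ((P.cls t \ bad).card : ℝ) := by exact_mod_cast h5
    have e : (2 : ℝ) ^ P.T = 2 ^ (P.T - t - 1) * 2 ^ t * 2 := by
      rw [← pow_add, ← pow_succ]; congr 1; omega
    rw [e]
    have : (P.B : ℝ) * (2 ^ (P.T - t - 1) * 2 ^ t * 2) / (4 * 2 ^ t) = P.B * 2 ^ (P.T - t - 1) / 2 := by
      field_simp; norm_num
    rw [this]; linarith
  have hsum : (P.T : ℝ) * P.B / 16 ≤ ∑ i ∈ Finset.range P.K, (1 - f i) := by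
    have hfc : (P.T : ℝ) ≤ 2 * (P.farSet y (q / P.L)).card := by
      unfold BadBlk at hu; push Not at hu; exact_mod_cast hu
    calc (P.T : ℝ) * P.B / 16 ≤ ∑ t ∈ P.farSet y (q / P.L), (P.B : ℝ) / 8 := by
          rw [Finset.sum_const, nsmul_eq_mul]; nlinarith
      _ ≤ ∑ t ∈ P.farSet y (q / P.L), ∑ i ∈ P.cls t \ bad, (1 - f i) := by
          apply Finset.sum_le_sum
          intro t ht
          have ht1 : t < P.T := Finset.mem_range.1 (Finset.mem_filter.1 ht).1
          calc (P.B : ℝ) / 8 = (P.B : ℝ) * 2 ^ P.T / (4 * 2 ^ t) * ((2 : ℝ) ^ t / (2 * 2 ^ P.T)) := by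
                field_simp; norm_num
            _ ≤ ((P.cls t \ bad).card : ℝ) * ((2 : ℝ) ^ t / (2 * 2 ^ P.T)) := by
                gcongr; exact hcls t ht1
            _ = ∑ i ∈ P.cls t \ bad, (2 : ℝ) ^ t / (2 * 2 ^ P.T) := by
                rw [Finset.sum_const, nsmul_eq_mul]
            _ ≤ _ := Finset.sum_le_sum (hfar t ht)
      _ = ∑ i ∈ (P.farSet y (q / P.L)).biUnion (fun t => P.cls t \ bad), (1 - f i) := by
          rw [Finset.sum_biUnion]
          intro t ht t' ht' hne
          have ht1 : t < P.T := Finset.mem_range.1 (Finset.mem_filter.1 ht).1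
          have ht1' : t' < P.T := Finset.mem_range.1 (Finset.mem_filter.1 ht').1
          refine Disjoint.mono Finset.sdiff_subset Finset.sdiff_subset ?_
          rcases Nat.lt_or_gt_of_ne hne with h | h
          · exact cls_disjoint h ht1'
          · exact (cls_disjoint h ht1).symm
      _ ≤ _ := by
          apply Finset.sum_le_sum_of_subset_of_nonneg
          · intro i hi
            obtain ⟨t, ht, hi⟩ := Finset.mem_biUnion.1 hi
            have := (Finset.mem_Ico.1 (Finset.mem_sdiff.1 hi).1).2
            exact Finset.mem_range.2 (lt_of_lt_of_le this (P.thr_le_K t))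
          · intro i _ _; linarith [hf1 i]
  rw [Finset.sum_sub_distrib] at hsum
  simp only [Finset.sum_const, Finset.card_range, nsmul_eq_mul, mul_one] at hsum
  rw [Fin.sum_univ_eq_sum_range f P.K]
  have hmu : (P.K : ℝ) * P.mu = P.T * P.B / 16 := by
    unfold K mu; push_cast; field_simp
  have := Real.add_one_le_exp (-P.mu)
  have hK : (0 : ℝ) < P.K := by exact_mod_cast P.K_pos
  nlinarith

open Classical in
/-- A bound for the number of greedy steps on dense blocks that can still start in a bad block of `y`,
from position `q` on: a step staying in the block uses at least `δ * L` of its positions, and a step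
leaving it does so once. -/
noncomputable def cap (P : Par) (y : ℕ → ℕ) (N q : ℕ) : ℝ :=
  ((Finset.Ico q (N * P.L)).filter (fun p => P.BadBlk y (p / P.L))).card / (P.δ * P.L)
    + ((Finset.range N).filter (fun v => P.BadBlk y v ∧ q < (v + 1) * P.L)).card

lemma cap_nonneg (y : ℕ → ℕ) (N q : ℕ) : 0 ≤ P.cap y N q := by
  have := P.hδ
  unfold cap; positivity

lemma cap_anti (y : ℕ → ℕ) (N : ℕ) {q q' : ℕ} (h : q ≤ q') : P.cap y N q' ≤ P.cap y N q := by
  classical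
  have := P.hδ
  unfold cap
  gcongr 2
  · gcongr
  · apply Finset.card_le_card
    intro v hv
    simp only [Finset.mem_filter] at hv ⊢
    exact ⟨hv.1, hv.2.1, by omega⟩

lemma cap_drop (y : ℕ → ℕ) (N : ℕ) {q q' : ℕ} (hu : P.BadBlk y (q / P.L)) (hN : q / P.L < N)
    (h : (q : ℝ) + P.δ * P.L ≤ q') : P.cap y N q' + 1 ≤ P.cap y N q := by
  classical
  have hδ := P.hδ
  have hL := P.L_pos
  have hL' : (0 : ℝ) < P.L := by exact_mod_cast hL
  have hδL : 0 < P.δ * P.L := by positivity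
  have hqq : q ≤ q' := by
    have : (q : ℝ) ≤ q' := by linarith
    exact_mod_cast this
  have hq1 : q / P.L * P.L ≤ q := Nat.div_mul_le_self _ _
  have hq2 : q < (q / P.L + 1) * P.L := Nat.lt_mul_of_div_lt (Nat.lt_succ_self _) hL
  set u := q / P.L with hu'
  unfold cap
  have hA : ((Finset.Ico q' (N * P.L)).filter (fun p => P.BadBlk y (p / P.L))) ⊆
      ((Finset.Ico q (N * P.L)).filter (fun p => P.BadBlk y (p / P.L))) :=
    Finset.filter_subset_filter _ (Finset.Ico_subset_Ico_left hqq)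
  have hBsub : ((Finset.range N).filter (fun v => P.BadBlk y v ∧ q' < (v + 1) * P.L)) ⊆
      ((Finset.range N).filter (fun v => P.BadBlk y v ∧ q < (v + 1) * P.L)) := by
    intro v hv
    simp only [Finset.mem_filter] at hv ⊢
    exact ⟨hv.1, hv.2.1, by omega⟩
  rcases lt_or_ge q' ((u + 1) * P.L) with hlt | hge
  · have h1 : ((Finset.Ico q' (N * P.L)).filter (fun p => P.BadBlk y (p / P.L))).card + (q' - q) ≤
        ((Finset.Ico q (N * P.L)).filter (fun p => P.BadBlk y (p / P.L))).card := by
      rw [← Nat.card_Ico, ← Finset.card_union_of_disjoint]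
      · apply Finset.card_le_card
        apply Finset.union_subset hA
        intro p hp
        rw [Finset.mem_Ico] at hp
        have hpu : p / P.L = u := by
          apply Nat.div_eq_of_lt_le <;> omega
        have : (u + 1) * P.L ≤ N * P.L := Nat.mul_le_mul_right _ hN
        rw [Finset.mem_filter, Finset.mem_Ico, hpu]
        exact ⟨⟨hp.1, by omega⟩, hu⟩
      · rw [Finset.disjoint_left]
        intro p hp hp'
        rw [Finset.mem_filter, Finset.mem_Ico] at hp
        rw [Finset.mem_Ico] at hp'
        omega
    have h1' : (((Finset.Ico q' (N * P.L)).filter (fun p => P.BadBlk y (p / P.L))).card : ℝ) + P.δ * P.L ≤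
        ((Finset.Ico q (N * P.L)).filter (fun p => P.BadBlk y (p / P.L))).card := by
      have : (((Finset.Ico q' (N * P.L)).filter (fun p => P.BadBlk y (p / P.L))).card : ℝ) + ((q' : ℝ) - q) ≤
        ((Finset.Ico q (N * P.L)).filter (fun p => P.BadBlk y (p / P.L))).card := by
        rw [← Nat.cast_sub hqq]; exact_mod_cast h1
      linarith
    have h2 := div_le_div_of_nonneg_right h1' hδL.le
    rw [add_div, div_self hδL.ne'] at h2
    have h3 : (((Finset.range N).filter (fun v => P.BadBlk y v ∧ q' < (v + 1) * P.L)).card : ℝ) ≤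
      ((Finset.range N).filter (fun v => P.BadBlk y v ∧ q < (v + 1) * P.L)).card := by
      exact_mod_cast Finset.card_le_card hBsub
    linarith
  · have h1 : ((Finset.range N).filter (fun v => P.BadBlk y v ∧ q' < (v + 1) * P.L)).card <
      ((Finset.range N).filter (fun v => P.BadBlk y v ∧ q < (v + 1) * P.L)).card := by
      apply Finset.card_lt_card
      refine (Finset.ssubset_iff_of_subset hBsub).2 ⟨u, ?_, ?_⟩
      · simp only [Finset.mem_filter, Finset.mem_range]; exact ⟨hN, hu, hq2⟩
      · simp only [Finset.mem_filter, Finset.mem_range]; omega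
    have h1' : (((Finset.range N).filter (fun v => P.BadBlk y v ∧ q' < (v + 1) * P.L)).card : ℝ) + 1 ≤
      ((Finset.range N).filter (fun v => P.BadBlk y v ∧ q < (v + 1) * P.L)).card := by exact_mod_cast h1
    have h2 : (((Finset.Ico q' (N * P.L)).filter (fun p => P.BadBlk y (p / P.L))).card : ℝ) / (P.δ * P.L) ≤
       ((Finset.Ico q (N * P.L)).filter (fun p => P.BadBlk y (p / P.L))).card / (P.δ * P.L) := by
      gcongr
    linarith

lemma bad_lt {y : ℕ → ℕ} {N u : ℕ} (hy : ∀ v, N ≤ v → y v = P.K) (hu : P.BadBlk y u) : u < N := by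
  classical
  by_contra! h
  have : P.farSet y u = Finset.range P.T := by
    unfold farSet
    apply Finset.filter_true_of_mem
    intro t _ v hv _
    rw [hy v (by omega)]
    exact P.thr_le_K t
  unfold BadBlk at hu
  rw [this, Finset.card_range] at hu
  omega

open Classical in
/-- The number of dense blocks among the first `j`. -/
noncomputable def goodCount (P : Par) (U : Finset ℕ) (j : ℕ) : ℕ := ((Finset.range j).filter (P.GoodJ U)).card

/-- The potential, a supermartingale along the greedy run by `pot_step`. -/
noncomputable def pot (P : Par) (U : Finset ℕ) (y : ℕ → ℕ) (N j q : ℕ) : ℝ :=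
  Real.exp (-P.lam * q + P.mu * (P.goodCount U j + P.cap y N q))

lemma pot_step (U : Finset ℕ) (y : ℕ → ℕ) (N : ℕ) (hy : ∀ v, N ≤ v → y v = P.K) (j q : ℕ) :
    ∑ i : Fin P.K, P.pot U y N (j + 1) (P.nxt U y j i q) ≤ P.K * P.pot U y N j q := by
  classical
  have hmono : ∀ i, q ≤ P.nxt U y j i q := fun i => le_trans (by omega) (le_nxt U y j i q)
  have hmono' : ∀ i, (q : ℝ) ≤ P.nxt U y j i q := fun i => by exact_mod_cast hmono i
  have hlam := lam_pos (P := P)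
  have hmu := mu_nonneg (P := P)
  have hconst : (P.K : ℝ) * P.pot U y N j q = ∑ i : Fin P.K, P.pot U y N j q := by simp
  by_cases hj : P.GoodJ U j
  · have hg : (P.goodCount U (j + 1) : ℝ) = P.goodCount U j + 1 := by
      unfold goodCount
      rw [Finset.range_add_one, Finset.filter_insert, if_pos hj, Finset.card_insert_of_notMem (by simp)]
      push_cast; ring
    by_cases hu : P.BadBlk y (q / P.L)
    · rw [hconst]
      apply Finset.sum_le_sum
      intro i _
      unfold pot
      apply Real.exp_le_exp.2
      have h1 := le_nxt (P := P) U y j i q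
      have h1' : (q : ℝ) + (P.blk U j).card ≤ P.nxt U y j i q := by exact_mod_cast h1
      have h2 : P.δ * P.L ≤ (P.blk U j).card := hj
      have h3 := cap_drop y N hu (bad_lt hy hu) (q' := P.nxt U y j i q) (by linarith)
      rw [hg]
      have := hmono' i
      have h4 : (P.goodCount U j : ℝ) + 1 + P.cap y N (P.nxt U y j i q) ≤ P.goodCount U j + P.cap y N q := by linarith
      have h5 := mul_le_mul_of_nonneg_left h4 hmu
      have h6 := mul_le_mul_of_nonneg_left this hlam.le
      linarith
    · have hs := good_step U y j q hj hu
      calc _ ≤ ∑ i : Fin P.K, Real.exp (-P.lam * ((P.nxt U y j i q : ℝ) - q)) * (Real.exp P.mu * P.pot U y N j q) := by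
            apply Finset.sum_le_sum
            intro i _
            unfold pot
            rw [← Real.exp_add, ← Real.exp_add]
            apply Real.exp_le_exp.2
            rw [hg]
            have h5 := mul_le_mul_of_nonneg_left (cap_anti (P := P) y N (hmono i)) hmu
            linarith
        _ ≤ (P.K * Real.exp (-P.mu)) * (Real.exp P.mu * P.pot U y N j q) := by
            rw [← Finset.sum_mul]
            have : 0 ≤ P.pot U y N j q := (Real.exp_pos _).le
            gcongr
        _ = _ := by
            have : Real.exp (-P.mu) * Real.exp P.mu = 1 := by rw [← Real.exp_add]; simp
            calc _ = P.K * (Real.exp (-P.mu) * Real.exp P.mu) * P.pot U y N j q := by ring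
              _ = _ := by rw [this]; ring
  · have hg : (P.goodCount U (j + 1) : ℝ) = P.goodCount U j := by
      unfold goodCount
      rw [Finset.range_add_one, Finset.filter_insert, if_neg hj]
    rw [hconst]
    apply Finset.sum_le_sum
    intro i _
    unfold pot
    apply Real.exp_le_exp.2
    rw [hg]
    have h5 := mul_le_mul_of_nonneg_left (cap_anti (P := P) y N (hmono i)) hmu
    have h6 := mul_le_mul_of_nonneg_left (hmono' i) hlam.le
    linarith

end Par

/-! ### Admissible sequences and the counting bound -/

namespace Par

/-- The weight of a letter: up to a factor `2`, the number of pairs of a block `u` and a window size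
`t` for which this letter can destroy `Far y u t`. -/
def wt (P : Par) (i : ℕ) : ℕ := ∑ t ∈ Finset.range P.T, if i < P.thr t then 2 ^ t else 0

/-- Admissible sequences: the mean weight of a letter is at most `2 * T / C`, twice its
expectation. -/
def adm (P : Par) (N : ℕ) : Finset (Fin N → Fin P.K) :=
  Finset.univ.filter (fun x => P.C * ∑ v, P.wt (x v) ≤ 2 * P.T * N)

variable {P : Par}

lemma sum_sum_eval (K : ℕ) (f : Fin K → ℕ) (N : ℕ) :
    K * ∑ x : Fin N → Fin K, ∑ v, f (x v) = N * K ^ N * ∑ i, f i := by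
  induction N with
  | zero => simp
  | succ N ih =>
    rw [← (Fin.consEquiv (fun _ : Fin (N + 1) => Fin K)).sum_comp, Fintype.sum_prod_type]
    simp only [Fin.consEquiv, Equiv.coe_fn_mk, Fin.sum_univ_succ, Fin.cons_zero, Fin.cons_succ,
      Finset.sum_add_distrib, Finset.sum_const, Finset.card_univ, Fintype.card_pi, Fintype.card_fin,
      Finset.prod_const, smul_eq_mul, ← Finset.mul_sum]
    rw [mul_add, ih]
    ring

lemma sum_wt : P.C * ∑ i : Fin P.K, P.wt i = P.T * P.K := by
  rw [Fin.sum_univ_eq_sum_range P.wt P.K]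
  unfold wt
  rw [Finset.sum_comm]
  have : ∀ t ∈ Finset.range P.T, ∑ i ∈ Finset.range P.K, (if i < P.thr t then 2 ^ t else 0) = P.B * 2 ^ P.T := by
    intro t ht
    rw [← Finset.sum_filter]
    have e : (Finset.range P.K).filter (fun i => i < P.thr t) = Finset.range (P.thr t) := by
      ext i
      have := P.thr_le_K t
      simp only [Finset.mem_filter, Finset.mem_range]; omega
    rw [e, Finset.sum_const, Finset.card_range, smul_eq_mul, thr, mul_assoc, ← pow_add,
      Nat.sub_add_cancel (Finset.mem_range.1 ht).le]
  rw [Finset.sum_congr rfl this, Finset.sum_const, Finset.card_range, smul_eq_mul, K]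
  ring

/-- By Markov's inequality at least half of all sequences are admissible. -/
lemma adm_card {N : ℕ} (hN : 0 < N) : P.K ^ N ≤ 2 * (P.adm N).card := by
  classical
  have hK := P.K_pos
  have hT := P.T_pos
  have h1 : P.C * ∑ x : Fin N → Fin P.K, ∑ v, P.wt (x v) = N * P.T * P.K ^ N := by
    have h := sum_sum_eval P.K (fun i => P.wt i) N
    apply Nat.eq_of_mul_eq_mul_left hK
    calc _ = P.C * (P.K * ∑ x : Fin N → Fin P.K, ∑ v, P.wt (x v)) := by ring
      _ = N * P.K ^ N * (P.C * ∑ i : Fin P.K, P.wt i) := by rw [h]; ring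
      _ = _ := by rw [sum_wt]; ring
  have h2 : (P.adm N)ᶜ.card * (2 * P.T * N) ≤ N * P.T * P.K ^ N := by
    rw [← h1, Finset.mul_sum]
    calc _ = ∑ x ∈ (P.adm N)ᶜ, (2 * P.T * N) := by rw [Finset.sum_const, smul_eq_mul]
      _ ≤ ∑ x ∈ (P.adm N)ᶜ, P.C * ∑ v, P.wt (x v) := by
          apply Finset.sum_le_sum
          intro x hx
          simp only [adm, Finset.mem_compl, Finset.mem_filter, Finset.mem_univ, true_and, not_le] at hx
          exact hx.le
      _ ≤ _ := Finset.sum_le_sum_of_subset (Finset.subset_univ _)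
  have h3 : 2 * (P.adm N)ᶜ.card ≤ P.K ^ N := by
    apply Nat.le_of_mul_le_mul_left (c := N * P.T) _ (by positivity)
    linarith
  have h4 : (P.adm N).card + (P.adm N)ᶜ.card = P.K ^ N := by
    rw [Finset.card_add_card_compl]; simp
  omega

open Classical in
/-- An admissible sequence has at most `8 * N / C` bad blocks. -/
lemma bad_count {N : ℕ} (y : Fin N → Fin P.K) (hy : y ∈ P.adm N) :
    P.C * ((Finset.range N).filter (P.BadBlk (ext y))).card ≤ 8 * N := by
  have hT := P.T_pos
  have hW : P.C * ∑ v ∈ Finset.range N, P.wt (ext y v) ≤ 2 * P.T * N := by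
    have h := (Finset.mem_filter.1 hy).2
    rw [← Fin.sum_univ_eq_sum_range (fun v => P.wt (ext y v))]
    simpa [ext] using h
  have hnf : ∀ t, ((Finset.range N).filter (fun u => ¬ P.Far (ext y) u t)).card ≤
      ∑ v ∈ Finset.range N, 2 * (if ext y v < P.thr t then 2 ^ t else 0) := by
    intro t
    calc _ ≤ (((Finset.range N).filter (fun v => ext y v < P.thr t)).biUnion
            (fun v => Finset.Icc (v - 2 ^ t) v)).card := by
          apply Finset.card_le_card
          intro u hu
          simp only [Finset.mem_filter, Finset.mem_range, Far, not_forall, not_le] at hu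
          obtain ⟨hu1, v, hv1, hv2, hv3⟩ := hu
          simp only [Finset.mem_biUnion, Finset.mem_filter, Finset.mem_range, Finset.mem_Icc]
          refine ⟨v, ⟨?_, hv3⟩, by omega, hv1⟩
          by_contra hvN
          rw [ext, dif_neg hvN] at hv3
          have := P.thr_le_K t
          omega
      _ ≤ ∑ v ∈ (Finset.range N).filter (fun v => ext y v < P.thr t), (Finset.Icc (v - 2 ^ t) v).card :=
          Finset.card_biUnion_le
      _ ≤ ∑ v ∈ (Finset.range N).filter (fun v => ext y v < P.thr t), 2 * 2 ^ t := by
          apply Finset.sum_le_sum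
          intro v _
          have : 0 < 2 ^ t := by positivity
          rw [Nat.card_Icc]; omega
      _ = _ := by
          rw [Finset.sum_filter]
          apply Finset.sum_congr rfl
          intro v _
          split_ifs <;> simp
  have h1 : ∑ u ∈ Finset.range N, ((Finset.range P.T).filter (fun t => ¬ P.Far (ext y) u t)).card
      ≤ 2 * ∑ v ∈ Finset.range N, P.wt (ext y v) := by
    calc _ = ∑ t ∈ Finset.range P.T, ((Finset.range N).filter (fun u => ¬ P.Far (ext y) u t)).card := by
          simp only [Finset.card_filter]
          rw [Finset.sum_comm]
      _ ≤ ∑ t ∈ Finset.range P.T, ∑ v ∈ Finset.range N, 2 * (if ext y v < P.thr t then 2 ^ t else 0) :=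
          Finset.sum_le_sum fun t _ => hnf t
      _ = _ := by
          rw [Finset.sum_comm]
          simp only [wt, Finset.mul_sum]
  have h2 : ((Finset.range N).filter (P.BadBlk (ext y))).card * P.T ≤
      2 * ∑ u ∈ Finset.range N, ((Finset.range P.T).filter (fun t => ¬ P.Far (ext y) u t)).card := by
    calc _ = ∑ u ∈ (Finset.range N).filter (P.BadBlk (ext y)), P.T := by
          rw [Finset.sum_const, smul_eq_mul]
      _ ≤ ∑ u ∈ (Finset.range N).filter (P.BadBlk (ext y)),
            2 * ((Finset.range P.T).filter (fun t => ¬ P.Far (ext y) u t)).card := by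
          apply Finset.sum_le_sum
          intro u hu
          have hb := (Finset.mem_filter.1 hu).2
          unfold BadBlk farSet at hb
          have := Finset.card_filter_add_card_filter_not (s := Finset.range P.T) (P.Far (ext y) u)
          rw [Finset.card_range] at this
          omega
      _ ≤ ∑ u ∈ Finset.range N, 2 * ((Finset.range P.T).filter (fun t => ¬ P.Far (ext y) u t)).card :=
          Finset.sum_le_sum_of_subset (Finset.filter_subset _ _)
      _ = _ := by rw [Finset.mul_sum]
  apply Nat.le_of_mul_le_mul_left (c := P.T) _ hT
  have h3 := Nat.mul_le_mul_left P.C (h2.trans (Nat.mul_le_mul_left 2 h1))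
  nlinarith

lemma cap_zero {N : ℕ} (y : Fin N → Fin P.K) (hy : y ∈ P.adm N) :
    P.cap (ext y) N 0 ≤ P.δ * N / 2 := by
  classical
  have hδ := P.hδ
  have hδ1 := P.hδ1
  have hC := P.hC
  have hC0 : (0 : ℝ) < P.C := by exact_mod_cast P.hC0
  have hL : (0 : ℝ) < P.L := by exact_mod_cast P.L_pos
  have hb : (P.C : ℝ) * ((Finset.range N).filter (P.BadBlk (ext y))).card ≤ 8 * N := by
    exact_mod_cast bad_count y hy
  set β := ((Finset.range N).filter (P.BadBlk (ext y))).card with hβ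
  have h1 : ((Finset.Ico 0 (N * P.L)).filter (fun p => P.BadBlk (ext y) (p / P.L))).card ≤ P.L * β := by
    apply Finset.card_le_mul_card_image_of_maps_to (f := fun p => p / P.L)
    · intro p hp
      simp only [Finset.mem_filter, Finset.mem_Ico, Finset.mem_range] at hp ⊢
      exact ⟨(Nat.div_lt_iff_lt_mul P.L_pos).2 hp.1.2, hp.2⟩
    · intro c _
      exact card_fiber_div_le _ P.L_pos c
  have h1' : (((Finset.Ico 0 (N * P.L)).filter (fun p => P.BadBlk (ext y) (p / P.L))).card : ℝ) ≤ P.L * β := by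
    exact_mod_cast h1
  have h2 : (((Finset.range N).filter (fun v => P.BadBlk (ext y) v ∧ 0 < (v + 1) * P.L)).card : ℝ) ≤ β := by
    have : ((Finset.range N).filter (fun v => P.BadBlk (ext y) v ∧ 0 < (v + 1) * P.L)).card ≤ β := by
      apply Finset.card_le_card
      intro v hv
      simp only [Finset.mem_filter] at hv ⊢
      exact ⟨hv.1, hv.2.1⟩
    exact_mod_cast this
  have h3 : P.cap (ext y) N 0 ≤ β / P.δ + β := by
    unfold cap
    refine add_le_add ?_ h2
    calc _ ≤ P.L * β / (P.δ * P.L) := by gcongr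
      _ = _ := by field_simp
  have h4 : (β : ℝ) ≤ β / P.δ := by
    rw [le_div_iff₀ hδ]; exact mul_le_of_le_one_right (by positivity) hδ1
  have h5 : (β : ℝ) / P.δ ≤ P.δ * N / 4 := by
    rw [div_le_iff₀ hδ]
    have hN : (0 : ℝ) ≤ N := by positivity
    have : P.C * (β : ℝ) ≤ P.C * (P.δ * N / 4 * P.δ) := by nlinarith
    exact le_of_mul_le_mul_left this hC0
  linarith

lemma goodCount_ge {N : ℕ} (U : Finset ℕ) (hU : ∀ p ∈ U, p < N * P.L)
    (hc : 2 * P.δ * (N * P.L) ≤ U.card) : P.δ * N ≤ P.goodCount U N := by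
  classical
  have hδ := P.hδ
  have hL : (0 : ℝ) < P.L := by exact_mod_cast P.L_pos
  have h1 : U.card = ∑ j ∈ Finset.range N, (P.blk U j).card := by
    apply Finset.card_eq_sum_card_fiberwise
    intro p hp
    simp only [Finset.coe_range, Set.mem_Iio]
    exact (Nat.div_lt_iff_lt_mul P.L_pos).2 (hU p hp)
  have hblk : ∀ j, (P.blk U j).card ≤ P.L := fun j => card_fiber_div_le _ P.L_pos j
  have h2 : (U.card : ℝ) ≤ ∑ j ∈ Finset.range N, (P.δ * P.L + if P.GoodJ U j then (P.L : ℝ) else 0) := by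
    rw [h1, Nat.cast_sum]
    apply Finset.sum_le_sum
    intro j _
    have hb : ((P.blk U j).card : ℝ) ≤ P.L := by exact_mod_cast hblk j
    split_ifs with h
    · nlinarith
    · unfold GoodJ at h; push Not at h; linarith
  rw [Finset.sum_add_distrib, ← Finset.sum_filter, Finset.sum_const, Finset.sum_const, Finset.card_range,
    nsmul_eq_mul, nsmul_eq_mul] at h2
  change _ ≤ _ + (P.goodCount U N : ℝ) * P.L at h2
  have : P.δ * N * P.L ≤ P.goodCount U N * P.L := by nlinarith
  exact le_of_mul_le_mul_right this hL

open Classical in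
/-- For fixed retained positions `U` of density `2δ` and an admissible `y`, only an exponentially small
fraction of the sequences `x` have a word whose restriction to `U` embeds in the word of `y`. By
`trace_le` the potential is large at the end for each such `x`, while its mean is at most the
initial value. -/
theorem count_embeds {N : ℕ} (U : Finset ℕ) (hU : ∀ p ∈ U, p < N * P.L)
    (hc : 2 * P.δ * (N * P.L) ≤ U.card) (y : Fin N → Fin P.K) (hy : y ∈ P.adm N) :
    ((Finset.univ.filter (fun x : Fin N → Fin P.K =>
      Embeds U (wordOf P.M P.K (ext x)) (wordOf P.M P.K (ext y)) 0 (N * P.L))).card : ℝ)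
      ≤ (P.K : ℝ) ^ N * Real.exp (-(N / 2 ^ P.T)) := by
  have hδ := P.hδ
  have hL : (0 : ℝ) < P.L := by exact_mod_cast P.L_pos
  have hC0 : (0 : ℝ) < P.C := by exact_mod_cast P.hC0
  have hlam := lam_pos (P := P)
  have hmu := mu_nonneg (P := P)
  have hyN : ∀ v, N ≤ v → ext y v = P.K := fun v hv => by rw [ext, dif_neg (by omega)]
  have hs := sum_trace P.K (P.nxt U (ext y)) (P.pot U (ext y) N) (pot_step U (ext y) N hyN) N
  set E := Finset.univ.filter (fun x : Fin N → Fin P.K =>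
      Embeds U (wordOf P.M P.K (ext x)) (wordOf P.M P.K (ext y)) 0 (N * P.L)) with hE
  set w : ℝ := Real.exp (-(N / 2 ^ P.T) + P.mu * (P.δ * N)) with hw
  have h1 : (E.card : ℝ) * w ≤ ∑ x : Fin N → Fin P.K, P.pot U (ext y) N N (trace (P.nxt U (ext y)) (ext x) N) := by
    calc _ = ∑ x ∈ E, w := by rw [Finset.sum_const, nsmul_eq_mul]
      _ ≤ ∑ x ∈ E, P.pot U (ext y) N N (trace (P.nxt U (ext y)) (ext x) N) := by
          apply Finset.sum_le_sum
          intro x hx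
          have ht := trace_le U (ext x) (ext y) (N * P.L) (Finset.mem_filter.1 hx).2 N
          have ht' : (trace (P.nxt U (ext y)) (ext x) N : ℝ) ≤ N * P.L := by exact_mod_cast ht
          rw [hw, pot]
          apply Real.exp_le_exp.2
          have e : (N : ℝ) / 2 ^ P.T = P.lam * (N * P.L) := by unfold lam; field_simp
          rw [e]
          have h2 := goodCount_ge U hU hc
          have h3 := cap_nonneg (P := P) (ext y) N (trace (P.nxt U (ext y)) (ext x) N)
          have h4 := mul_le_mul_of_nonneg_left ht' hlam.le
          have h5 : P.mu * (P.δ * N) ≤ P.mu * (P.goodCount U N + P.cap (ext y) N (trace (P.nxt U (ext y)) (ext x) N)) :=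
            mul_le_mul_of_nonneg_left (by linarith) hmu
          linarith
      _ ≤ _ := by
          apply Finset.sum_le_sum_of_subset_of_nonneg (Finset.subset_univ _)
          intro x _ _
          exact (Real.exp_pos _).le
  have h2 : P.pot U (ext y) N 0 0 ≤ Real.exp (P.mu * (P.δ * N / 2)) := by
    unfold pot
    apply Real.exp_le_exp.2
    have := mul_le_mul_of_nonneg_left (cap_zero y hy) hmu
    simpa [goodCount] using this
  have hmuδ : 4 / 2 ^ P.T ≤ P.mu * P.δ := by
    unfold mu
    rw [div_mul_eq_mul_div, div_le_div_iff₀ (by positivity) (by positivity)]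
    have := P.hT
    have h2T : (0 : ℝ) < 2 ^ P.T := by positivity
    nlinarith
  have h3 : Real.exp (P.mu * (P.δ * N / 2)) ≤ Real.exp (-(N / 2 ^ P.T)) * w := by
    rw [hw, ← Real.exp_add]
    apply Real.exp_le_exp.2
    have : (N : ℝ) * (4 / 2 ^ P.T) ≤ N * (P.mu * P.δ) := by gcongr
    have e : (N : ℝ) * (4 / 2 ^ P.T) = 4 * (N / 2 ^ P.T) := by ring
    rw [e] at this
    linarith
  have hwpos : 0 < w := Real.exp_pos _
  refine le_of_mul_le_mul_right ?_ hwpos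
  calc (E.card : ℝ) * w ≤ (P.K : ℝ) ^ N * P.pot U (ext y) N 0 0 := h1.trans hs
    _ ≤ (P.K : ℝ) ^ N * (Real.exp (-(N / 2 ^ P.T)) * w) := by gcongr; exact h2.trans h3
    _ = _ := by ring

lemma exists_par (δ : ℝ) (h0 : 0 < δ) (h1 : δ ≤ 1) : ∃ P : Par, P.δ = δ := by
  obtain ⟨C, hC⟩ := exists_nat_gt (32 / δ ^ 2)
  obtain ⟨T, hT⟩ := exists_nat_gt (64 * C / δ)
  obtain ⟨m, hm⟩ := exists_nat_gt (4 * (2 ^ T + 1) / δ)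
  obtain ⟨b, hb⟩ := pow_unbounded_of_one_lt (1 / δ) (show (1 : ℝ) < 3 / 2 by norm_num)
  have hC0 : 0 < C := by
    have : (0 : ℝ) < C := lt_trans (by positivity) hC
    exact_mod_cast this
  have hm0 : 0 < m := by
    have : (0 : ℝ) < m := lt_trans (by positivity) hm
    exact_mod_cast this
  rw [div_lt_iff₀ (by positivity)] at hC hT hm hb
  exact ⟨{ M := 2 * m, T := T, C := C, b := b, B := 2 * b + 1, δ := δ, hδ := h0, hδ1 := h1
           hM0 := by omega
           hM2 := ⟨m, rfl⟩
           hMbig := by push_cast; nlinarith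
           hb := hb, hB0 := by omega, hB := by omega, hC0 := hC0, hC := hC.le, hT := hT.le }, rfl⟩

end Par

/-! ### Subsequences and random coding -/

/-- Sublists of binary words, expressed through strictly increasing position maps. -/
lemma embeds_of_sublist {n : ℕ} (τ : Finset (Fin n)) (X Y : ℕ → ℕ) (hX : ∀ p, X p < 2) (hY : ∀ p, Y p < 2)
    (h : (applyDel τ (fun i : Fin n => decide (X i = 1))).Sublist (List.ofFn fun i : Fin n => decide (Y i = 1))) :
    Embeds (τᶜ.image Fin.val) X Y 0 n := by
  classical
  unfold applyDel at h
  rw [List.ofFn_eq_map] at h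
  obtain ⟨l', hl', heq⟩ := List.sublist_map_iff.1 h
  set l := (List.finRange n).filter (fun i => decide (i ∉ τ)) with hl
  have hlen : l.length = l'.length := by simpa using congrArg List.length heq
  have hs : l.Pairwise (· < ·) := (List.pairwise_lt_finRange n).sublist List.filter_sublist
  have hs' : l'.Pairwise (· < ·) := (List.pairwise_lt_finRange n).sublist hl'
  rw [List.pairwise_iff_getElem] at hs hs'
  have hval : ∀ k (h1 : k < l.length) (h2 : k < l'.length), Y (l'[k] : ℕ) = X (l[k] : ℕ) := by
    intro k h1 h2
    have h3 : (l.map fun i : Fin n => decide (X i = 1))[k]'(by simpa using h1)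
        = (l'.map fun i : Fin n => decide (Y i = 1))[k]'(by simpa using h2) := by
      simp only [heq]
    simp only [List.getElem_map, decide_eq_decide] at h3
    have := hX (l[k] : ℕ)
    have := hY (l'[k] : ℕ)
    omega
  have hex : ∀ p ∈ τᶜ.image Fin.val, ∃ k, ∃ hk : k < l.length, (l[k] : ℕ) = p := by
    intro p hp
    obtain ⟨i, hi, rfl⟩ := Finset.mem_image.1 hp
    have : i ∈ l := by
      rw [hl, List.mem_filter]
      exact ⟨List.mem_finRange i, by simpa using hi⟩
    obtain ⟨k, hk, hki⟩ := List.getElem_of_mem this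
    exact ⟨k, hk, by rw [hki]⟩
  choose! k hk hkp using hex
  have hφ : ∀ p, p ∈ τᶜ.image Fin.val → ∃ h : k p < l'.length,
      (if h : k p < l'.length then (l'[k p] : ℕ) else 0) = (l'[k p] : ℕ) := by
    intro p hp
    have : k p < l'.length := hlen ▸ hk p hp
    exact ⟨this, by rw [dif_pos this]⟩
  refine ⟨fun p => if h : k p < l'.length then (l'[k p] : ℕ) else 0, ?_, ?_⟩
  · intro p hp p' hp' hlt
    obtain ⟨h1, e1⟩ := hφ p hp
    obtain ⟨h2, e2⟩ := hφ p' hp'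
    have hkk : k p < k p' := by
      by_contra! hle
      rcases hle.eq_or_lt with he | hl2
      · have a1 := hkp p hp
        have a2 := hkp p' hp'
        simp only [he] at a2
        omega
      · have := hs _ _ (hk p' hp') (hk p hp) hl2
        have a1 := hkp p hp
        have a2 := hkp p' hp'
        rw [Fin.lt_def] at this
        omega
    have := hs' _ _ h1 h2 hkk
    simp only [e1, e2]
    exact this
  · intro p hp
    obtain ⟨h1, e1⟩ := hφ p hp
    refine ⟨Nat.zero_le _, ?_, ?_⟩
    · simp only [e1]; exact Fin.is_lt _
    · simp only [e1]
      rw [hval _ (hk p hp) h1, hkp p hp]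

lemma applyDel_sublist {n : ℕ} (τ : Finset (Fin n)) (w : Fin n → Bool) :
    (applyDel τ w).Sublist (List.ofFn w) := by
  unfold applyDel
  rw [List.ofFn_eq_map]
  exact List.filter_sublist.map w

open Classical in
/-- Exponential moment bound: the number of `k`-tuples having more than `s` entries in a set `Q` of
density at most `exp (-a)`. -/
lemma chernoff_count {W : Type*} [Fintype W] (Q : Finset W) (k : ℕ) (a s : ℝ) (ha : 0 ≤ a)
    (hQ : Real.exp a * Q.card ≤ Fintype.card W) :
    ((Finset.univ.filter (fun v : Fin k → W =>
      s < ((Finset.univ.filter (fun ω => v ω ∈ Q)).card : ℝ))).card : ℝ)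
      ≤ 2 ^ k * Real.exp (-(a * s)) * (Fintype.card W : ℝ) ^ k := by
  set F := Finset.univ.filter (fun v : Fin k → W =>
      s < ((Finset.univ.filter (fun ω => v ω ∈ Q)).card : ℝ)) with hF
  set f : W → ℝ := fun w => if w ∈ Q then Real.exp a else 1 with hf
  have hf0 : ∀ w, 0 ≤ f w := by
    intro w; rw [hf]; dsimp only; split_ifs
    · exact (Real.exp_pos a).le
    · norm_num
  have hprod : ∀ v : Fin k → W,
      ∏ ω, f (v ω) = Real.exp (a * ((Finset.univ.filter (fun ω => v ω ∈ Q)).card : ℝ)) := by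
    intro v
    rw [hf]
    dsimp only
    rw [Finset.prod_ite, Finset.prod_const, Finset.prod_const_one, mul_one, ← Real.exp_nat_mul, mul_comm]
  have hsumf : ∑ w, f w ≤ 2 * Fintype.card W := by
    have : ∀ w, f w ≤ (if w ∈ Q then Real.exp a else 0) + 1 := by
      intro w; rw [hf]; dsimp only; split_ifs <;> linarith
    calc ∑ w, f w ≤ ∑ w, ((if w ∈ Q then Real.exp a else 0) + 1) := Finset.sum_le_sum fun w _ => this w
      _ = Real.exp a * Q.card + Fintype.card W := by
          rw [Finset.sum_add_distrib, ← Finset.sum_filter]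
          simp [mul_comm]
      _ ≤ _ := by linarith
  have h1 : (F.card : ℝ) * Real.exp (a * s) ≤ (2 * Fintype.card W) ^ k := by
    calc _ = ∑ v ∈ F, Real.exp (a * s) := by rw [Finset.sum_const, nsmul_eq_mul]
      _ ≤ ∑ v ∈ F, ∏ ω, f (v ω) := by
          apply Finset.sum_le_sum
          intro v hv
          rw [hprod]
          exact Real.exp_le_exp.2 (mul_le_mul_of_nonneg_left (Finset.mem_filter.1 hv).2.le ha)
      _ ≤ ∑ v : Fin k → W, ∏ ω, f (v ω) :=
          Finset.sum_le_sum_of_subset_of_nonneg (Finset.subset_univ _)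
            fun v _ _ => Finset.prod_nonneg fun ω _ => hf0 _
      _ = (∑ w, f w) ^ k := (Fintype.sum_pow f k).symm
      _ ≤ _ := pow_le_pow_left₀ (Finset.sum_nonneg fun w _ => hf0 w) hsumf k
  have he : Real.exp (-(a * s)) * Real.exp (a * s) = 1 := by rw [← Real.exp_add]; simp
  refine le_of_mul_le_mul_right ?_ (Real.exp_pos (a * s))
  calc _ ≤ (2 * (Fintype.card W : ℝ)) ^ k := h1
    _ = 2 ^ k * (Fintype.card W : ℝ) ^ k * (Real.exp (-(a * s)) * Real.exp (a * s)) := by rw [he]; ring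
    _ = _ := by ring

open Classical in
/-- If for each `c` at most a fraction `β` of the values of coordinate `m` make `c` bad, then at most a
fraction `β` of all functions are bad; exchanging the coordinate with a fresh value is an
involution. -/
lemma resample_count {I V : Type*} [Fintype I] [Fintype V] (m : I) (Bad : Finset (I → V))
    (β : ℝ) (h : ∀ c : I → V, ((Finset.univ.filter (fun v => Function.update c m v ∈ Bad)).card : ℝ)
      ≤ β * Fintype.card V) (hV : 0 < Fintype.card V) :
    (Bad.card : ℝ) ≤ β * Fintype.card (I → V) := by
  let e : (I → V) × V ≃ (I → V) × V :=
    { toFun := fun p => (Function.update p.1 m p.2, p.1 m)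
      invFun := fun p => (Function.update p.1 m p.2, p.1 m)
      left_inv := fun p => by simp
      right_inv := fun p => by simp }
  have h1 : ∑ c : I → V, ∑ v : V, (if Function.update c m v ∈ Bad then (1 : ℝ) else 0)
      = Fintype.card V * Bad.card := by
    rw [← Fintype.sum_prod_type' (f := fun c v => if Function.update c m v ∈ Bad then (1 : ℝ) else 0)]
    calc _ = ∑ p : (I → V) × V, (fun p : (I → V) × V => if p.1 ∈ Bad then (1 : ℝ) else 0) (e p) := rfl
      _ = ∑ p : (I → V) × V, (if p.1 ∈ Bad then (1 : ℝ) else 0) :=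
          e.sum_comp (fun p : (I → V) × V => if p.1 ∈ Bad then (1 : ℝ) else 0)
      _ = _ := by
          rw [Fintype.sum_prod_type_right]
          simp
  have h2 : ∑ c : I → V, ∑ v : V, (if Function.update c m v ∈ Bad then (1 : ℝ) else 0)
      ≤ ∑ c : I → V, β * Fintype.card V := by
    apply Finset.sum_le_sum
    intro c _
    have := h c
    simpa using this
  rw [h1, Finset.sum_const, nsmul_eq_mul, Finset.card_univ] at h2
  have hV' : (0 : ℝ) < Fintype.card V := by exact_mod_cast hV
  refine le_of_mul_le_mul_left ?_ hV'
  linarith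

open Classical in
/-- Random coding: if, for each `τ` and `y`, the fraction of words `x` with `Rel τ x y` is at most `ρ`,
there is a code with `k` words per message such that, for every `τ` and `m`, at most `s` of the
words of `m` are confused with a word of another message. -/
lemma exists_code {I J W : Type*} [Fintype I] [Fintype J] [Fintype W] [Nonempty W]
    (Rel : J → W → W → Prop) (k : ℕ) (a s ρ : ℝ) (ha : 0 ≤ a)
    (hρ : ∀ τ y, ((Finset.univ.filter (fun x => Rel τ x y)).card : ℝ) ≤ ρ * Fintype.card W)
    (h1 : Real.exp a * (Fintype.card I * k * ρ) ≤ 1)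
    (h2 : (Fintype.card J : ℝ) * Fintype.card I * (2 ^ k * Real.exp (-(a * s))) < 1) :
    ∃ c : I → Fin k → W, ∀ τ m,
      ((Finset.univ.filter (fun ω => ∃ m', m' ≠ m ∧ ∃ ω', Rel τ (c m ω) (c m' ω'))).card : ℝ) ≤ s := by
  by_contra! hcon
  let Bad : J × I → Finset (I → Fin k → W) := fun p => Finset.univ.filter (fun c =>
    s < ((Finset.univ.filter (fun ω => ∃ m', m' ≠ p.2 ∧ ∃ ω', Rel p.1 (c p.2 ω) (c m' ω'))).card : ℝ))
  set β := 2 ^ k * Real.exp (-(a * s)) with hβ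
  have hBad : ∀ p, ((Bad p).card : ℝ) ≤ β * Fintype.card (I → Fin k → W) := by
    rintro ⟨τ, m⟩
    apply resample_count m _ β _ Fintype.card_pos
    intro c
    set Q : Finset W := (Finset.univ : Finset (I × Fin k)).biUnion (fun p => if p.1 ≠ m then
      Finset.univ.filter (fun x => Rel τ x (c p.1 p.2)) else ∅) with hQ
    have hρ0 : 0 ≤ ρ * Fintype.card W :=
      le_trans (by positivity) (hρ τ (Classical.arbitrary W))
    have hQc : (Q.card : ℝ) ≤ Fintype.card I * k * (ρ * Fintype.card W) := by
      calc (Q.card : ℝ) ≤ ((∑ p : I × Fin k, (if p.1 ≠ m then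
            Finset.univ.filter (fun x => Rel τ x (c p.1 p.2)) else ∅).card : ℕ) : ℝ) := by
            exact_mod_cast Finset.card_biUnion_le
        _ ≤ ∑ p : I × Fin k, ρ * Fintype.card W := by
            rw [Nat.cast_sum]
            apply Finset.sum_le_sum
            intro p _
            split_ifs
            · exact hρ _ _
            · simpa using hρ0
        _ = _ := by
            rw [Finset.sum_const, nsmul_eq_mul, Finset.card_univ, Fintype.card_prod, Fintype.card_fin]
            push_cast; ring
    have hW : (0 : ℝ) < Fintype.card W := by exact_mod_cast Fintype.card_pos
    have hch := chernoff_count Q k a s ha (by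
      have := Real.exp_pos a
      calc _ ≤ Real.exp a * (Fintype.card I * k * (ρ * Fintype.card W)) := by gcongr
        _ = Real.exp a * (Fintype.card I * k * ρ) * Fintype.card W := by ring
        _ ≤ 1 * Fintype.card W := by gcongr
        _ = _ := one_mul _)
    refine le_trans ?_ (hch.trans_eq ?_)
    · refine Nat.cast_le.2 (Finset.card_le_card fun v hv => ?_)
      simp only [Bad, Finset.mem_filter, Finset.mem_univ, true_and, Function.update_self] at hv ⊢
      refine lt_of_lt_of_le hv (Nat.cast_le.2 (Finset.card_le_card fun ω hω => ?_))
      simp only [Finset.mem_filter, Finset.mem_univ, true_and] at hω ⊢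
      obtain ⟨m', hm', ω', hr⟩ := hω
      rw [Function.update_of_ne hm'] at hr
      rw [hQ, Finset.mem_biUnion]
      refine ⟨(m', ω'), Finset.mem_univ _, ?_⟩
      rw [if_pos hm']
      simpa using hr
    · rw [hβ]; simp
  have hcover : (Finset.univ : Finset (I → Fin k → W)) ⊆ Finset.univ.biUnion Bad := by
    intro c _
    obtain ⟨τ, m, h⟩ := hcon c
    rw [Finset.mem_biUnion]
    refine ⟨(τ, m), Finset.mem_univ _, ?_⟩
    simp only [Bad, Finset.mem_filter, Finset.mem_univ, true_and]
    exact h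
  have hc0 : (0 : ℝ) < Fintype.card (I → Fin k → W) := by exact_mod_cast Fintype.card_pos
  have : (Fintype.card (I → Fin k → W) : ℝ) ≤
      (Fintype.card J : ℝ) * Fintype.card I * β * Fintype.card (I → Fin k → W) := by
    calc (Fintype.card (I → Fin k → W) : ℝ) ≤ ((∑ p, (Bad p).card : ℕ) : ℝ) := by
          rw [← Finset.card_univ]
          exact_mod_cast (Finset.card_le_card hcover).trans Finset.card_biUnion_le
      _ ≤ ∑ p : J × I, β * Fintype.card (I → Fin k → W) := by
          rw [Nat.cast_sum]; exact Finset.sum_le_sum fun p _ => hBad p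
      _ = _ := by
          rw [Finset.sum_const, nsmul_eq_mul, Finset.card_univ, Fintype.card_prod]
          push_cast; ring
  nlinarith

/-- For every `p ∈ (0,1)` there exists a rate `R > 0` such that for every `ε > 0` there
are infinitely many `n` admitting a stochastic code of block length `n` and rate `R`
(with private encoder randomness ranging over a nonempty finite set `Fin k`) that
corrects every oblivious pattern of `⌊pn⌋` deletions except with probability `ε` over
the encoder's randomness, for every message. -/
theorem oblivious_stochastic_codes :
    ∀ p : ℝ, 0 < p → p < 1 → ∃ R : ℝ, 0 < R ∧
      ∀ ε : ℝ, 0 < ε → ∀ n₀ : ℕ, ∃ n ≥ n₀, ∃ k : ℕ, 0 < k ∧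
        ∃ Enc : (Fin ⌊R * (n : ℝ)⌋₊ → Bool) → Fin k → (Fin n → Bool),
        ∃ Dec : List Bool → Option (Fin ⌊R * (n : ℝ)⌋₊ → Bool),
          ∀ τ : Finset (Fin n), τ.card = ⌊p * (n : ℝ)⌋₊ →
            ∀ m : Fin ⌊R * (n : ℝ)⌋₊ → Bool,
              ((Finset.univ.filter
                  (fun ω : Fin k => Dec (applyDel τ (Enc m ω)) ≠ some m)).card : ℝ)
                ≤ ε * k := by
  classical
  intro p hp0 hp1
  obtain ⟨P, hPδ⟩ := Par.exists_par ((1 - p) / 2) (by linarith) (by linarith)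
  have hL : (0 : ℝ) < P.L := by exact_mod_cast P.L_pos
  have hKpos : (0 : ℝ) < P.K := by exact_mod_cast P.K_pos
  set γ : ℝ := 1 / 2 ^ P.T with hγ
  have hγ0 : 0 < γ := by positivity
  refine ⟨γ / (4 * P.L), by positivity, ?_⟩
  intro ε hε n₀
  -- `k` is such that `exp (-(γ N / 2) ε k)` beats the number of deletion patterns times messages
  obtain ⟨k, hk⟩ := exists_nat_gt (2 * (P.L + γ / 4 + 1) / (γ * ε))
  have hk0' : (0 : ℝ) < k := lt_trans (by positivity) hk
  have hk0 : 0 < k := by exact_mod_cast hk0'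
  rw [div_lt_iff₀ (by positivity)] at hk
  obtain ⟨N1, hN1⟩ := exists_nat_gt (8 * k / γ)
  obtain ⟨N, hN⟩ : ∃ N, N = n₀ + k + N1 + 1 := ⟨_, rfl⟩
  have hN0 : 0 < N := by omega
  have hNk : (k : ℝ) ≤ N := by exact_mod_cast (by omega : k ≤ N)
  have hN8 : 8 * k ≤ γ * N := by
    have : (N1 : ℝ) ≤ N := by exact_mod_cast (by omega : N1 ≤ N)
    rw [div_lt_iff₀ hγ0] at hN1
    nlinarith
  have hN0' : (0 : ℝ) < N := by exact_mod_cast hN0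
  set R : ℝ := γ / (4 * P.L) with hR
  have hn0 : n₀ ≤ N * P.L := le_trans (by omega) (Nat.le_mul_of_pos_right N P.L_pos)
  obtain ⟨n, hn⟩ : ∃ n, n = N * P.L := ⟨_, rfl⟩
  have hnr : (n : ℝ) = N * P.L := by rw [hn]; push_cast; ring
  refine ⟨n, by omega, k, hk0, ?_⟩
  set r := ⌊R * (n : ℝ)⌋₊ with hr
  have hRn : R * n = γ * N / 4 := by rw [hnr, hR]; field_simp
  have hrle : (r : ℝ) ≤ γ * N / 4 := by rw [← hRn]; exact Nat.floor_le (by rw [hRn]; positivity)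
  have two_le : ∀ e : ℕ, (2 : ℝ) ^ e ≤ Real.exp e := by
    intro e
    rw [← Real.exp_one_pow]
    exact pow_le_pow_left₀ (by norm_num) (by linarith [Real.add_one_le_exp (1 : ℝ)]) e
  have hI : (Fintype.card (Fin r → Bool) : ℝ) ≤ Real.exp (γ * N / 4) := by
    have : (Fintype.card (Fin r → Bool) : ℝ) = 2 ^ r := by simp
    rw [this]
    exact (two_le r).trans (Real.exp_le_exp.2 hrle)
  let W := {x : Fin N → Fin P.K // x ∈ P.adm N}
  let J := {τ : Finset (Fin n) // τ.card = ⌊p * (n : ℝ)⌋₊}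
  have hadm := Par.adm_card (P := P) hN0
  have hWcard : Fintype.card W = (P.adm N).card := Fintype.card_coe _
  have hWne : Nonempty W := by
    rw [← Fintype.card_pos_iff, hWcard]
    have : 0 < P.K ^ N := pow_pos P.K_pos N
    omega
  have hWr : (P.K : ℝ) ^ N ≤ 2 * Fintype.card W := by rw [hWcard]; exact_mod_cast hadm
  let word : W → ℕ → ℕ := fun x => wordOf P.M P.K (Par.ext x.1)
  have hword : ∀ x q, word x q < 2 := fun x q => Nat.mod_lt _ (by norm_num)
  let Rel : J → W → W → Prop := fun τ x y => Embeds (τ.1ᶜ.image Fin.val) (word x) (word y) 0 n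
  have hJ : (Fintype.card J : ℝ) ≤ Real.exp (N * P.L) := by
    have h1 : Fintype.card J ≤ 2 ^ n := by
      calc Fintype.card J ≤ Fintype.card (Finset (Fin n)) := Fintype.card_subtype_le _
        _ = 2 ^ n := by simp
    rw [← hnr]
    exact le_trans (by exact_mod_cast h1) (two_le n)
  have hρ : ∀ τ y, ((Finset.univ.filter (fun x => Rel τ x y)).card : ℝ)
      ≤ 2 * Real.exp (-(γ * N)) * Fintype.card W := by
    intro τ y
    have hU : ∀ q ∈ τ.1ᶜ.image Fin.val, q < N * P.L := by
      intro q hq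
      obtain ⟨i, -, rfl⟩ := Finset.mem_image.1 hq
      rw [← hn]; exact i.2
    have hUc : 2 * P.δ * (N * P.L) ≤ (τ.1ᶜ.image Fin.val).card := by
      rw [Finset.card_image_of_injective _ Fin.val_injective, Finset.card_compl, Fintype.card_fin,
        Nat.cast_sub (by simpa using Finset.card_le_univ τ.1), τ.2, hPδ, ← hnr]
      have := Nat.floor_le (show 0 ≤ p * (n : ℝ) by positivity)
      linarith
    have h := Par.count_embeds (τ.1ᶜ.image Fin.val) hU hUc y.1 y.2
    rw [← hn] at h
    have hle : (Finset.univ.filter (fun x => Rel τ x y)).card ≤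
      (Finset.univ.filter (fun x : Fin N → Fin P.K =>
        Embeds (τ.1ᶜ.image Fin.val) (wordOf P.M P.K (Par.ext x)) (wordOf P.M P.K (Par.ext y.1)) 0 n)).card := by
      apply Finset.card_le_card_of_injOn (fun x : W => x.1)
      · intro x hx
        simpa [Rel, word] using hx
      · exact Subtype.val_injective.injOn
    calc _ ≤ _ := by exact_mod_cast hle
      _ ≤ (P.K : ℝ) ^ N * Real.exp (-(N / 2 ^ P.T)) := h
      _ ≤ (2 * Fintype.card W) * Real.exp (-(N / 2 ^ P.T)) := by gcongr
      _ = _ := by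
          have : (N : ℝ) / 2 ^ P.T = γ * N := by rw [hγ]; ring
          rw [this]; ring
  obtain ⟨c, hc⟩ := exists_code (I := Fin r → Bool) Rel k (γ * N / 2) (ε * k) (2 * Real.exp (-(γ * N)))
    (by positivity) hρ (by
      calc _ ≤ Real.exp (γ * N / 2) * (Real.exp (γ * N / 4) * k * (2 * Real.exp (-(γ * N)))) := by gcongr
        _ = 2 * k * (Real.exp (γ * N / 2) * Real.exp (γ * N / 4) * Real.exp (-(γ * N))) := by ring
        _ = 2 * k * Real.exp (-(γ * N / 4)) := by
            rw [← Real.exp_add, ← Real.exp_add]; congr 2; ring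
        _ ≤ Real.exp (γ * N / 4) * Real.exp (-(γ * N / 4)) := by
            gcongr
            linarith [Real.add_one_le_exp (γ * N / 4)]
        _ = 1 := by rw [← Real.exp_add]; simp) (by
      calc _ ≤ Real.exp (N * P.L) * Real.exp (γ * N / 4) * (Real.exp k * Real.exp (-(γ * N / 2 * (ε * k)))) := by
            gcongr
            exact two_le k
        _ = Real.exp (N * P.L + γ * N / 4 + (k + -(γ * N / 2 * (ε * k)))) := by
            rw [Real.exp_add, Real.exp_add, Real.exp_add]
        _ < 1 := by
            rw [Real.exp_lt_one_iff]
            nlinarith)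
  let Enc : (Fin r → Bool) → Fin k → (Fin n → Bool) := fun m ω i => decide (word (c m ω) i = 1)
  -- decode to any message one of whose words contains the received word as a subsequence
  let Dec : List Bool → Option (Fin r → Bool) := fun l =>
    if h : ∃ m, ∃ ω, l.Sublist (List.ofFn (Enc m ω)) then some h.choose else none
  refine ⟨Enc, Dec, ?_⟩
  intro τ hτ m
  refine le_trans ?_ (hc ⟨τ, hτ⟩ m)
  have hsub : (Finset.univ.filter (fun ω : Fin k => Dec (applyDel τ (Enc m ω)) ≠ some m)) ⊆
      (Finset.univ.filter (fun ω => ∃ m', m' ≠ m ∧ ∃ ω', Rel ⟨τ, hτ⟩ (c m ω) (c m' ω'))) := by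
    intro ω hω
    simp only [Finset.mem_filter, Finset.mem_univ, true_and] at hω ⊢
    have hex : ∃ m', ∃ ω', (applyDel τ (Enc m ω)).Sublist (List.ofFn (Enc m' ω')) :=
      ⟨m, ω, applyDel_sublist τ _⟩
    have hdec : Dec (applyDel τ (Enc m ω)) = some hex.choose := dif_pos hex
    rw [hdec] at hω
    obtain ⟨ω', h'⟩ := hex.choose_spec
    exact ⟨hex.choose, fun h => hω (by rw [h]), ω',
      embeds_of_sublist τ _ _ (hword _) (hword _) h'⟩
  exact_mod_cast Finset.card_le_card hsub
end

section
/- For every p ∈ (0,1) there exists R > 0 such that for every ε > 0 and every n₀ there exists an integer N ≥ n₀ and a code C ⊆ {0,1}^N with |C| ≥ 2^{RN} such that for every deletion pattern τ ∈ D(N, ⌊pN⌋), the number of codewords x ∈ C for which there exists y ∈ C with y ≠ x and τ(x) a subsequence of y is at most ε·|C|. -/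
/-!
A random code with runs of many different lengths works.

Fix a repetition base `R` and put `L = R ^ Λ`. A word consists of `n` blocks of length `L`. A block
has a level `a < Λ`, chosen with probability proportional to `2 ^ a`, and consists of runs of length
`R ^ a`, the value on each run being an independent fair bit (`BlockSym`, `codeword`). Choose `m`
with `2 / m ≤ 1 - p`, so that after `⌊p N⌋` deletions at least `n / m` of the `n` blocks still keep
a fraction `1 / m` of their symbols.

Fix the deletion pattern and a word `y`, and embed the surviving part of a random word `x` into `y`
greedily, block by block. A long surviving piece of a block of level `a` contains many independent
bits, whereas a window of at most `2 ^ A` blocks of `y` whose levels all exceed `a` has few runs,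
hence few distinct subsequences. So with probability at least `1 / 2` the piece does not fit in
such a window (`card_sublists_chunks`, `exists_small_window`, `card_kept_mem_le`). If for at least
half of the levels `a < A` the next `2 ^ (A - a)` blocks of `y` all have level above `a`, each of
these levels contributes about the same expected advance (its probability is proportional to
`2 ^ a`, the advance is `2 ^ (A - a)`). As `A` is large, together they make the greedy embedding
advance by more than `m` blocks per long piece on average (`sum_not_crowded_le`). The other
positions of `y` are called crowded; for a typical `y` they are rare (`card_crowded_le`, `card_typical`), and each hosts at
most `m` long pieces. An exponential potential argument (`card_embeddings_le`) turns the
advance into `card_confusable_le`: for typical `y`, the probability that the surviving part of `x`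
is a subsequence of `y` is at most `exp (-n / 2 ^ A)`.

Finally `M = 4 D k` typical words are drawn independently, where `k = ⌊exp (n / 2 ^ (A + 1))⌋` and
`D ≥ 1 / ε`. If more than `2 k` of them are confusable under some pattern, then `k` of them are
each confusable with a word of smaller index, or `k` of them with a word of larger index; for given
indices either event has probability at most `(M B / |S|) ^ k`, with `S` the set of typical words
and `B` the maximal number of words confusable with a fixed one. As `k` is exponential in `n`, a
union bound over the `2 ^ (n L)` patterns and the at most `2 ^ M` index sets leaves a good choice
(`exists_good_tuple`, `union_bound_lt`).
-/

open scoped Classical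

/-! ### Random tuples with few confusable coordinates -/

/-- Exposing the coordinates of a tuple in order: the tuples in which every coordinate marked by `a`
is related to an earlier one are few, as a marked coordinate has at most `M₀ * B` choices given the
previous ones. -/
lemma card_lower_confused {S : Type*} [Fintype S] (R : S → S → Prop) (B : ℕ)
    (hB : ∀ y, (Finset.univ.filter (fun x => R x y)).card ≤ B) (a : ℕ → Prop) (M₀ : ℕ) :
    ∀ M ≤ M₀, (Finset.univ.filter (fun X : Fin M → S =>
        ∀ i : Fin M, a i → ∃ j < i, R (X i) (X j))).card
      ≤ ∏ i ∈ Finset.range M, if a i then M₀ * B else Fintype.card S := by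
  intro M
  induction M with
  | zero => intro _; simp
  | succ M ih =>
    intro hM
    have ih := ih (by omega)
    rw [Finset.prod_range_succ]
    set P := Finset.univ.filter (fun X : Fin M → S =>
        ∀ i : Fin M, a i → ∃ j < i, R (X i) (X j)) with hP
    let F : (Fin M → S) → Finset S := fun X =>
      if a M then Finset.univ.biUnion (fun j : Fin M => Finset.univ.filter (fun x => R x (X j)))
      else Finset.univ
    have hF : ∀ X, (F X).card ≤ if a M then M₀ * B else Fintype.card S := by
      intro X
      by_cases h : a M
      · simp only [F, h, if_true]
        refine Finset.card_biUnion_le.trans ((Finset.sum_le_sum fun j _ => hB (X j)).trans ?_)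
        simp only [Finset.sum_const, Finset.card_univ, Fintype.card_fin, smul_eq_mul]
        exact Nat.mul_le_mul_right _ (by omega)
      · simp only [F, h, if_false]
        exact le_of_eq Finset.card_univ
    calc _ ≤ (P.sigma F).card := by
          refine Finset.card_le_card_of_injOn
            (fun X => ⟨fun i => X i.castSucc, X (Fin.last M)⟩) ?_ ?_
          · intro X hX
            simp only [Finset.coe_filter, Finset.mem_univ, true_and, Set.mem_ofPred_eq] at hX
            simp only [Finset.mem_coe, Finset.mem_sigma, hP, Finset.mem_filter, Finset.mem_univ,
              true_and]
            constructor
            · intro i hi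
              obtain ⟨j, hj, hR⟩ := hX i.castSucc (by simpa using hi)
              refine ⟨⟨j, lt_trans (Fin.lt_def.1 hj) i.2⟩, ?_, ?_⟩
              · simpa [Fin.lt_def] using hj
              · simpa using hR
            · by_cases h : a M
              · simp only [F, h, if_true, Finset.mem_biUnion, Finset.mem_filter, Finset.mem_univ,
                  true_and]
                obtain ⟨j, hj, hR⟩ := hX (Fin.last M) (by simpa using h)
                exact ⟨⟨j, by simpa [Fin.lt_def] using hj⟩, by simpa using hR⟩
              · simp [F, h]
          · intro X _ X' _ h
            simp only [Sigma.mk.injEq, heq_eq_eq] at h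
            funext i
            exact Fin.lastCases h.2 (fun i => congrFun h.1 i) i
      _ = ∑ X ∈ P, (F X).card := Finset.card_sigma _ _
      _ ≤ ∑ X ∈ P, (if a M then M₀ * B else Fintype.card S) := Finset.sum_le_sum fun X _ => hF X
      _ = P.card * (if a M then M₀ * B else Fintype.card S) := by simp
      _ ≤ _ := Nat.mul_le_mul_right _ ih

lemma card_confused_on {S : Type*} [Fintype S] (R : S → S → Prop) (B : ℕ)
    (hB : ∀ y, (Finset.univ.filter (fun x => R x y)).card ≤ B) (M : ℕ) (A : Finset (Fin M)) :
    (Finset.univ.filter (fun X : Fin M → S => ∀ i ∈ A, ∃ j < i, R (X i) (X j))).card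
      ≤ (M * B) ^ A.card * Fintype.card S ^ (M - A.card) := by
  have h := card_lower_confused R B hB (fun i => ∃ h : i < M, (⟨i, h⟩ : Fin M) ∈ A) M M le_rfl
  have e : (∏ i ∈ Finset.range M, if (∃ h : i < M, (⟨i, h⟩ : Fin M) ∈ A) then M * B
      else Fintype.card S) = (M * B) ^ A.card * Fintype.card S ^ (M - A.card) := by
    rw [Finset.prod_range]
    have : ∀ i : Fin M, (∃ h : (i : ℕ) < M, (⟨i, h⟩ : Fin M) ∈ A) ↔ i ∈ A := by
      intro i; simp
    simp only [this]
    rw [Finset.prod_ite, Finset.prod_const, Finset.prod_const]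
    congr 2
    · congr 1; ext i; simp
    · rw [Finset.filter_not, Finset.card_sdiff]
      simp
  refine le_trans (le_of_eq ?_) (h.trans (le_of_eq (by convert e)))
  congr 1; ext X; simp

/-- The mirror image of `card_confused_on`, with the witnesses at larger indices. -/
lemma card_confused_on_rev {S : Type*} [Fintype S] (R : S → S → Prop) (B : ℕ)
    (hB : ∀ y, (Finset.univ.filter (fun x => R x y)).card ≤ B) (M : ℕ) (A : Finset (Fin M)) :
    (Finset.univ.filter (fun X : Fin M → S => ∀ i ∈ A, ∃ j > i, R (X i) (X j))).card
      ≤ (M * B) ^ A.card * Fintype.card S ^ (M - A.card) := by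
  have h := card_confused_on R B hB M (A.map Fin.revPerm.toEmbedding)
  rw [Finset.card_map] at h
  refine le_trans (Finset.card_le_card_of_injOn (fun X => X ∘ Fin.rev) ?_ ?_) h
  · intro X hX
    simp only [Finset.coe_filter, Finset.mem_univ, true_and, Set.mem_ofPred_eq] at hX ⊢
    intro i hi
    simp only [Finset.mem_map_equiv] at hi
    obtain ⟨j, hj, hR⟩ := hX _ hi
    refine ⟨j.rev, ?_, ?_⟩
    · have : i.rev < j := hj
      rwa [Fin.rev_lt_iff]
    · simpa using hR
  · intro X _ X' _ h
    funext i
    have := congrFun h i.rev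
    simpa using this

/-- Union bound: if each `R τ`-neighbourhood has at most `B` elements, some tuple has, for every `τ`
simultaneously, at most `2 * k` coordinates that are `R τ`-related to another coordinate. Among
`2 * k + 1` such coordinates, `k` have their witness on the same side. -/
lemma exists_good_tuple {S 𝒯 : Type*} [Fintype S] [Fintype 𝒯] (R : 𝒯 → S → S → Prop) (B M k : ℕ)
    (hB : ∀ τ y, (Finset.univ.filter (fun x => R τ x y)).card ≤ B)
    (hlt : Fintype.card 𝒯 * 2 ^ M * 2 * ((M * B) ^ k * Fintype.card S ^ (M - k))
      < Fintype.card S ^ M) :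
    ∃ X : Fin M → S, ∀ τ,
      (Finset.univ.filter (fun i => ∃ j, j ≠ i ∧ R τ (X i) (X j))).card ≤ 2 * k := by
  by_contra! hcon
  let I : Finset (𝒯 × Finset (Fin M)) := Finset.univ ×ˢ Finset.univ.powersetCard k
  let E : 𝒯 × Finset (Fin M) → Finset (Fin M → S) := fun q =>
    Finset.univ.filter (fun X : Fin M → S => ∀ i ∈ q.2, ∃ j < i, R q.1 (X i) (X j)) ∪
    Finset.univ.filter (fun X : Fin M → S => ∀ i ∈ q.2, ∃ j > i, R q.1 (X i) (X j))
  have hE : ∀ q ∈ I, (E q).card ≤ 2 * ((M * B) ^ k * Fintype.card S ^ (M - k)) := by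
    intro q hq
    simp only [I, Finset.mem_product, Finset.mem_univ, true_and, Finset.mem_powersetCard,
      Finset.subset_univ] at hq
    refine (Finset.card_union_le _ _).trans ?_
    have h1 := card_confused_on (R q.1) B (hB q.1) M q.2
    have h2 := card_confused_on_rev (R q.1) B (hB q.1) M q.2
    rw [hq] at h1 h2
    omega
  have hcov : (Finset.univ : Finset (Fin M → S)) ⊆ I.biUnion E := by
    intro X _
    obtain ⟨τ, hτ⟩ := hcon X
    set L := Finset.univ.filter (fun i => ∃ j < i, R τ (X i) (X j))
    set U := Finset.univ.filter (fun i => ∃ j > i, R τ (X i) (X j))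
    have hsub : Finset.univ.filter (fun i => ∃ j, j ≠ i ∧ R τ (X i) (X j)) ⊆ L ∪ U := by
      intro i hi
      simp only [Finset.mem_filter, Finset.mem_univ, true_and] at hi
      obtain ⟨j, hj, hR⟩ := hi
      rcases lt_or_gt_of_ne hj with h | h
      · exact Finset.mem_union_left _ (by simpa [L] using ⟨j, h, hR⟩)
      · exact Finset.mem_union_right _ (by simpa [U] using ⟨j, h, hR⟩)
    have hc := (Finset.card_le_card hsub).trans (Finset.card_union_le _ _)
    simp only [Finset.mem_biUnion]
    rcases (by omega : k ≤ L.card ∨ k ≤ U.card) with h | h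
    · obtain ⟨A, hA, hAc⟩ := Finset.exists_subset_card_eq h
      refine ⟨(τ, A), by simp [I, hAc], Finset.mem_union_left _ ?_⟩
      simp only [Finset.mem_filter, Finset.mem_univ, true_and]
      intro i hi
      simpa [L] using hA hi
    · obtain ⟨A, hA, hAc⟩ := Finset.exists_subset_card_eq h
      refine ⟨(τ, A), by simp [I, hAc], Finset.mem_union_right _ ?_⟩
      simp only [Finset.mem_filter, Finset.mem_univ, true_and]
      intro i hi
      simpa [U] using hA hi
  have h1 := (Finset.card_le_card hcov).trans
    (Finset.card_biUnion_le.trans (Finset.sum_le_sum hE))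
  have h2 : I.card ≤ Fintype.card 𝒯 * 2 ^ M := by
    simp only [I, Finset.card_product, Finset.card_univ, Finset.card_powersetCard, Fintype.card_fin]
    exact Nat.mul_le_mul_left _ (Nat.choose_le_two_pow _ _)
  simp only [Finset.card_univ, Fintype.card_fun, Fintype.card_fin, Finset.sum_const,
    smul_eq_mul] at h1
  have h3 := h1.trans (Nat.mul_le_mul_right _ h2)
  rw [← mul_assoc] at h3
  omega

/-! ### Greedy embeddings -/

/-- The segment of the infinite binary word `f` from position `t` (included) to
position `t'` (excluded). -/
def wordSeg (f : ℕ → Bool) (t t' : ℕ) : List Bool := (List.range' t (t' - t)).map f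

lemma wordSeg_append (f : ℕ → Bool) {a b c : ℕ} (h : a ≤ b) (h' : b ≤ c) :
    wordSeg f a c = wordSeg f a b ++ wordSeg f b c := by
  unfold wordSeg
  rw [← List.map_append]
  congr 1
  have := List.range'_append_1 (s := a) (m := b - a) (n := c - b)
  rw [show a + (b - a) = b by omega, show b - a + (c - b) = c - a by omega] at this
  exact this.symm

lemma wordSeg_length (f : ℕ → Bool) (t t' : ℕ) : (wordSeg f t t').length = t' - t := by
  simp [wordSeg]

lemma wordSeg_sublist (f : ℕ → Bool) {a b c d : ℕ} (h : a ≤ b) (h' : c ≤ d) :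
    (wordSeg f b c).Sublist (wordSeg f a d) := by
  rcases le_total b c with hbc | hbc
  · rw [wordSeg_append f h (hbc.trans h'), wordSeg_append f hbc h']
    exact (List.sublist_append_left _ _).trans (List.sublist_append_right _ _)
  · have : wordSeg f b c = [] := by
      rw [← List.length_eq_zero_iff, wordSeg_length]; omega
    rw [this]; exact List.nil_sublist _

/-- The leftmost embedding of `v` into a segment: it ends at a position `t'` after which every
possible continuation can still be embedded. -/
lemma exists_greedy (f : ℕ → Bool) (v : List Bool) (t E : ℕ) (ht : t ≤ E)
    (h : v.Sublist (wordSeg f t E)) :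
    ∃ t', t ≤ t' ∧ t' ≤ E ∧ v.Sublist (wordSeg f t t') ∧
      ∀ w : List Bool, (v ++ w).Sublist (wordSeg f t E) → w.Sublist (wordSeg f t' E) := by
  have hex : ∃ t', t ≤ t' ∧ t' ≤ E ∧ v.Sublist (wordSeg f t t') := ⟨E, ht, le_rfl, h⟩
  obtain ⟨h1, h2, h3⟩ := Nat.find_spec hex
  refine ⟨Nat.find hex, h1, h2, h3, ?_⟩
  intro w hw
  obtain ⟨r₁, r₂, hr, hv, hw⟩ := List.append_sublist_iff.1 hw
  have hlen : r₁.length + r₂.length = E - t := by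
    rw [← List.length_append, ← hr, wordSeg_length]
  have hs := wordSeg_append f (a := t) (b := t + r₁.length) (c := E) (by omega) (by omega)
  rw [hr] at hs
  obtain ⟨e1, e2⟩ := List.append_inj hs (by rw [wordSeg_length]; omega)
  have hmin : Nat.find hex ≤ t + r₁.length :=
    Nat.find_min' hex ⟨by omega, by omega, e1 ▸ hv⟩
  rw [e2] at hw
  exact hw.trans (wordSeg_sublist f hmin le_rfl)

/-- Potential argument for the greedy embedding of a concatenation of `k` independent pieces. If for
every piece `j` and every starting position `t` the average of `exp Φ` over the possible end
positions (counting failure as `0`) is at most `exp (Φ t - g j)`, then the proportion of tuples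
whose concatenation embeds is at most `exp (Φ t - ∑ g)`. -/
lemma card_embeddings_le {S : Type*} [Fintype S] (f : ℕ → Bool) (E : ℕ) (Φ : ℕ → ℝ)
    (hΦ : ∀ t ≤ E, 0 ≤ Φ t) :
    ∀ (k : ℕ) (kept : Fin k → S → List Bool) (g : Fin k → ℝ)
      (_ : ∀ j, ∀ t ≤ E, ∀ nxt : S → ℕ,
        (∀ s, (kept j s).Sublist (wordSeg f t E) →
          t ≤ nxt s ∧ nxt s ≤ E ∧ (kept j s).Sublist (wordSeg f t (nxt s))) →
        ∑ s with (kept j s).Sublist (wordSeg f t E), Real.exp (Φ (nxt s))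
          ≤ Fintype.card S * Real.exp (Φ t - g j)),
      ∀ t ≤ E, ((Finset.univ.filter (fun x : Fin k → S =>
          (List.ofFn (fun j => kept j (x j))).flatten.Sublist (wordSeg f t E))).card : ℝ)
        ≤ (Fintype.card S : ℝ) ^ k * Real.exp (Φ t - ∑ j, g j) := by
  intro k
  induction k with
  | zero =>
    intro kept g _ t ht
    simp only [pow_zero, one_mul, Finset.univ_eq_empty, Finset.sum_empty, sub_zero]
    refine le_trans ?_ (Real.one_le_exp (hΦ t ht))
    exact_mod_cast (Finset.card_le_univ _).trans (by simp)
  | succ k ih =>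
    intro kept g hstep t ht
    have hgr : ∀ s, ∃ t', (kept 0 s).Sublist (wordSeg f t E) →
        (t ≤ t' ∧ t' ≤ E ∧ (kept 0 s).Sublist (wordSeg f t t')) ∧
        ∀ w : List Bool, (kept 0 s ++ w).Sublist (wordSeg f t E) →
          w.Sublist (wordSeg f t' E) := by
      intro s
      by_cases h : (kept 0 s).Sublist (wordSeg f t E)
      · obtain ⟨t', h1, h2, h3, h4⟩ := exists_greedy f _ t E ht h
        exact ⟨t', fun _ => ⟨⟨h1, h2, h3⟩, h4⟩⟩
      · exact ⟨0, fun h' => absurd h' h⟩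
    choose nxt hnxt using hgr
    let T : Finset S := Finset.univ.filter fun s => (kept 0 s).Sublist (wordSeg f t E)
    let Q : S → Finset (Fin k → S) := fun s => Finset.univ.filter (fun x : Fin k → S =>
      (List.ofFn (fun j => kept j.succ (x j))).flatten.Sublist (wordSeg f (nxt s) E))
    have hQ : ∀ s ∈ T, ((Q s).card : ℝ) ≤
        (Fintype.card S : ℝ) ^ k * Real.exp (-∑ j : Fin k, g j.succ) * Real.exp (Φ (nxt s)) := by
      intro s hs
      have hs' := (hnxt s (by simpa [T] using hs)).1
      have := ih (fun j => kept j.succ) (fun j => g j.succ) (fun j => hstep j.succ) (nxt s) hs'.2.1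
      refine this.trans (le_of_eq ?_)
      rw [mul_assoc, ← Real.exp_add]
      ring_nf
    have hcard : (Finset.univ.filter (fun x : Fin (k + 1) → S =>
          (List.ofFn (fun j => kept j (x j))).flatten.Sublist (wordSeg f t E))).card
        ≤ (T.sigma Q).card := by
      refine Finset.card_le_card_of_injOn (fun x => ⟨x 0, Fin.tail x⟩) ?_ ?_
      · intro x hx
        simp only [Finset.coe_filter, Finset.mem_univ, true_and, Set.mem_ofPred_eq,
          List.ofFn_succ, List.flatten_cons] at hx
        have h0 : (kept 0 (x 0)).Sublist (wordSeg f t E) :=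
          (List.sublist_append_left _ _).trans hx
        simp only [Finset.mem_coe, Finset.mem_sigma, T, Q, Finset.mem_filter, Finset.mem_univ,
          true_and]
        exact ⟨h0, (hnxt _ h0).2 _ hx⟩
      · intro x _ x' _ h
        simp only [Sigma.mk.injEq, heq_eq_eq] at h
        rw [← Fin.cons_self_tail x, ← Fin.cons_self_tail x', h.1, h.2]
    rw [Finset.card_sigma] at hcard
    have hst := hstep 0 t ht nxt (fun s hs => (hnxt s hs).1)
    calc _ ≤ ((∑ s ∈ T, (Q s).card : ℕ) : ℝ) := by exact_mod_cast hcard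
      _ = ∑ s ∈ T, ((Q s).card : ℝ) := by push_cast; rfl
      _ ≤ ∑ s ∈ T, (Fintype.card S : ℝ) ^ k * Real.exp (-∑ j : Fin k, g j.succ) *
            Real.exp (Φ (nxt s)) := Finset.sum_le_sum hQ
      _ = (Fintype.card S : ℝ) ^ k * Real.exp (-∑ j : Fin k, g j.succ) *
            ∑ s ∈ T, Real.exp (Φ (nxt s)) := by rw [Finset.mul_sum]
      _ ≤ (Fintype.card S : ℝ) ^ k * Real.exp (-∑ j : Fin k, g j.succ) *
            (Fintype.card S * Real.exp (Φ t - g 0)) := by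
          gcongr
      _ = _ := by
          rw [Fin.sum_univ_succ, pow_succ,
            show Φ t - (g 0 + ∑ j : Fin k, g j.succ)
              = -∑ j : Fin k, g j.succ + (Φ t - g 0) by ring, Real.exp_add]
          ring

/-- A segment made of `r` constant runs has at most `(M + 1) ^ r` distinct subsequences of length at
most `M`: such a subsequence is determined by the number of symbols used from each run. -/
lemma card_sublists_chunks (f : ℕ → Bool) (M ρ : ℕ) : ∀ (r t : ℕ)
    (_ : ∀ i < r, ∀ j < ρ, f (t + i * ρ + j) = f (t + i * ρ)),
    ∃ V : Finset (List Bool), V.card ≤ (M + 1) ^ r ∧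
      ∀ v : List Bool, v.length ≤ M → v.Sublist (wordSeg f t (t + r * ρ)) → v ∈ V := by
  intro r
  induction r with
  | zero =>
    intro t _
    refine ⟨{[]}, by simp, ?_⟩
    intro v _ hv
    simpa [wordSeg] using hv
  | succ r ih =>
    intro t h
    obtain ⟨V, hV, hm⟩ := ih (t + ρ) (by
      intro i hi j hj
      have := h (i + 1) (by omega) j hj
      rw [show t + ρ + i * ρ = t + (i + 1) * ρ by ring]
      exact this)
    refine ⟨(Finset.range (M + 1) ×ˢ V).image (fun q => List.replicate q.1 (f t) ++ q.2), ?_, ?_⟩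
    · refine Finset.card_image_le.trans ?_
      rw [Finset.card_product, Finset.card_range, pow_succ, mul_comm]
      exact Nat.mul_le_mul_right _ hV
    · intro v hv hs
      have e : wordSeg f t (t + ρ) = List.replicate ρ (f t) := by
        rw [List.eq_replicate_iff]
        refine ⟨by rw [wordSeg_length]; omega, ?_⟩
        intro b hb
        simp only [wordSeg, List.mem_map, List.mem_range'_1] at hb
        obtain ⟨i, ⟨hi, hi'⟩, rfl⟩ := hb
        have := h 0 (by omega) (i - t) (by omega)
        simpa [show t + (i - t) = i by omega] using this
      rw [wordSeg_append f (b := t + ρ) (by omega) (by nlinarith), e,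
        List.sublist_append_iff] at hs
      obtain ⟨v₁, v₂, rfl, h1, h2⟩ := hs
      obtain ⟨n, -, rfl⟩ := List.sublist_replicate_iff.1 h1
      simp only [List.length_append, List.length_replicate] at hv
      simp only [Finset.mem_image, Finset.mem_product, Finset.mem_range]
      refine ⟨(n, v₂), ⟨by simp only []; omega, hm v₂ (by omega) ?_⟩, rfl⟩
      rwa [show t + ρ + r * ρ = t + (r + 1) * ρ by ring]

/-! ### Blocks and words -/

/-- The data of one block: a level `a < Λ` with multiplicity `2 ^ a`, so that a uniform element has
level `a` with probability proportional to `2 ^ a`, and a source of `L` bits, of which only those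
at the starts of runs are used. -/
abbrev BlockSym (Λ L : ℕ) : Type := (Σ a : Fin Λ, Fin (2 ^ (a : ℕ))) × (Fin L → Bool)

/-- The level of a block. -/
def BlockSym.lev {Λ L : ℕ} (s : BlockSym Λ L) : ℕ := s.1.1

/-- The first position of the run of length `ρ` that contains position `i`. -/
def chunkStart {L : ℕ} (ρ : ℕ) (i : Fin L) : Fin L :=
  ⟨ρ * (i / ρ), lt_of_le_of_lt (Nat.mul_div_le _ _) i.2⟩

/-- The `i`-th symbol of the block of length `L` described by `s`: a block of level `a` is constant on
runs of length `R ^ a`. -/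
def blockBit {Λ L : ℕ} (R : ℕ) (s : BlockSym Λ L) (i : Fin L) : Bool :=
  s.2 (chunkStart (R ^ BlockSym.lev s) i)

/-- The binary word obtained by concatenating the blocks `x 0, …, x (n - 1)`. -/
def codeword {Λ L n : ℕ} (R : ℕ) (x : Fin n → BlockSym Λ L) : Fin (n * L) → Bool :=
  fun i => blockBit R (x i.divNat) i.modNat

/-- The positions inside block `j` that the deletion pattern `τ` leaves alone. -/
def keptIdx {L n : ℕ} (τ : Finset (Fin (n * L))) (j : Fin n) : Finset (Fin L) :=
  Finset.univ.filter (fun i => finProdFinEquiv (j, i) ∉ τ)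

/-- The subsequence of `w` at the positions in `T`. -/
def kept {L : ℕ} (T : Finset (Fin L)) (w : Fin L → Bool) : List Bool :=
  ((List.finRange L).filter (fun i => i ∈ T)).map w

lemma applyDel_codeword {Λ L n : ℕ} (R : ℕ) (τ : Finset (Fin (n * L))) (x : Fin n → BlockSym Λ L) :
    applyDel τ (codeword R x) =
      (List.ofFn fun j => kept (keptIdx τ j) (blockBit R (x j))).flatten := by
  have h : List.finRange (n * L) =
      (List.ofFn fun j : Fin n => List.ofFn fun i : Fin L => finProdFinEquiv (j, i)).flatten := by
    rw [← List.ofFn_id, List.ofFn_mul]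
    congr 1
    refine congrArg _ (funext fun j => congrArg _ (funext fun i => ?_))
    apply Fin.ext
    simp [finProdFinEquiv]
    ring
  unfold applyDel
  rw [h, List.filter_flatten, List.map_flatten, List.map_map, List.map_ofFn]
  congr 1
  refine congrArg _ (funext fun j => ?_)
  simp only [Function.comp, kept]
  rw [show (List.ofFn fun i : Fin L => finProdFinEquiv (j, i))
      = (List.finRange L).map (fun i => finProdFinEquiv (j, i)) from List.ofFn_eq_map,
    List.filter_map, List.map_map]
  have e1 : (fun i : Fin L => decide (finProdFinEquiv (j, i) ∉ τ))
      = fun i => decide (i ∈ keptIdx τ j) := by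
    funext i; simp [keptIdx]
  have e2 : codeword R x ∘ (fun i : Fin L => finProdFinEquiv (j, i)) = blockBit R (x j) := by
    funext i
    have h1 : (finProdFinEquiv (j, i)).divNat = j := by
      have := finProdFinEquiv.symm_apply_apply (j, i)
      exact congrArg Prod.fst this
    have h2 : (finProdFinEquiv (j, i)).modNat = i := by
      have := finProdFinEquiv.symm_apply_apply (j, i)
      exact congrArg Prod.snd this
    simp only [Function.comp, codeword]
    rw [h1, h2]
  rw [← e1, ← e2]
  rfl

/-- The codeword of `y` as an infinite word, continued by `false`. -/
def codewordFn {Λ L n : ℕ} (R : ℕ) (y : Fin n → BlockSym Λ L) (i : ℕ) : Bool :=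
  if h : i < n * L then codeword R y ⟨i, h⟩ else false

lemma ofFn_codeword {Λ L n : ℕ} (R : ℕ) (y : Fin n → BlockSym Λ L) :
    List.ofFn (codeword R y) = wordSeg (codewordFn R y) 0 (n * L) := by
  apply List.ext_getElem
  · simp [wordSeg_length]
  · intro i h1 h2
    have hi : i < n * L := by simpa using h1
    simp [wordSeg, codewordFn, hi]

lemma codewordFn_block {Λ L n : ℕ} (R : ℕ) (y : Fin n → BlockSym Λ L) (k : Fin n) (i : ℕ) (hi : i < L) :
    codewordFn R y (k * L + i) = blockBit R (y k) ⟨i, hi⟩ := by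
  have hlt : k * L + i < n * L := by
    have := Nat.mul_le_mul_right L (Nat.succ_le_of_lt k.2)
    rw [Nat.succ_mul] at this
    omega
  have h1 : (⟨k * L + i, hlt⟩ : Fin (n * L)).divNat = k := by
    apply Fin.ext
    simp only [Fin.coe_divNat]
    rw [mul_comm, Nat.mul_add_div (by omega), Nat.div_eq_of_lt hi, add_zero]
  have h2 : (⟨k * L + i, hlt⟩ : Fin (n * L)).modNat = ⟨i, hi⟩ := by
    apply Fin.ext
    simp only [Fin.coe_modNat]
    rw [mul_comm, Nat.mul_add_mod, Nat.mod_eq_of_lt hi]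
  rw [codewordFn, dif_pos hlt, codeword, h1, h2]

lemma codewordFn_of_le {Λ L n : ℕ} (R : ℕ) (y : Fin n → BlockSym Λ L) (k : ℕ) (hk : n ≤ k) (i : ℕ) :
    codewordFn R y (k * L + i) = false := by
  have := Nat.mul_le_mul_right L hk
  rw [codewordFn, dif_neg (by omega)]

/-- A set of positions meets at least `1 / ρ` times as many runs of length `ρ` as it has elements. -/
lemma card_mul_le_chunks {L : ℕ} (ρ : ℕ) (hρ : 0 < ρ) (T : Finset (Fin L)) :
    T.card ≤ ρ * (T.image (chunkStart ρ)).card := by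
  refine Finset.card_le_mul_card_image T ρ ?_
  intro p _
  calc _ ≤ (Finset.Ico (p : ℕ) (p + ρ)).card := by
        refine Finset.card_le_card_of_injOn (fun i => (i : ℕ)) ?_ (fun i _ j _ h => Fin.ext h)
        intro i hi
        simp only [Finset.coe_filter, Set.mem_ofPred_eq] at hi
        obtain ⟨_, rfl⟩ := hi
        simp only [Finset.coe_Ico, Set.mem_Ico, chunkStart]
        exact ⟨Nat.mul_div_le _ _, Nat.lt_mul_div_succ _ hρ |>.trans_eq (by ring)⟩
    _ = ρ := by simp

/-- A set `T` of at least `R ^ a * d` positions meets at least `d` runs of a block of level `a = c.1`.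
So if `V` has at most `2 ^ d / 2` elements, then with probability at least
`1 / 2` the subsequence at `T` is not in `V`. -/
lemma card_kept_mem_le {Λ L : ℕ} (R : ℕ) (hR : 0 < R) (T : Finset (Fin L))
    (c : Σ a : Fin Λ, Fin (2 ^ (a : ℕ))) (d : ℕ) (hd : R ^ (c.1 : ℕ) * d ≤ T.card)
    (V : Finset (List Bool)) (hV : 2 * V.card ≤ 2 ^ d) :
    2 * (Finset.univ.filter (fun u : Fin L → Bool => kept T (blockBit R (c, u)) ∈ V)).card
      ≤ 2 ^ L := by
  set P := T.image (chunkStart (R ^ (c.1 : ℕ))) with hP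
  have hρ : 0 < R ^ (c.1 : ℕ) := pow_pos hR _
  have hPd : d ≤ P.card :=
    Nat.le_of_mul_le_mul_left (hd.trans (card_mul_le_chunks _ hρ T)) hρ
  have hPL : P.card ≤ L := (Finset.card_le_univ _).trans (by simp)
  have h : (Finset.univ.filter (fun u : Fin L → Bool => kept T (blockBit R (c, u)) ∈ V)).card
      ≤ (V ×ˢ (Finset.univ : Finset ({i // i ∉ P} → Bool))).card := by
    refine Finset.card_le_card_of_injOn
      (fun u => (kept T (blockBit R (c, u)), fun i => u i.1)) ?_ ?_
    · intro u hu
      simpa using hu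
    · intro u _ u' _ huu
      simp only [Prod.mk.injEq] at huu
      obtain ⟨h1, h2⟩ := huu
      funext i
      by_cases hi : i ∈ P
      · rw [hP, Finset.mem_image] at hi
        obtain ⟨q, hq, rfl⟩ := hi
        have := List.map_inj_left.1 h1 q (by simpa using hq)
        simpa [blockBit, BlockSym.lev] using this
      · exact congrFun h2 ⟨i, hi⟩
  rw [Finset.card_product, Finset.card_univ, Fintype.card_fun, Fintype.card_bool] at h
  have hc : Fintype.card {i // i ∉ P} = L - P.card := by
    rw [Fintype.card_subtype_compl]; simp
  rw [hc] at h
  calc _ ≤ 2 * (V.card * 2 ^ (L - P.card)) := Nat.mul_le_mul_left _ h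
    _ = (2 * V.card) * 2 ^ (L - P.card) := by ring
    _ ≤ 2 ^ P.card * 2 ^ (L - P.card) :=
        Nat.mul_le_mul_right _ (hV.trans (Nat.pow_le_pow_right (by norm_num) hPd))
    _ = 2 ^ L := by rw [← pow_add]; congr 1; omega

/-- A window of at most `2 ^ A` blocks, all of level above `a`, consists of runs of length
`R ^ (a + 1)` and therefore has few subsequences of length at most `L`. Positions beyond the end of
`y` cause no trouble, since `codewordFn` is constant there. -/
lemma exists_small_window {Λ L n A R R' : ℕ} (hR : 0 < R) (hL : L = R ^ Λ)
    (H : 2 * (L + 1) ^ (2 ^ A) ≤ 2 ^ R') (y : Fin n → BlockSym Λ L) (a : ℕ) (ha : a < Λ)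
    (b h : ℕ) (hh : h ≤ 2 ^ A) (hy : ∀ k : Fin n, b ≤ k → (k : ℕ) < b + h → a < BlockSym.lev (y k)) :
    ∃ V : Finset (List Bool), 2 * V.card ≤ 2 ^ (R' * R ^ (Λ - a - 1)) ∧
      ∀ v : List Bool, v.length ≤ L →
        v.Sublist (wordSeg (codewordFn R y) (b * L) ((b + h) * L)) → v ∈ V := by
  set Q := R ^ (Λ - a - 1) with hQ
  set ρ := R ^ (a + 1) with hρ
  have hQ0 : 0 < Q := pow_pos hR _
  have hρ0 : 0 < ρ := pow_pos hR _
  have hLQ : L = Q * ρ := by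
    rw [hL, hQ, hρ, ← pow_add]; congr 1; omega
  obtain ⟨V, hV, hm⟩ := card_sublists_chunks (codewordFn R y) L ρ (h * Q) (b * L) (by
    intro i hi j hj
    have hi0 : i % Q < Q := Nat.mod_lt _ hQ0
    have hi1 : i / Q < h := Nat.div_lt_of_lt_mul (by rwa [mul_comm])
    have hlt : i % Q * ρ + j < L := by
      have := Nat.mul_le_mul_right ρ (Nat.succ_le_of_lt hi0)
      rw [Nat.succ_mul, ← hLQ] at this
      omega
    have e : b * L + i * ρ = (b + i / Q) * L + i % Q * ρ := by
      conv_lhs => rw [← Nat.div_add_mod i Q]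
      rw [hLQ]; ring
    rw [e, add_assoc]
    by_cases hk : b + i / Q < n
    · have h1 := codewordFn_block R y ⟨b + i / Q, hk⟩ _ hlt
      have h2 := codewordFn_block R y ⟨b + i / Q, hk⟩ (i % Q * ρ) (by omega)
      simp only at h1 h2
      rw [h1, h2]
      have hlev := hy ⟨b + i / Q, hk⟩ (by simp) (by simpa using hi1)
      set l := BlockSym.lev (y ⟨b + i / Q, hk⟩)
      have hl : R ^ l = ρ * R ^ (l - (a + 1)) := by
        rw [hρ, ← pow_add]; congr 1; omega
      have hch : chunkStart (R ^ l) (⟨i % Q * ρ + j, hlt⟩ : Fin L)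
          = chunkStart (R ^ l) ⟨i % Q * ρ, by omega⟩ := by
        apply Fin.ext
        simp only [chunkStart]
        congr 1
        rw [hl, ← Nat.div_div_eq_div_mul, ← Nat.div_div_eq_div_mul, mul_comm (i % Q) ρ,
          Nat.mul_add_div hρ0, Nat.div_eq_of_lt hj, Nat.mul_div_cancel_left _ hρ0, add_zero]
      unfold blockBit
      rw [hch]
    · rw [codewordFn_of_le _ _ _ (by omega), codewordFn_of_le _ _ _ (by omega)])
  refine ⟨V, ?_, ?_⟩
  · calc 2 * V.card ≤ 2 ^ Q * ((L + 1) ^ (2 ^ A)) ^ Q := by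
          refine Nat.mul_le_mul (Nat.le_self_pow hQ0.ne' 2) (hV.trans ?_)
          rw [← pow_mul]
          exact Nat.pow_le_pow_right (by omega) (Nat.mul_le_mul_right _ hh)
      _ = (2 * (L + 1) ^ (2 ^ A)) ^ Q := by rw [mul_pow]
      _ ≤ (2 ^ R') ^ Q := Nat.pow_le_pow_left H _
      _ = _ := by rw [← pow_mul]
  · intro v hv hs
    refine hm v hv ?_
    rwa [show b * L + h * Q * ρ = (b + h) * L by rw [hLQ]; ring]

/-! ### One step of the greedy embedding -/

/-- Some block of `y` of level at most `a` lies among the `2 ^ (A - a)` blocks starting with `b`. -/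
def Near {Λ L n : ℕ} (A : ℕ) (y : Fin n → BlockSym Λ L) (a b : ℕ) : Prop :=
  ∃ k : Fin n, b ≤ k ∧ (k : ℕ) < b + 2 ^ (A - a) ∧ BlockSym.lev (y k) ≤ a

/-- Block position `b` is crowded if more than half of the levels `a < A` are near it. -/
def Crowded {Λ L n : ℕ} (A : ℕ) (y : Fin n → BlockSym Λ L) (b : ℕ) : Prop :=
  A < 2 * ((Finset.range A).filter (fun a => Near A y a b)).card

/-- An upper bound for the number of pairs `(a, b)`, with `a < A`, for which a block of level `l` is a
witness of `Near A y a b`. -/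
def levCost (A l : ℕ) : ℕ := ∑ a ∈ Finset.Ico l A, 2 ^ (A - a)

/-- Double counting of the pairs `(a, b)` with `Near A y a b`. -/
lemma card_crowded_le {Λ L n : ℕ} (A : ℕ) (y : Fin n → BlockSym Λ L) :
    A * ((Finset.range n).filter (fun b => Crowded A y b)).card
      ≤ 2 * ∑ k, levCost A (BlockSym.lev (y k)) := by
  have h1 : ∀ a ∈ Finset.range A, ((Finset.range n).filter (fun b => Near A y a b)).card
      ≤ ∑ k : Fin n, if BlockSym.lev (y k) ≤ a then 2 ^ (A - a) else 0 := by
    intro a _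
    rw [← Finset.sum_filter]
    calc _ ≤ ((Finset.univ.filter (fun k : Fin n => BlockSym.lev (y k) ≤ a)).biUnion
            (fun k => Finset.Ico ((k : ℕ) + 1 - 2 ^ (A - a)) (k + 1))).card := by
          apply Finset.card_le_card
          intro b hb
          simp only [Finset.mem_filter] at hb
          obtain ⟨_, k, hk1, hk2, hk3⟩ := hb
          simp only [Finset.mem_biUnion, Finset.mem_filter, Finset.mem_univ, true_and,
            Finset.mem_Ico]
          exact ⟨k, hk3, by generalize 2 ^ (A - a) = h at *; omega, by omega⟩
      _ ≤ _ := Finset.card_biUnion_le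
      _ ≤ _ := Finset.sum_le_sum (fun k _ => by rw [Nat.card_Ico]; generalize 2 ^ (A - a) = h; omega)
  calc A * ((Finset.range n).filter (fun b => Crowded A y b)).card
      = ∑ b ∈ (Finset.range n).filter (fun b => Crowded A y b), A := by simp [mul_comm]
    _ ≤ ∑ b ∈ (Finset.range n).filter (fun b => Crowded A y b),
          2 * ((Finset.range A).filter (fun a => Near A y a b)).card :=
        Finset.sum_le_sum (fun b hb => le_of_lt (Finset.mem_filter.1 hb).2)
    _ ≤ ∑ b ∈ Finset.range n, 2 * ((Finset.range A).filter (fun a => Near A y a b)).card :=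
        Finset.sum_le_sum_of_subset (Finset.filter_subset _ _)
    _ = 2 * ∑ a ∈ Finset.range A, ((Finset.range n).filter (fun b => Near A y a b)).card := by
        rw [← Finset.mul_sum]
        congr 1
        simp only [Finset.card_filter]
        exact Finset.sum_comm
    _ ≤ 2 * ∑ a ∈ Finset.range A, ∑ k : Fin n,
          if BlockSym.lev (y k) ≤ a then 2 ^ (A - a) else 0 :=
        Nat.mul_le_mul_left _ (Finset.sum_le_sum h1)
    _ = _ := by
        rw [Finset.sum_comm]
        congr 1
        refine Finset.sum_congr rfl (fun k _ => ?_)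
        rw [levCost, ← Finset.sum_filter]
        refine Finset.sum_congr ?_ (fun _ _ => rfl)
        ext a; simp [and_comm]

lemma exp_neg_le_one_sub_half {z : ℝ} (h0 : 0 ≤ z) (h1 : z ≤ 1) : Real.exp (-z) ≤ 1 - z / 2 := by
  rw [Real.exp_neg]
  have h := Real.add_one_le_exp z
  calc (Real.exp z)⁻¹ ≤ (z + 1)⁻¹ := inv_anti₀ (by linarith) h
    _ ≤ 1 - z / 2 := by
      rw [inv_le_iff_one_le_mul₀ (by linarith)]
      nlinarith

lemma kept_length_le {L : ℕ} (T : Finset (Fin L)) (w : Fin L → Bool) : (kept T w).length ≤ L := by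
  rw [kept, List.length_map]
  exact (List.length_filter_le _ _).trans (by simp)

lemma kept_length {L : ℕ} (T : Finset (Fin L)) (w : Fin L → Bool) :
    (kept T w).length = T.card := by
  rw [kept, List.length_map]
  have h := List.toFinset_card_of_nodup
    ((List.nodup_finRange L).filter (fun i => decide (i ∈ T)))
  rw [← h]
  congr 1
  ext i
  simp

/-- The one-step estimate for a fixed level `a = c.1`: if `a < A` is not near the current block, then
with probability at least `1 / 2` the piece fails to embed or leaves the window of `2 ^ (A - a)`
blocks, which multiplies `exp (- progress / 2 ^ A)` by at most `1 - 2 ^ (-a) / 2`. -/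
lemma sum_block_le {Λ L n A R R' : ℕ} (hR : 0 < R) (hL : L = R ^ Λ)
    (H : 2 * (L + 1) ^ (2 ^ A) ≤ 2 ^ R') (y : Fin n → BlockSym Λ L) (T : Finset (Fin L))
    (hT : R' * R ^ (Λ - 1) ≤ T.card) (t : ℕ) (nxt : BlockSym Λ L → ℕ)
    (hn : ∀ s, (kept T (blockBit R s)).Sublist (wordSeg (codewordFn R y) t (n * L)) →
      t ≤ nxt s ∧ (kept T (blockBit R s)).Sublist (wordSeg (codewordFn R y) t (nxt s)))
    (c : Σ a : Fin Λ, Fin (2 ^ (a : ℕ))) :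
    ∑ u : Fin L → Bool,
      (if (kept T (blockBit R (c, u))).Sublist (wordSeg (codewordFn R y) t (n * L)) then
        Real.exp (-(((nxt (c, u) / L : ℕ) : ℝ) - ((t / L : ℕ) : ℝ)) / 2 ^ A) else 0)
      ≤ 2 ^ L * (1 - (if (c.1 : ℕ) < A ∧ ¬ Near A y c.1 (t / L) then 1 else 0)
          * (1 / 2 ^ (c.1 : ℕ)) / 4) := by
  set w : (Fin L → Bool) → ℝ := fun u =>
    (if (kept T (blockBit R (c, u))).Sublist (wordSeg (codewordFn R y) t (n * L)) then
        Real.exp (-(((nxt (c, u) / L : ℕ) : ℝ) - ((t / L : ℕ) : ℝ)) / 2 ^ A) else 0) with hw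
  have hL0 : 0 < L := hL ▸ pow_pos hR _
  have hw1 : ∀ u, w u ≤ 1 := by
    intro u
    simp only [hw]
    split_ifs with h
    · rw [Real.exp_le_one_iff]
      have : ((t / L : ℕ) : ℝ) ≤ ((nxt (c, u) / L : ℕ) : ℝ) := by
        exact_mod_cast Nat.div_le_div_right (hn _ h).1
      exact div_nonpos_of_nonpos_of_nonneg (by linarith) (by positivity)
    · norm_num
  have hcard : ((Finset.univ : Finset (Fin L → Bool)).card : ℝ) = 2 ^ L := by simp
  by_cases hc : (c.1 : ℕ) < A ∧ ¬ Near A y c.1 (t / L)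
  · obtain ⟨hcA, hnear⟩ := hc
    rw [if_pos ⟨hcA, hnear⟩, one_mul]
    set a : ℕ := (c.1 : ℕ) with ha
    set b := t / L with hb
    have hyk : ∀ k : Fin n, b ≤ k → (k : ℕ) < b + 2 ^ (A - a) → a < BlockSym.lev (y k) := by
      intro k h1 h2
      by_contra h3
      exact hnear ⟨k, h1, h2, by omega⟩
    obtain ⟨V, hV, hVm⟩ := exists_small_window hR hL H y a c.1.2 b (2 ^ (A - a))
      (Nat.pow_le_pow_right (by norm_num) (by omega)) hyk
    have hhalf := card_kept_mem_le R hR T c (R' * R ^ (Λ - a - 1)) (by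
      refine le_trans (le_of_eq ?_) hT
      have : (c.1 : ℕ) < Λ := c.1.2
      rw [mul_left_comm, ← pow_add]
      congr 2; omega) V hV
    set U := Finset.univ.filter (fun u : Fin L → Bool => kept T (blockBit R (c, u)) ∈ V) with hU
    have hwU : ∀ u ∉ U, w u ≤ 1 - (1 / 2 ^ a) / 2 := by
      intro u hu
      have hz1 : (1 : ℝ) / 2 ^ a ≤ 1 := by
        rw [div_le_one (by positivity)]; exact one_le_pow₀ (by norm_num)
      have hz0 : (0 : ℝ) ≤ 1 / 2 ^ a := by positivity
      simp only [hw]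
      split_ifs with h
      · refine le_trans (Real.exp_le_exp.2 ?_) (exp_neg_le_one_sub_half hz0 hz1)
        obtain ⟨h1, h2⟩ := hn _ h
        have hge : b + 2 ^ (A - a) ≤ nxt (c, u) / L := by
          by_contra hlt
          apply hu
          simp only [hU, Finset.mem_filter, Finset.mem_univ, true_and]
          refine hVm _ (kept_length_le _ _) (h2.trans (wordSeg_sublist _ (Nat.div_mul_le_self _ _) ?_))
          have := (Nat.div_lt_iff_lt_mul hL0).1 (not_le.1 hlt)
          exact this.le
        have hge' : (b : ℝ) + 2 ^ (A - a) ≤ ((nxt (c, u) / L : ℕ) : ℝ) := by exact_mod_cast hge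
        have e : (1 : ℝ) / 2 ^ a = 2 ^ (A - a) / 2 ^ A := by
          rw [div_eq_div_iff (by positivity) (by positivity), one_mul, ← pow_add]
          congr 1; omega
        rw [e, neg_div, neg_le_neg_iff]
        gcongr
        linarith
      · linarith
    have hUr : (2 : ℝ) * U.card ≤ 2 ^ L := by exact_mod_cast hhalf
    calc ∑ u, w u = ∑ u ∈ U, w u + ∑ u ∈ Uᶜ, w u := (Finset.sum_add_sum_compl U w).symm
      _ ≤ ∑ u ∈ U, 1 + ∑ u ∈ Uᶜ, (1 - (1 / 2 ^ a) / 2) :=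
          add_le_add (Finset.sum_le_sum fun u _ => hw1 u)
            (Finset.sum_le_sum fun u hu => hwU u (Finset.mem_compl.1 hu))
      _ = U.card + (2 ^ L - U.card) * (1 - (1 / 2 ^ a) / 2) := by
          rw [Finset.sum_const, Finset.sum_const, nsmul_eq_mul, nsmul_eq_mul, mul_one,
            Finset.card_compl, Nat.cast_sub (Finset.card_le_univ _), ← Finset.card_univ, hcard]
      _ ≤ _ := by
          have hz0 : (0 : ℝ) ≤ 1 / 2 ^ a := by positivity
          nlinarith
  · rw [if_neg hc]
    calc ∑ u, w u ≤ ∑ u : Fin L → Bool, (1 : ℝ) := Finset.sum_le_sum fun u _ => hw1 u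
      _ = _ := by rw [Finset.sum_const, nsmul_eq_mul, hcard]; ring

lemma card_blockSym (Λ L : ℕ) :
    (Fintype.card (BlockSym Λ L) : ℝ) = (2 ^ Λ - 1) * 2 ^ L := by
  have h : ∑ a : Fin Λ, (2 : ℝ) ^ (a : ℕ) = 2 ^ Λ - 1 := by
    rw [Fin.sum_univ_eq_sum_range (fun a => (2 : ℝ) ^ a), geom_sum_eq (by norm_num)]
    norm_num
  rw [Fintype.card_prod, Fintype.card_sigma]
  simp only [Fintype.card_fin, Fintype.card_fun, Fintype.card_bool]
  push_cast
  rw [h]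

/-- The one-step estimate averaged over all levels, at an uncrowded position: each of the at least
`A / 2` levels that are not near contributes the same amount, because its weight `2 ^ a` cancels the
factor `2 ^ (-a)` of `sum_block_le`. -/
lemma sum_not_crowded_le {Λ L n A R R' : ℕ} (hR : 0 < R) (hL : L = R ^ Λ) (hA : A ≤ Λ)
    (H : 2 * (L + 1) ^ (2 ^ A) ≤ 2 ^ R') (y : Fin n → BlockSym Λ L) (T : Finset (Fin L))
    (hT : R' * R ^ (Λ - 1) ≤ T.card) (t : ℕ) (nxt : BlockSym Λ L → ℕ)
    (hn : ∀ s, (kept T (blockBit R s)).Sublist (wordSeg (codewordFn R y) t (n * L)) →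
      t ≤ nxt s ∧ (kept T (blockBit R s)).Sublist (wordSeg (codewordFn R y) t (nxt s)))
    (hcr : ¬ Crowded A y (t / L)) :
    ∑ s with (kept T (blockBit R s)).Sublist (wordSeg (codewordFn R y) t (n * L)),
        Real.exp (-(((nxt s / L : ℕ) : ℝ) - ((t / L : ℕ) : ℝ)) / 2 ^ A)
      ≤ Fintype.card (BlockSym Λ L) * Real.exp (-((A : ℝ) / (8 * 2 ^ Λ))) := by
  rw [Finset.sum_filter, Fintype.sum_prod_type]
  set I : ℕ → ℝ := fun a => if a < A ∧ ¬ Near A y a (t / L) then 1 else 0 with hI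
  refine (Finset.sum_le_sum (g := fun c : Σ a : Fin Λ, Fin (2 ^ (a : ℕ)) =>
    2 ^ L * (1 - I c.1 * (1 / 2 ^ (c.1 : ℕ)) / 4))
    fun c _ => sum_block_le hR hL H y T hT t nxt hn c).trans ?_
  rw [Fintype.sum_sigma]
  simp only [Finset.sum_const, Finset.card_univ, Fintype.card_fin, nsmul_eq_mul]
  have e1 : ∀ a : Fin Λ, ((2 ^ (a : ℕ) : ℕ) : ℝ) * (2 ^ L * (1 - I a * (1 / 2 ^ (a : ℕ)) / 4))
      = 2 ^ L * (2 ^ (a : ℕ) - I a / 4) := by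
    intro a
    push_cast
    have : (2 : ℝ) ^ (a : ℕ) ≠ 0 := by positivity
    field_simp
  rw [Finset.sum_congr rfl fun a _ => e1 a, ← Finset.mul_sum, Finset.sum_sub_distrib,
    ← Finset.sum_div]
  have h2 : ∑ a : Fin Λ, (2 : ℝ) ^ (a : ℕ) = 2 ^ Λ - 1 := by
    rw [Fin.sum_univ_eq_sum_range (fun a => (2 : ℝ) ^ a), geom_sum_eq (by norm_num)]
    norm_num
  have h3 : (A : ℝ) / 2 ≤ ∑ a : Fin Λ, I a := by
    rw [Fin.sum_univ_eq_sum_range I]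
    have hle : ∑ a ∈ Finset.range A, I a ≤ ∑ a ∈ Finset.range Λ, I a := by
      refine Finset.sum_le_sum_of_subset_of_nonneg (Finset.range_mono hA) ?_
      intro a _ _
      simp only [hI]; split_ifs <;> norm_num
    refine le_trans ?_ hle
    have e : ∑ a ∈ Finset.range A, I a
        = (((Finset.range A).filter (fun a => ¬ Near A y a (t / L))).card : ℝ) := by
      rw [Finset.card_filter]
      push_cast
      refine Finset.sum_congr rfl fun a ha => ?_
      simp [hI, Finset.mem_range.1 ha]
    rw [e]
    have hc := Finset.card_filter_add_card_filter_not (s := Finset.range A)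
      (fun a => Near A y a (t / L))
    rw [Finset.card_range] at hc
    unfold Crowded at hcr
    have : A ≤ 2 * ((Finset.range A).filter (fun a => ¬ Near A y a (t / L))).card := by omega
    have : (A : ℝ) ≤ 2 * ((Finset.range A).filter (fun a => ¬ Near A y a (t / L))).card := by
      exact_mod_cast this
    linarith
  rw [h2, card_blockSym]
  have h4 := Real.add_one_le_exp (-((A : ℝ) / (8 * 2 ^ Λ)))
  have hK : (1 : ℝ) ≤ 2 ^ Λ := one_le_pow₀ (by norm_num)
  calc (2 : ℝ) ^ L * (2 ^ Λ - 1 - (∑ a : Fin Λ, I a) / 4)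
      ≤ 2 ^ L * (2 ^ Λ - 1 - (A : ℝ) / 8) :=
        mul_le_mul_of_nonneg_left (by linarith) (by positivity)
    _ ≤ 2 ^ L * ((2 ^ Λ - 1) * (-((A : ℝ) / (8 * 2 ^ Λ)) + 1)) := by
        gcongr
        have e : (A : ℝ) / 8 = 2 ^ Λ * (A / (8 * 2 ^ Λ)) := by field_simp
        have : 0 ≤ (A : ℝ) / (8 * 2 ^ Λ) := by positivity
        rw [e]; nlinarith
    _ ≤ 2 ^ L * ((2 ^ Λ - 1) * Real.exp (-((A : ℝ) / (8 * 2 ^ Λ)))) := by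
        have : (0 : ℝ) ≤ 2 ^ Λ - 1 := by linarith
        gcongr
    _ = _ := by ring

/-! ### The confusion probability -/

/-- The number of length-`d` cells at or after position `t` that lie in crowded blocks, for blocks
divided into `m` cells each. It is the part of the potential that pays for long pieces starting in a
crowded block. -/
noncomputable def crowdedAhead {Λ L n : ℕ} (A m d : ℕ) (y : Fin n → BlockSym Λ L) (t : ℕ) : ℕ :=
  ((Finset.Ico (t / d) (n * m)).filter (fun i => Crowded A y (i / m))).card

lemma crowdedAhead_anti {Λ L n : ℕ} (A m d : ℕ) (y : Fin n → BlockSym Λ L) {t t' : ℕ}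
    (h : t ≤ t') : crowdedAhead A m d y t' ≤ crowdedAhead A m d y t := by
  refine Finset.card_le_card (Finset.filter_subset_filter _ ?_)
  exact Finset.Ico_subset_Ico_left (Nat.div_le_div_right h)

lemma crowdedAhead_step {Λ L n : ℕ} (A m d : ℕ) (hd : 0 < d) (y : Fin n → BlockSym Λ L) {t t' : ℕ}
    (h : t + d ≤ t') (hn : t' ≤ n * m * d) (hc : Crowded A y (t / d / m)) :
    crowdedAhead A m d y t' + 1 ≤ crowdedAhead A m d y t := by
  have h1 : t / d + 1 ≤ t' / d := by
    rw [← Nat.add_div_right _ hd]; exact Nat.div_le_div_right h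
  have h2 : t / d < n * m := (Nat.div_lt_iff_lt_mul hd).2 (by omega)
  refine Finset.card_lt_card ((Finset.ssubset_iff_of_subset ?_).2 ⟨t / d, ?_, ?_⟩)
  · exact Finset.filter_subset_filter _ (Finset.Ico_subset_Ico_left (by omega))
  · simp [h2, hc]
  · simp only [Finset.mem_filter, Finset.mem_Ico, not_and]
    intro h3; omega

lemma crowdedAhead_zero {Λ L n : ℕ} (A m d : ℕ) (hm : 0 < m) (y : Fin n → BlockSym Λ L) :
    crowdedAhead A m d y 0 ≤ m * ((Finset.range n).filter (fun b => Crowded A y b)).card := by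
  unfold crowdedAhead
  calc _ ≤ (((Finset.range n).filter (fun b => Crowded A y b)) ×ˢ Finset.range m).card := by
        refine Finset.card_le_card_of_injOn (fun i => (i / m, i % m)) ?_ ?_
        · intro i hi
          simp only [Finset.coe_filter, Set.mem_ofPred_eq, Finset.mem_Ico] at hi
          simp only [Finset.mem_coe, Finset.mem_product, Finset.mem_filter, Finset.mem_range]
          exact ⟨⟨(Nat.div_lt_iff_lt_mul hm).2 hi.1.2, hi.2⟩, Nat.mod_lt _ hm⟩
        · intro i _ j _ h
          simp only [Prod.mk.injEq] at h
          rw [← Nat.div_add_mod i m, ← Nat.div_add_mod j m, h.1, h.2]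
    _ = _ := by rw [Finset.card_product, Finset.card_range, mul_comm]

lemma sum_card_keptIdx {L n : ℕ} (τ : Finset (Fin (n * L))) :
    ∑ j, (keptIdx τ j).card + τ.card = n * L := by
  have h : ∑ j, (keptIdx τ j).card = τᶜ.card := by
    rw [← Finset.card_sigma]
    refine Finset.card_bij (fun q _ => finProdFinEquiv (q.1, q.2)) ?_ ?_ ?_
    · intro q hq
      simpa [keptIdx] using hq
    · rintro ⟨j, i⟩ _ ⟨j', i'⟩ _ h
      have := finProdFinEquiv.injective h
      simp only [Prod.mk.injEq] at this
      obtain ⟨rfl, rfl⟩ := this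
      rfl
    · intro p hp
      refine ⟨⟨(finProdFinEquiv.symm p).1, (finProdFinEquiv.symm p).2⟩, ?_, ?_⟩
      · simp only [Finset.mem_sigma, Finset.mem_univ, true_and, keptIdx, Finset.mem_filter]
        rw [Prod.mk.eta, Equiv.apply_symm_apply]
        exact Finset.mem_compl.1 hp
      · simp only []
        rw [Prod.mk.eta, Equiv.apply_symm_apply]
  rw [h, Finset.card_compl, Fintype.card_fin]
  have : τ.card ≤ n * L := (Finset.card_le_univ _).trans (by simp)
  omega

/-- For a typical word `y` and a pattern `τ` deleting a fraction at most `1 - 2 / m` of the symbols, a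
proportion of at most `exp (-n / 2 ^ A)` of all words `x` is confusable with `y`. -/
lemma card_confusable_le {Λ L n A R R' m e d : ℕ} (hm : 0 < m) (hR' : 0 < R') (hR : R = m * R')
    (hΛ : Λ = A + e) (hΛ0 : 0 < Λ) (hL : L = R ^ Λ) (hd : d = R' * R ^ (Λ - 1))
    (H : 2 * (L + 1) ^ (2 ^ A) ≤ 2 ^ R') (he : 32 * m ^ 2 ≤ 2 ^ e) (hA : 32 * m * 2 ^ e ≤ A)
    (y : Fin n → BlockSym Λ L) (hy : 2 ^ e * ∑ k, levCost A (BlockSym.lev (y k)) ≤ 8 * A * n)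
    (τ : Finset (Fin (n * L))) (hτ : m * τ.card + 2 * (n * L) ≤ m * (n * L)) :
    ((Finset.univ.filter (fun x : Fin n → BlockSym Λ L =>
      (applyDel τ (codeword R x)).Sublist (List.ofFn (codeword R y)))).card : ℝ)
      ≤ (Fintype.card (BlockSym Λ L) : ℝ) ^ n * Real.exp (-(n / 2 ^ A)) := by
  have hR0 : 0 < R := hR ▸ Nat.mul_pos hm hR'
  have hd0 : 0 < d := hd ▸ Nat.mul_pos hR' (pow_pos hR0 _)
  have hLd : L = m * d := by
    rw [hL, hd, ← mul_assoc, ← hR, ← pow_succ']; congr 1; omega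
  have hA0 : 0 < A := lt_of_lt_of_le (by positivity) hA
  set c : ℝ := (A : ℝ) / (8 * 2 ^ Λ) with hc
  have hc0 : 0 ≤ c := by positivity
  set f := codewordFn R y with hf
  let Φ : ℕ → ℝ := fun t => ((n : ℝ) - ((t / L : ℕ) : ℝ)) / 2 ^ A + c * crowdedAhead A m d y t
  let G : Finset (Fin n) := Finset.univ.filter (fun j => d ≤ (keptIdx τ j).card)
  let g : Fin n → ℝ := fun j => if j ∈ G then c else 0
  have hL0 : 0 < L := hLd ▸ Nat.mul_pos hm hd0
  have hΦ : ∀ t ≤ n * L, 0 ≤ Φ t := by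
    intro t ht
    have : t / L ≤ n := Nat.div_le_of_le_mul (by rwa [mul_comm])
    have : ((t / L : ℕ) : ℝ) ≤ n := by exact_mod_cast this
    have : 0 ≤ (n : ℝ) - ((t / L : ℕ) : ℝ) := by linarith
    positivity
  have hcount := card_embeddings_le f (n * L) Φ hΦ n
    (fun j (s : BlockSym Λ L) => kept (keptIdx τ j) (blockBit R s)) g (by
      intro j t ht nxt hn
      -- In each case the potential at `nxt s` is compared with the potential at `t`.
      have hdivmono : ∀ s : BlockSym Λ L, (kept (keptIdx τ j) (blockBit R s)).Sublist (wordSeg f t (n * L)) →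
          ((t / L : ℕ) : ℝ) ≤ ((nxt s / L : ℕ) : ℝ) := by
        intro s hs
        exact_mod_cast Nat.div_le_div_right (hn s hs).1
      have hcrmono : ∀ s : BlockSym Λ L, (kept (keptIdx τ j) (blockBit R s)).Sublist (wordSeg f t (n * L)) →
          (crowdedAhead A m d y (nxt s) : ℝ) ≤ crowdedAhead A m d y t := by
        intro s hs
        exact_mod_cast crowdedAhead_anti A m d y (hn s hs).1
      have hconst : (∀ s : BlockSym Λ L, (kept (keptIdx τ j) (blockBit R s)).Sublist (wordSeg f t (n * L)) →
          Φ (nxt s) ≤ Φ t - g j) →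
          ∑ s : BlockSym Λ L with (kept (keptIdx τ j) (blockBit R s)).Sublist (wordSeg f t (n * L)),
            Real.exp (Φ (nxt s)) ≤ Fintype.card (BlockSym Λ L) * Real.exp (Φ t - g j) := by
        intro h
        refine (Finset.sum_le_card_nsmul _ _ (Real.exp (Φ t - g j)) ?_).trans ?_
        · intro s hs
          exact Real.exp_le_exp.2 (h s (Finset.mem_filter.1 hs).2)
        · rw [nsmul_eq_mul]
          gcongr
          exact Finset.card_le_univ _
      by_cases hj : j ∈ G
      · have hg : g j = c := if_pos hj
        have hjd : d ≤ (keptIdx τ j).card := (Finset.mem_filter.1 hj).2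
        by_cases hcr : Crowded A y (t / L)
        · apply hconst
          intro s hs
          have hlen := (hn s hs).2.2.length_le
          rw [kept_length, wordSeg_length] at hlen
          have hstep := crowdedAhead_step A m d hd0 y (t := t) (t' := nxt s)
            (by have := (hn s hs).1; omega)
            (by rw [mul_assoc, ← hLd]; exact (hn s hs).2.1)
            (by rwa [Nat.div_div_eq_div_mul, mul_comm d m, ← hLd])
          have hstep' : (crowdedAhead A m d y (nxt s) : ℝ) + 1 ≤ crowdedAhead A m d y t := by
            exact_mod_cast hstep
          have h1 := hdivmono s hs
          have h2 : ((n : ℝ) - ((nxt s / L : ℕ) : ℝ)) / 2 ^ A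
              ≤ ((n : ℝ) - ((t / L : ℕ) : ℝ)) / 2 ^ A := by gcongr
          have h3 := mul_le_mul_of_nonneg_left hstep' hc0
          simp only [Φ, hg]
          linarith
        · have hs := sum_not_crowded_le hR0 hL (by omega) H y (keptIdx τ j) (hd ▸ hjd) t nxt
            (fun s hs => ⟨(hn s hs).1, (hn s hs).2.2⟩) hcr
          rw [← hc] at hs
          calc _ ≤ ∑ s : BlockSym Λ L with (kept (keptIdx τ j) (blockBit R s)).Sublist (wordSeg f t (n * L)),
                Real.exp (Φ t) *
                  Real.exp (-(((nxt s / L : ℕ) : ℝ) - ((t / L : ℕ) : ℝ)) / 2 ^ A) := by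
                refine Finset.sum_le_sum fun s hs' => ?_
                rw [← Real.exp_add]
                apply Real.exp_le_exp.2
                have h3 := mul_le_mul_of_nonneg_left
                  (hcrmono s (Finset.mem_filter.1 hs').2) hc0
                have e : ((n : ℝ) - ((nxt s / L : ℕ) : ℝ)) / 2 ^ A =
                    ((n : ℝ) - ((t / L : ℕ) : ℝ)) / 2 ^ A +
                    -(((nxt s / L : ℕ) : ℝ) - ((t / L : ℕ) : ℝ)) / 2 ^ A := by ring
                simp only [Φ]
                rw [e]
                linarith
            _ ≤ Real.exp (Φ t) * (Fintype.card (BlockSym Λ L) * Real.exp (-c)) := by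
                rw [← Finset.mul_sum]
                exact mul_le_mul_of_nonneg_left hs (Real.exp_pos _).le
            _ = _ := by rw [hg, sub_eq_add_neg, Real.exp_add (Φ t) (-c)]; ring
      · have hg : g j = 0 := if_neg hj
        apply hconst
        intro s hs
        have h1 := hdivmono s hs
        have h2 : ((n : ℝ) - ((nxt s / L : ℕ) : ℝ)) / 2 ^ A
            ≤ ((n : ℝ) - ((t / L : ℕ) : ℝ)) / 2 ^ A := by gcongr
        have h3 := mul_le_mul_of_nonneg_left (hcrmono s hs) hc0
        simp only [Φ, hg]
        linarith) 0 (Nat.zero_le _)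
  have hset : (Finset.univ.filter (fun x : Fin n → BlockSym Λ L =>
      (applyDel τ (codeword R x)).Sublist (List.ofFn (codeword R y)))) =
      Finset.univ.filter (fun x : Fin n → BlockSym Λ L =>
        (List.ofFn (fun j => kept (keptIdx τ j) (blockBit R (x j)))).flatten.Sublist
          (wordSeg f 0 (n * L))) := by
    ext x
    simp only [Finset.mem_filter, Finset.mem_univ, true_and]
    rw [applyDel_codeword, ofFn_codeword]
  rw [hset]
  refine hcount.trans ?_
  gcongr
  have hsg : ∑ j, g j = c * G.card := by
    simp only [g]
    rw [Finset.sum_ite_mem, Finset.univ_inter, Finset.sum_const, nsmul_eq_mul, mul_comm]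
  -- Many blocks keep at least `d` symbols.
  have hG : n ≤ m * G.card := by
    have h1 := sum_card_keptIdx τ
    have h2 : ∑ j, (keptIdx τ j).card ≤ G.card * L + n * d := by
      calc ∑ j, (keptIdx τ j).card ≤ ∑ j : Fin n, ((if j ∈ G then L else 0) + d) := by
            refine Finset.sum_le_sum fun j _ => ?_
            by_cases hj : j ∈ G
            · rw [if_pos hj]
              exact ((Finset.card_le_univ _).trans (by simp)).trans (Nat.le_add_right L d)
            · rw [if_neg hj]
              have : ¬ d ≤ (keptIdx τ j).card := fun h => hj (by simp [G, h])
              omega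
        _ = _ := by
            rw [Finset.sum_add_distrib, Finset.sum_ite_mem, Finset.univ_inter, Finset.sum_const,
              Finset.sum_const]
            simp
    have h3 : m * (n * L) ≤ m * (G.card * L + n * d + τ.card) := Nat.mul_le_mul_left _ (by omega)
    have h4 : n * L = m * (n * d) := by rw [hLd]; ring
    have h5 : n * L ≤ (m * G.card) * L := by nlinarith
    exact Nat.le_of_mul_le_mul_right h5 hL0
  set bad := ((Finset.range n).filter (fun b => Crowded A y b)).card with hbad
  have hb1 : 2 ^ e * bad ≤ 16 * n := by
    have := card_crowded_le A y
    have h2 : A * (2 ^ e * bad) ≤ A * (16 * n) := by nlinarith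
    exact Nat.le_of_mul_le_mul_left h2 hA0
  have hb2 := crowdedAhead_zero A m d hm y
  rw [← hbad] at hb2
  have hcr0 : (crowdedAhead A m d y 0 : ℝ) ≤ m * bad := by exact_mod_cast hb2
  have hb1' : (2 : ℝ) ^ e * bad ≤ 16 * n := by exact_mod_cast hb1
  have hG' : (n : ℝ) ≤ m * G.card := by exact_mod_cast hG
  have he' : (32 : ℝ) * m ^ 2 ≤ 2 ^ e := by exact_mod_cast he
  have hA' : (32 : ℝ) * m * 2 ^ e ≤ A := by exact_mod_cast hA
  have hm' : (0 : ℝ) < m := by exact_mod_cast hm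
  have hx : (n : ℝ) / (2 * m) ≤ G.card - m * bad := by
    have h1 : 2 * (m : ℝ) ^ 2 * bad ≤ n := by
      have := mul_le_mul_of_nonneg_right he' (Nat.cast_nonneg (α := ℝ) bad)
      nlinarith
    rw [div_le_iff₀ (by positivity)]
    nlinarith
  have hcn : 2 * (n : ℝ) / 2 ^ A ≤ c * (n / (2 * m)) := by
    rw [hc, hΛ, pow_add]
    rw [div_mul_div_comm, div_le_div_iff₀ (by positivity) (by positivity)]
    have h2A : (0 : ℝ) < 2 ^ A := by positivity
    have := mul_le_mul_of_nonneg_right hA' (by positivity : (0 : ℝ) ≤ n * 2 ^ A)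
    nlinarith
  have hcx := mul_le_mul_of_nonneg_left hx hc0
  have hcc := mul_le_mul_of_nonneg_left hcr0 hc0
  simp only [Φ, hsg, Nat.zero_div, Nat.cast_zero, sub_zero]
  have e2 : 2 * (n : ℝ) / 2 ^ A = n / 2 ^ A + n / 2 ^ A := by ring
  rw [e2] at hcn
  nlinarith

/-! ### Typical words -/

/-- The mean of `∑ k, g (y k)` over uniform tuples is `n` times the mean of `g`, with denominators
cleared. -/
lemma sum_sum_apply {S : Type*} [Fintype S] (g : S → ℕ) (n : ℕ) :
    (∑ y : Fin n → S, ∑ k, g (y k)) * Fintype.card S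
      = n * Fintype.card S ^ n * ∑ s, g s := by
  induction n with
  | zero => simp
  | succ n ih =>
    rw [← (Fin.consEquiv (fun _ : Fin (n + 1) => S)).sum_comp, Fintype.sum_prod_type]
    simp only [Fin.consEquiv_apply, Fin.sum_univ_succ, Fin.cons_zero, Fin.cons_succ,
      Finset.sum_add_distrib, Finset.sum_const, Finset.card_univ, smul_eq_mul, Fintype.card_pi,
      Finset.prod_const, Fintype.card_fin]
    rw [add_mul, mul_assoc (Fintype.card S), ih, ← Finset.mul_sum]
    ring

lemma sum_levCost_le (A Λ L : ℕ) :
    ∑ s : BlockSym Λ L, levCost A (BlockSym.lev s) ≤ 2 ^ L * (A * 2 ^ (A + 1)) := by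
  have h1 : ∑ s : BlockSym Λ L, levCost A (BlockSym.lev s)
      = 2 ^ L * ∑ a ∈ Finset.range Λ, 2 ^ a * levCost A a := by
    rw [Fintype.sum_prod_type, Fintype.sum_sigma, ← Fin.sum_univ_eq_sum_range
      (fun a => 2 ^ a * levCost A a) Λ, Finset.mul_sum]
    refine Finset.sum_congr rfl fun a _ => ?_
    simp [BlockSym.lev]
    ring
  rw [h1]
  refine Nat.mul_le_mul_left _ ?_
  calc ∑ a ∈ Finset.range Λ, 2 ^ a * levCost A a
      = ∑ a ∈ Finset.range Λ, ∑ b ∈ Finset.range A,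
          if a ≤ b then 2 ^ a * 2 ^ (A - b) else 0 := by
        refine Finset.sum_congr rfl fun a _ => ?_
        rw [levCost, Finset.mul_sum, ← Finset.sum_filter]
        refine Finset.sum_congr ?_ fun _ _ => rfl
        ext b; simp [and_comm]
    _ = ∑ b ∈ Finset.range A, ∑ a ∈ Finset.range Λ,
          if a ≤ b then 2 ^ a * 2 ^ (A - b) else 0 := Finset.sum_comm
    _ ≤ ∑ b ∈ Finset.range A, 2 ^ (A + 1) := by
        refine Finset.sum_le_sum fun b hb => ?_
        have hb' : b < A := Finset.mem_range.1 hb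
        rw [← Finset.sum_filter, ← Finset.sum_mul]
        calc _ ≤ (∑ a ∈ Finset.range (b + 1), 2 ^ a) * 2 ^ (A - b) := by
              refine Nat.mul_le_mul_right _ (Finset.sum_le_sum_of_subset ?_)
              intro a ha
              simp only [Finset.mem_filter, Finset.mem_range] at ha ⊢
              omega
          _ ≤ 2 ^ (b + 1) * 2 ^ (A - b) := by
              refine Nat.mul_le_mul_right _ ?_
              have := Nat.geomSum_lt (m := 2) (n := b + 1) (s := Finset.range (b + 1)) le_rfl
                (by simp)
              exact this.le
          _ = 2 ^ (A + 1) := by rw [← pow_add]; congr 1; omega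
    _ = A * 2 ^ (A + 1) := by simp

/-- At least half of all block sequences are typical, by Markov's inequality: the mean of `levCost` is
at most `4 * A / 2 ^ e`. -/
lemma card_typical {Λ L n A e : ℕ} (hA : 0 < A) (hΛ : Λ = A + e) :
    Fintype.card (BlockSym Λ L) ^ n ≤ 2 * (Finset.univ.filter (fun y : Fin n → BlockSym Λ L =>
      2 ^ e * ∑ k, levCost A (BlockSym.lev (y k)) ≤ 8 * A * n)).card := by
  set K := Fintype.card (BlockSym Λ L) with hK
  rcases Nat.eq_zero_or_pos n with rfl | hn
  · simp
  have hKlow : 2 ^ L * 2 ^ Λ ≤ 2 * K := by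
    have h := card_blockSym Λ L
    have h2 : (2 : ℝ) ≤ 2 ^ Λ := by
      calc (2 : ℝ) = 2 ^ 1 := by norm_num
        _ ≤ 2 ^ Λ := pow_le_pow_right₀ (by norm_num) (by omega)
    have h3 : (0 : ℝ) < 2 ^ L := by positivity
    have : ((2 ^ L * 2 ^ Λ : ℕ) : ℝ) ≤ ((2 * K : ℕ) : ℝ) := by
      push_cast
      rw [hK, h]
      nlinarith
    exact_mod_cast this
  have hK0 : 0 < K := by
    have : 0 < 2 ^ L * 2 ^ Λ := by positivity
    omega
  set bad := Finset.univ.filter (fun y : Fin n → BlockSym Λ L =>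
      ¬ 2 ^ e * ∑ k, levCost A (BlockSym.lev (y k)) ≤ 8 * A * n) with hbad
  have hsplit := Finset.card_filter_add_card_filter_not (s := Finset.univ)
    (fun y : Fin n → BlockSym Λ L => 2 ^ e * ∑ k, levCost A (BlockSym.lev (y k)) ≤ 8 * A * n)
  rw [← hbad, Finset.card_univ, Fintype.card_pi, Finset.prod_const, Finset.card_univ,
    Fintype.card_fin, ← hK] at hsplit
  have hmarkov : bad.card * (8 * A * n)
      ≤ 2 ^ e * ∑ y : Fin n → BlockSym Λ L, ∑ k, levCost A (BlockSym.lev (y k)) := by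
    rw [Finset.mul_sum]
    calc bad.card * (8 * A * n) = ∑ y ∈ bad, 8 * A * n := by simp
      _ ≤ ∑ y ∈ bad, 2 ^ e * ∑ k, levCost A (BlockSym.lev (y k)) :=
          Finset.sum_le_sum fun y hy => (not_le.1 (Finset.mem_filter.1 hy).2).le
      _ ≤ _ := Finset.sum_le_sum_of_subset (Finset.subset_univ _)
  have hT := sum_sum_apply (fun s : BlockSym Λ L => levCost A (BlockSym.lev s)) n
  rw [← hK] at hT
  have hsum := sum_levCost_le A Λ L
  have h1 : (4 * A * n * K) * (2 * bad.card) ≤ (4 * A * n * K) * K ^ n := by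
    calc (4 * A * n * K) * (2 * bad.card) = bad.card * (8 * A * n) * K := by ring
      _ ≤ 2 ^ e * (∑ y : Fin n → BlockSym Λ L, ∑ k, levCost A (BlockSym.lev (y k))) * K :=
          Nat.mul_le_mul_right _ hmarkov
      _ = 2 ^ e * (n * K ^ n * ∑ s : BlockSym Λ L, levCost A (BlockSym.lev s)) := by
          rw [mul_assoc, hT]
      _ ≤ 2 ^ e * (n * K ^ n * (2 ^ L * (A * 2 ^ (A + 1)))) := by gcongr
      _ = 2 * A * n * K ^ n * (2 ^ L * 2 ^ Λ) := by rw [hΛ]; ring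
      _ ≤ 2 * A * n * K ^ n * (2 * K) := by gcongr
      _ = _ := by ring
  have h2 : 2 * bad.card ≤ K ^ n := Nat.le_of_mul_le_mul_left h1 (by positivity)
  omega

lemma exists_run_factor (m Λ q : ℕ) :
    ∃ R' : ℕ, 0 < R' ∧ 2 * ((m * R') ^ Λ + 1) ^ q ≤ 2 ^ R' := by
  have h := tendsto_pow_const_div_const_pow_of_one_lt (Λ * q) (r := (2 : ℝ)) (by norm_num)
  set c : ℝ := 2 * ((m : ℝ) ^ Λ + 1) ^ q with hc
  have hc0 : 0 < c := by positivity
  obtain ⟨R', hR, hR1⟩ := ((h.eventually (gt_mem_nhds (inv_pos.2 hc0))).and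
    (Filter.eventually_ge_atTop 1)).exists
  refine ⟨R', hR1, ?_⟩
  have hr : (1 : ℝ) ≤ R' := by exact_mod_cast hR1
  rw [div_lt_iff₀ (by positivity), inv_mul_eq_div, lt_div_iff₀ hc0] at hR
  have : (2 * (((m : ℝ) * R') ^ Λ + 1) ^ q) ≤ 2 ^ R' := by
    calc 2 * (((m : ℝ) * R') ^ Λ + 1) ^ q
        ≤ 2 * (((m : ℝ) ^ Λ + 1) * (R' : ℝ) ^ Λ) ^ q := by
          gcongr
          rw [mul_pow, add_mul, one_mul]
          gcongr
          exact one_le_pow₀ hr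
      _ = (R' : ℝ) ^ (Λ * q) * c := by rw [hc, mul_pow, ← pow_mul]; ring
      _ ≤ _ := hR.le
  exact_mod_cast this

/-! ### The code -/

/-- From a bound on the number of words confusable with a given one to a code. Words at indices that
are not bad are distinct from all others, because equal words are confusable. -/
lemma exists_code_s2 {S : Type*} [Fintype S] {N : ℕ} (w : S → Fin N → Bool) (r B k D : ℕ)
    (hr : r ≤ N) (hD : 0 < D)
    (hB : ∀ τ : Finset (Fin N), τ.card = r → ∀ y, (Finset.univ.filter (fun x =>
      (applyDel τ (w x)).Sublist (List.ofFn (w y)))).card ≤ B)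
    (hlt : 2 ^ N * 2 ^ (4 * D * k) * 2 *
      ((4 * D * k * B) ^ k * Fintype.card S ^ (4 * D * k - k)) < Fintype.card S ^ (4 * D * k)) :
    ∃ C : Finset (Fin N → Bool), 2 * D * k ≤ C.card ∧
      ∀ τ : Finset (Fin N), τ.card = r →
        (C.filter (fun x => ∃ y ∈ C, y ≠ x ∧
          (applyDel τ x).Sublist (List.ofFn y))).card ≤ 2 * k := by
  obtain ⟨X, hX⟩ := exists_good_tuple
    (fun (τ : Finset (Fin N)) x y =>
      τ.card = r ∧ (applyDel τ (w x)).Sublist (List.ofFn (w y))) B (4 * D * k) k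
    (by
      intro τ y
      by_cases h : τ.card = r
      · simpa [h] using hB τ h y
      · simp [h])
    (by simpa using hlt)
  refine ⟨Finset.univ.image (fun i => w (X i)), ?_, ?_⟩
  · obtain ⟨τ, -, hτ⟩ := Finset.exists_subset_card_eq
      (s := (Finset.univ : Finset (Fin N))) (n := r) (by simpa using hr)
    set bad := Finset.univ.filter (fun i => ∃ j, j ≠ i ∧ (τ.card = r ∧
      (applyDel τ (w (X i))).Sublist (List.ofFn (w (X j))))) with hbad
    have h1 : bad.card ≤ 2 * k := by convert hX τ
    have h2 : badᶜ.card ≤ (Finset.univ.image (fun i => w (X i))).card := by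
      refine Finset.card_le_card_of_injOn (fun i => w (X i)) ?_ ?_
      · intro i _
        simp
      · intro i hi j _ hij
        by_contra hne
        apply Finset.mem_compl.1 (Finset.mem_coe.1 hi)
        rw [hbad, Finset.mem_filter]
        refine ⟨Finset.mem_univ _, j, fun h => hne h.symm, hτ, ?_⟩
        simp only at hij
        rw [← hij, applyDel, List.ofFn_eq_map]
        exact List.filter_sublist.map _
    rw [Finset.card_compl, Fintype.card_fin] at h2
    have h3 : k ≤ D * k := Nat.le_mul_of_pos_left k hD
    have h4 : 4 * D * k = 4 * (D * k) := by ring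
    have h5 : 2 * D * k = 2 * (D * k) := by ring
    omega
  · intro τ hτ
    refine le_trans ?_ (hX τ)
    refine le_trans (Finset.card_le_card ?_) (Finset.card_image_le (f := fun i => w (X i)))
    intro x hx
    simp only [Finset.mem_filter, Finset.mem_image, Finset.mem_univ, true_and] at hx
    obtain ⟨⟨i, rfl⟩, y, ⟨j, rfl⟩, hne, hs⟩ := hx
    simp only [Finset.mem_image, Finset.mem_filter, Finset.mem_univ, true_and]
    exact ⟨i, ⟨j, fun h => hne (by rw [h]), hτ, hs⟩, rfl⟩

/-- The numerical condition of `exists_good_tuple` for `M = 4 * D * k` and all `2 ^ N` patterns; the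
confusion probability `B / s` is at most `2 / E ^ 2`. -/
lemma union_bound_lt {s B D k N : ℕ} {E : ℝ} (hs : 0 < s) (hD : 0 < D) (hk : (k : ℝ) ≤ E)
    (hB : B * E ^ 2 ≤ 2 * s) (hN : 1 + N ≤ k) (hE : 2 ^ (1 + 4 * D) * (8 * D) < E) :
    2 ^ N * 2 ^ (4 * D * k) * 2 * ((4 * D * k * B) ^ k * s ^ (4 * D * k - k))
      < s ^ (4 * D * k) := by
  have hE0 : 0 < E := lt_of_le_of_lt (by positivity) hE
  have hs' : (0 : ℝ) < s := by exact_mod_cast hs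
  have hbase : 2 ^ (1 + 4 * D) * (4 * D * k * B) < s := by
    have h1 : (2 : ℝ) ^ (1 + 4 * D) * (4 * D * k * B) * E < s * E := by
      calc (2 : ℝ) ^ (1 + 4 * D) * (4 * D * k * B) * E
          ≤ (2 : ℝ) ^ (1 + 4 * D) * (4 * D * E * B) * E := by gcongr
        _ = (2 : ℝ) ^ (1 + 4 * D) * (4 * D) * (B * E ^ 2) := by ring
        _ ≤ (2 : ℝ) ^ (1 + 4 * D) * (4 * D) * (2 * s) := by gcongr
        _ = s * (2 ^ (1 + 4 * D) * (8 * D)) := by ring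
        _ < s * E := by gcongr
    have h2 := lt_of_mul_lt_mul_right h1 hE0.le
    exact_mod_cast h2
  have hk' : k ≤ 4 * D * k := Nat.le_mul_of_pos_left k (by positivity)
  calc 2 ^ N * 2 ^ (4 * D * k) * 2 * ((4 * D * k * B) ^ k * s ^ (4 * D * k - k))
      = 2 ^ (1 + N) * 2 ^ (4 * D * k) * (4 * D * k * B) ^ k * s ^ (4 * D * k - k) := by ring
    _ ≤ 2 ^ k * 2 ^ (4 * D * k) * (4 * D * k * B) ^ k * s ^ (4 * D * k - k) := by
        gcongr
        norm_num
    _ = (2 ^ (1 + 4 * D) * (4 * D * k * B)) ^ k * s ^ (4 * D * k - k) := by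
        rw [mul_pow (2 ^ (1 + 4 * D)), ← pow_mul, add_mul, one_mul, pow_add]
    _ < s ^ k * s ^ (4 * D * k - k) := by
        gcongr
        omega
    _ = _ := by rw [← pow_add]; congr 1; omega

lemma exists_length (c : ℝ) (hc : 0 < c) (L n₀ : ℕ) (Q : ℝ) :
    ∃ n ≥ n₀, (n * L + 2 : ℝ) ≤ Real.exp (c * n) ∧ Q < Real.exp (c * n) := by
  have h1 : Filter.Tendsto (fun n : ℕ => c * (n : ℝ)) Filter.atTop Filter.atTop :=
    tendsto_natCast_atTop_atTop.const_mul_atTop hc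
  have h2 := (Real.tendsto_exp_div_pow_atTop 1).comp h1
  have h3 := Real.tendsto_exp_atTop.comp h1
  obtain ⟨n, ⟨⟨h4, h5⟩, h6⟩, h7⟩ := (((h2.eventually_ge_atTop ((L + 2) / c)).and
    (h3.eventually_gt_atTop Q)).and (Filter.eventually_ge_atTop n₀)).and
    (Filter.eventually_ge_atTop 1) |>.exists
  refine ⟨n, h6, ?_, h5⟩
  have hn : (1 : ℝ) ≤ n := by exact_mod_cast h7
  simp only [Function.comp, pow_one] at h4
  rw [le_div_iff₀ (by positivity)] at h4
  have h8 : ((L : ℝ) + 2) / c * (c * n) = (L + 2) * n := by field_simp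
  rw [h8] at h4
  nlinarith

/-- For every `p ∈ (0,1)` there exists `R > 0` such that for every `ε > 0` there are
infinitely many block lengths `N` admitting a code `C ⊆ {0,1}^N` of size at least
`2^{RN}` that decodes `⌊pN⌋` oblivious deletions in the average case: for every
deletion pattern of `⌊pN⌋` deletions, at most `ε|C|` codewords are confusable with
another codeword. -/
theorem oblivious_average_case_codes :
    ∀ p : ℝ, 0 < p → p < 1 → ∃ R : ℝ, 0 < R ∧
      ∀ ε : ℝ, 0 < ε → ∀ n₀ : ℕ, ∃ N ≥ n₀, ∃ C : Finset (Fin N → Bool),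
        (C.card : ℝ) ≥ 2 ^ (R * N) ∧
        ∀ τ : Finset (Fin N), τ.card = ⌊p * (N : ℝ)⌋₊ →
          ((C.filter (fun x => ∃ y ∈ C, y ≠ x ∧
              (applyDel τ x).Sublist (List.ofFn y))).card : ℝ) ≤ ε * C.card := by
  intro p hp0 hp1
  have hq : 0 < 1 - p := by linarith
  set m := ⌈2 / (1 - p)⌉₊ with hm
  have hmq : 2 ≤ m * (1 - p) := (div_le_iff₀ hq).1 (Nat.le_ceil _)
  have hm0 : 0 < m := Nat.ceil_pos.2 (by positivity)
  set e := 32 * m ^ 2 with he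
  set A := 32 * m * 2 ^ e with hA
  have hA0 : 0 < A := by positivity
  set Λ := A + e with hΛ
  obtain ⟨R', hR'0, hR'⟩ := exists_run_factor m Λ (2 ^ A)
  set R := m * R' with hR
  set L := R ^ Λ with hL
  have hR0 : 0 < R := Nat.mul_pos hm0 hR'0
  have hL0 : 0 < L := pow_pos hR0 _
  have hL0' : (0 : ℝ) < L := by exact_mod_cast hL0
  set c : ℝ := 1 / (2 * 2 ^ A) with hc
  have hc0 : 0 < c := by positivity
  refine ⟨c / L, by positivity, ?_⟩
  intro ε hε n₀
  obtain ⟨D, hDε⟩ := exists_nat_ge (1 / ε + 1)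
  have hD1 : (1 : ℝ) ≤ D := le_trans (by have : 0 < 1 / ε := by positivity
                                         linarith) hDε
  have hD0 : 0 < D := by exact_mod_cast lt_of_lt_of_le one_pos hD1
  have hDε' : 1 ≤ ε * D := by
    have : 1 / ε ≤ D := by linarith
    rw [div_le_iff₀ hε] at this
    linarith
  obtain ⟨n, hn0, hnk, hnE⟩ := exists_length c hc0 L n₀ (2 ^ (1 + 4 * D) * (8 * D))
  set E := Real.exp (c * n) with hE
  have hE0 : 0 < E := Real.exp_pos _
  set k := ⌊E⌋₊ with hk
  have hkE : (k : ℝ) ≤ E := Nat.floor_le hE0.le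
  have hEk : E < k + 1 := Nat.lt_floor_add_one E
  have hkN : 1 + n * L ≤ k := Nat.le_floor (by push_cast; linarith)
  -- The typical block sequences, from which the code is drawn.
  let S := {y : Fin n → BlockSym Λ L //
    2 ^ e * ∑ j, levCost A (BlockSym.lev (y j)) ≤ 8 * A * n}
  have hScard : Fintype.card (BlockSym Λ L) ^ n ≤ 2 * Fintype.card S := by
    have := card_typical (L := L) (n := n) hA0 hΛ
    rw [Fintype.card_subtype]
    convert this
  have hKn : 0 < Fintype.card (BlockSym Λ L) ^ n := by
    apply pow_pos
    have : (0 : ℝ) < Fintype.card (BlockSym Λ L) := by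
      rw [card_blockSym]
      have : (1 : ℝ) < 2 ^ Λ := one_lt_pow₀ (by norm_num) (by omega)
      have : (0 : ℝ) < 2 ^ L := by positivity
      nlinarith
    exact_mod_cast this
  have hS0 : 0 < Fintype.card S := by omega
  set B := ⌊2 * (Fintype.card S : ℝ) / E ^ 2⌋₊ with hBdef
  have hBE : B * E ^ 2 ≤ 2 * (Fintype.card S : ℝ) :=
    (le_div_iff₀ (by positivity)).1 (Nat.floor_le (by positivity))
  have hpN : p * ((n * L : ℕ) : ℝ) ≤ ((n * L : ℕ) : ℝ) := by
    have : (0 : ℝ) ≤ ((n * L : ℕ) : ℝ) := Nat.cast_nonneg _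
    nlinarith
  obtain ⟨C, hC1, hC2⟩ := exists_code_s2 (S := S) (N := n * L) (fun x => codeword R x.1)
    ⌊p * ((n * L : ℕ) : ℝ)⌋₊ B k D
    (Nat.floor_le_of_le hpN) hD0 (by
      intro τ hτ y
      apply Nat.le_floor
      have hτ' : (τ.card : ℝ) ≤ p * ((n * L : ℕ) : ℝ) := by
        rw [hτ]; exact Nat.floor_le (by positivity)
      have hτ2 : m * τ.card + 2 * (n * L) ≤ m * (n * L) := by
        have h0 : (0 : ℝ) ≤ ((n * L : ℕ) : ℝ) := Nat.cast_nonneg _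
        have h1 : (m : ℝ) * τ.card ≤ m * (p * ((n * L : ℕ) : ℝ)) := by gcongr
        have h2 := mul_le_mul_of_nonneg_right hmq h0
        have h3 : (m : ℝ) * τ.card + 2 * ((n * L : ℕ) : ℝ) ≤ m * ((n * L : ℕ) : ℝ) := by
          linarith
        exact_mod_cast h3
      have hconf := card_confusable_le (n := n) hm0 hR'0 hR hΛ (by omega) hL rfl hR'
        (Nat.lt_two_pow_self.le : 32 * m ^ 2 ≤ 2 ^ e) le_rfl y.1 y.2 τ hτ2
      have hsub : (Finset.univ.filter (fun x : S =>
          (applyDel τ (codeword R x.1)).Sublist (List.ofFn (codeword R y.1)))).card ≤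
          (Finset.univ.filter (fun x : Fin n → BlockSym Λ L =>
            (applyDel τ (codeword R x)).Sublist (List.ofFn (codeword R y.1)))).card := by
        refine Finset.card_le_card_of_injOn Subtype.val ?_ Subtype.val_injective.injOn
        intro x hx
        simpa using hx
      have hexp : Real.exp (-(n / 2 ^ A)) = (E ^ 2)⁻¹ := by
        rw [hE, ← Real.exp_nat_mul, ← Real.exp_neg]
        congr 1
        rw [hc]
        push_cast
        field_simp
      rw [hexp] at hconf
      have hScard' : (Fintype.card (BlockSym Λ L) : ℝ) ^ n ≤ 2 * Fintype.card S := by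
        exact_mod_cast hScard
      calc _ ≤ _ := Nat.cast_le.2 hsub
        _ ≤ _ := hconf
        _ ≤ 2 * Fintype.card S * (E ^ 2)⁻¹ := by gcongr
        _ = _ := by rw [div_eq_mul_inv])
    (union_bound_lt hS0 hD0 hkE hBE hkN hnE)
  have hC1' : 2 * (D : ℝ) * k ≤ C.card := by exact_mod_cast hC1
  have hk1 : (1 : ℝ) ≤ k := by
    have : 1 ≤ k := by omega
    exact_mod_cast this
  refine ⟨n * L, ?_, C, ?_, ?_⟩
  · exact hn0.trans (Nat.le_mul_of_pos_right n hL0)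
  · have h1 : c / L * ((n * L : ℕ) : ℝ) = c * n := by
      push_cast; field_simp
    rw [h1]
    have h2 : (2 : ℝ) ^ (c * n) ≤ E := by
      rw [Real.rpow_def_of_pos (by norm_num), hE]
      apply Real.exp_le_exp.2
      have h3 : Real.log 2 ≤ 1 := by have := Real.log_two_lt_d9; linarith
      have h4 : 0 ≤ c * n := by positivity
      nlinarith
    nlinarith
  · intro τ hτ
    have h1 := hC2 τ hτ
    have h2 : ((C.filter (fun x => ∃ y ∈ C, y ≠ x ∧
        (applyDel τ x).Sublist (List.ofFn y))).card : ℝ) ≤ 2 * k := by exact_mod_cast h1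
    calc _ ≤ _ := h2
      _ ≤ (ε * D) * (2 * k) := le_mul_of_one_le_left (by positivity) hDε'
      _ = ε * (2 * D * k) := by ring
      _ ≤ ε * C.card := by gcongr
end

section
/- Fix integers K ≥ 1, λ ≥ 1 with λ−1 ≤ K, positive integers s, t, and m, n ≥ 1. For every Y ∈ {1,…,K}^n and every choice of subsets S_1,…,S_m ⊆ {1,…,K} each of size exactly λ−1, the number of X ∈ {1,…,K}^m with X ≺_{(s,t,S_1,…,S_m)} Y is at most the number of X ∈ {1,…,K}^m with X ≺_{(s,t,[λ−1],…,[λ−1])} Y, where [λ−1] = {1,…,λ−1} is repeated m times. -/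
/-!
The proof is a coupling. Call a matching instance *better* than another one on the same lattice if
every type-A pair of the latter is a type-A pair of the former. Run both processes simultaneously,
so that after each move they are on the same antidiagonal `a + b = const`. The better path never
falls behind in the `a`-coordinate: if the paths are apart and meet, the better one has just made a
B-move and the other one an A-move, so at the meeting point the better one is the less constrained
by the limit `s` on A-runs and the more pushed by the limit `t` on B-runs; hence, as long as they
stay together, an A-move of the worse path forces one of the better path. So success carries over
(`mRun_mono`).

It remains to find an injection `X ↦ X'` on `{1,…,K}^m` for which the instance `(X', [λ-1],…,[λ-1])`
is better than `(X, S_1,…,S_m)`. Coordinatewise, take the permutation `shift S_i` of `{1,…,K}` that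
maps `S_i` onto `[λ-1]` and its complement onto `{λ,…,K}`, both in increasing order: it never
decreases an element outside `S_i`.
-/

open scoped Classical

/-- The pair `(a,b)` (1-indexed positions in `X`, `Y`) is type-A: `X_a ∈ S_a` or
`X_a ≥ Y_b`. -/
def typeA (S : List (Finset ℕ)) (X Y : List ℕ) (a b : ℕ) : Bool :=
  decide (X.getD (a - 1) 0 ∈ S.getD (a - 1) ∅ ∨ Y.getD (b - 1) 0 ≤ X.getD (a - 1) 0)

/-- One run of the matching process, with fuel. -/
def mRun (s t : ℕ) (S : List (Finset ℕ)) (X Y : List ℕ) :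
    ℕ → ℕ × ℕ × ℕ × ℕ → ℕ × ℕ
  | 0, (a, b, _, _) => (a, b)
  | fuel + 1, (a, b, ca, cb) =>
      if a = X.length ∨ b = Y.length then (a, b)
      else if ca < s ∧ (t ≤ cb ∨ typeA S X Y a b = true) then
        mRun s t S X Y fuel (a + 1, b, ca + 1, 0)
      else
        mRun s t S X Y fuel (a, b + 1, 0, cb + 1)

/-- `X ≺_{(s,t,S_1,…,S_m)} Y` : the matching of `X` with `Y` succeeds. -/
def matchable (s t : ℕ) (S : List (Finset ℕ)) (X Y : List ℕ) : Prop :=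
  (mRun s t S X Y (X.length + Y.length) (1, 1, 0, 0)).1 = X.length

/-- Coupling of two processes on the same antidiagonal: the primed one has the larger set of
type-A pairs, is weakly ahead in `a`, and, where the positions coincide, has the shorter current
A-run and the longer current B-run. -/
theorem mRun_mono (s t : ℕ) (S S' : List (Finset ℕ)) (X X' Y : List ℕ)
    (hlen : X'.length = X.length)
    (hA : ∀ a b, 1 ≤ a → a ≤ X.length → typeA S X Y a b = true → typeA S' X' Y a b = true)
    (fuel : ℕ) : ∀ a b ca cb a' b' ca' cb' : ℕ, 1 ≤ a → a + b = a' + b' → a ≤ a' →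
      a' ≤ X.length → b ≤ Y.length → (a = a' → ca' ≤ ca ∧ cb ≤ cb') →
      (mRun s t S X Y fuel (a, b, ca, cb)).1 = X.length →
      (mRun s t S' X' Y fuel (a', b', ca', cb')).1 = X.length := by
  induction fuel with
  | zero =>
    intro a b ca cb a' b' ca' cb' h1 hab haa hm hn hc h
    simp only [mRun] at h ⊢
    omega
  | succ fuel ih =>
    intro a b ca cb a' b' ca' cb' h1 hab haa hm hn hc h
    by_cases ha' : a' = X.length
    · simp [mRun, hlen, ha']
    by_cases hb : b = Y.length
    · simp only [mRun, hb, or_true, if_true] at h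
      omega
    have hb' : b' ≠ Y.length := by omega
    have ha : a ≠ X.length := by omega
    rw [mRun, if_neg (by tauto)] at h
    rw [mRun, if_neg (by rw [hlen]; tauto)]
    split_ifs at h with hmove
    · split_ifs with hmove'
      · exact ih _ _ _ _ _ _ _ _ (by omega) (by omega) (by omega) (by omega) (by omega)
          (by intro e; have := hc (by omega); omega) h
      · have hne : a ≠ a' := by
          rintro rfl
          -- At a common position the primed process would have made the A-move as well.
          have hcc := hc rfl
          have hbb : b = b' := by omega
          subst hbb
          apply hmove'
          refine ⟨by omega, ?_⟩
          rcases hmove.2 with h2 | h2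
          · left; omega
          · right; exact hA a b h1 hm h2
        exact ih _ _ _ _ _ _ _ _ (by omega) (by omega) (by omega) (by omega) (by omega)
          (by intro e; omega) h
    · split_ifs with hmove'
      · exact ih _ _ _ _ _ _ _ _ (by omega) (by omega) (by omega) (by omega) (by omega)
          (by intro e; omega) h
      · exact ih _ _ _ _ _ _ _ _ (by omega) (by omega) (by omega) (by omega) (by omega)
          (by intro e; have := hc (by omega); omega) h

/-- On `{1,…,K} ⊇ A`, the permutation sending `A` to `{1,…,|A|}` and the complement of `A` to
`{|A|+1,…,K}`, increasingly on each part. The `k`-th element `x` of the complement goes to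
`k + |A| = x + #{y ∈ A | x < y}`. -/
def shift (A : Finset ℕ) (x : ℕ) : ℕ :=
  if x ∈ A then (A.filter (· ≤ x)).card else x + (A.filter (x < ·)).card

theorem shift_mem {A : Finset ℕ} {x : ℕ} (hx : x ∈ A) :
    shift A x ∈ Finset.Icc 1 A.card := by
  rw [shift, if_pos hx, Finset.mem_Icc]
  exact ⟨Finset.card_pos.2 ⟨x, by simp [hx]⟩, Finset.card_filter_le _ _⟩

theorem le_shift {A : Finset ℕ} {x : ℕ} (hx : x ∉ A) : x ≤ shift A x := by
  rw [shift, if_neg hx]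
  omega

theorem card_lt_shift {K : ℕ} {A : Finset ℕ} (hA : A ⊆ Finset.Icc 1 K) {x : ℕ} (h1 : 1 ≤ x)
    (hx : x ∉ A) : A.card < shift A x := by
  rw [shift, if_neg hx]
  have h := Finset.card_filter_add_card_filter_not (s := A) (fun y => x < y)
  have h2 : (A.filter (fun y => ¬ x < y)).card ≤ (Finset.Ico 1 x).card := by
    apply Finset.card_le_card
    intro y hy
    rw [Finset.mem_filter] at hy
    have := Finset.mem_Icc.1 (hA hy.1)
    have : y ≠ x := by rintro rfl; exact hx hy.1
    rw [Finset.mem_Ico]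
    omega
  rw [Nat.card_Ico] at h2
  omega

theorem shift_mem_Icc {K : ℕ} {A : Finset ℕ} (hA : A ⊆ Finset.Icc 1 K) {x : ℕ}
    (hx : x ∈ Finset.Icc 1 K) : shift A x ∈ Finset.Icc 1 K := by
  by_cases hxA : x ∈ A
  · have h := Finset.mem_Icc.1 (shift_mem hxA)
    have h2 := Finset.card_le_card hA
    rw [Nat.card_Icc] at h2
    rw [Finset.mem_Icc]
    omega
  · rw [Finset.mem_Icc] at hx ⊢
    refine ⟨hx.1.trans (le_shift hxA), ?_⟩
    rw [shift, if_neg hxA]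
    have h2 : (A.filter (x < ·)).card ≤ (Finset.Ioc x K).card := by
      apply Finset.card_le_card
      intro y hy
      rw [Finset.mem_filter] at hy
      have := Finset.mem_Icc.1 (hA hy.1)
      rw [Finset.mem_Ioc]
      omega
    rw [Nat.card_Ioc] at h2
    omega

theorem shift_lt_of_mem {A : Finset ℕ} {x y : ℕ} (hx : x ∈ A) (hy : y ∈ A) (h : x < y) :
    shift A x < shift A y := by
  rw [shift, shift, if_pos hx, if_pos hy]
  apply Finset.card_lt_card
  rw [Finset.ssubset_iff_of_subset]
  · exact ⟨y, by simp [hy], by simp [h]⟩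
  · intro z hz
    rw [Finset.mem_filter] at hz ⊢
    exact ⟨hz.1, by omega⟩

theorem shift_lt_of_notMem {A : Finset ℕ} {x y : ℕ} (hx : x ∉ A) (hy : y ∉ A) (h : x < y) :
    shift A x < shift A y := by
  rw [shift, shift, if_neg hx, if_neg hy]
  have h1 : (A.filter (x < ·)).card ≤ (Finset.Ioo x y ∪ A.filter (y < ·)).card := by
    apply Finset.card_le_card
    intro z hz
    rw [Finset.mem_filter] at hz
    have : z ≠ y := by rintro rfl; exact hy hz.1
    rw [Finset.mem_union, Finset.mem_Ioo, Finset.mem_filter]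
    rcases lt_or_ge y z with h | h
    · exact Or.inr ⟨hz.1, h⟩
    · exact Or.inl ⟨hz.2, by omega⟩
  have h2 := Finset.card_union_le (Finset.Ioo x y) (A.filter (y < ·))
  rw [Nat.card_Ioo] at h2
  omega

theorem shift_injOn {K : ℕ} {A : Finset ℕ} (hA : A ⊆ Finset.Icc 1 K) :
    Set.InjOn (shift A) (Finset.Icc 1 K) := by
  intro x hx y hy hxy
  rw [Finset.mem_coe, Finset.mem_Icc] at hx hy
  by_cases hxA : x ∈ A <;> by_cases hyA : y ∈ A
  · rcases lt_trichotomy x y with h | h | h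
    · have := shift_lt_of_mem hxA hyA h; omega
    · exact h
    · have := shift_lt_of_mem hyA hxA h; omega
  · have h1 := Finset.mem_Icc.1 (shift_mem hxA)
    have h2 := card_lt_shift hA hy.1 hyA
    omega
  · have h1 := Finset.mem_Icc.1 (shift_mem hyA)
    have h2 := card_lt_shift hA hx.1 hxA
    omega
  · rcases lt_trichotomy x y with h | h | h
    · have := shift_lt_of_notMem hxA hyA h; omega
    · exact h
    · have := shift_lt_of_notMem hyA hxA h; omega

/-- The choice `S_1 = ⋯ = S_m = {1,…,λ−1}` is the worst: for every `Y` and every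
choice of size-`(λ−1)` sets `S_1,…,S_m`, the number of `X ∈ [K]^m` matchable in `Y`
with respect to `S_1,…,S_m` is at most the number matchable with respect to
`[λ−1],…,[λ−1]`. -/
theorem worst_sets_are_initial_segments (K lam s t m n : ℕ)
    (hK : 1 ≤ K) (hlam : 1 ≤ lam) (hlamK : lam - 1 ≤ K)
    (hs : 0 < s) (ht : 0 < t) (hm : 1 ≤ m) (hn : 1 ≤ n)
    (Y : List ℕ) (hYlen : Y.length = n) (hYmem : ∀ v ∈ Y, v ∈ Finset.Icc 1 K)
    (S : List (Finset ℕ)) (hSlen : S.length = m)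
    (hS : ∀ A ∈ S, A ⊆ Finset.Icc 1 K ∧ A.card = lam - 1) :
    ((Fintype.piFinset (fun _ : Fin m => Finset.Icc 1 K)).filter
        (fun X => matchable s t S (List.ofFn X) Y)).card ≤
    ((Fintype.piFinset (fun _ : Fin m => Finset.Icc 1 K)).filter
        (fun X => matchable s t (List.replicate m (Finset.Icc 1 (lam - 1)))
          (List.ofFn X) Y)).card := by
  have hSi : ∀ i : Fin m, S.getD i ∅ ⊆ Finset.Icc 1 K ∧ (S.getD i ∅).card = lam - 1 := by
    intro i
    have hi : (i : ℕ) < S.length := by rw [hSlen]; exact i.2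
    rw [List.getD_eq_getElem _ _ hi]
    exact hS _ (List.getElem_mem hi)
  apply Finset.card_le_card_of_injOn
    (fun (X : Fin m → ℕ) (i : Fin m) => shift (S.getD i ∅) (X i))
  · intro X hX
    rw [Finset.mem_coe, Finset.mem_filter, Fintype.mem_piFinset] at hX ⊢
    refine ⟨fun i => shift_mem_Icc (hSi i).1 (hX.1 i), ?_⟩
    have hmatch := hX.2
    unfold matchable at hmatch ⊢
    have hlen : (List.ofFn fun i : Fin m => shift (S.getD i ∅) (X i)).length
        = (List.ofFn X).length := by simp
    rw [hlen]
    refine mRun_mono s t S _ (List.ofFn X) _ Y hlen ?_ _ 1 1 0 0 1 1 0 0 le_rfl rfl le_rfl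
      (by simpa using hm) (by omega) (by simp) hmatch
    intro a b h1 ha hab
    rw [List.length_ofFn] at ha
    obtain ⟨i, hi⟩ : ∃ i : Fin m, (i : ℕ) = a - 1 := ⟨⟨a - 1, by omega⟩, rfl⟩
    simp only [typeA, ← hi, decide_eq_true_eq] at hab ⊢
    have e : ∀ Z : Fin m → ℕ, (List.ofFn Z).getD i 0 = Z i := by
      intro Z
      rw [List.getD_eq_getElem _ _ (by simp)]
      simp
    rw [e] at hab ⊢
    rw [List.getD_eq_getElem (List.replicate m _) _ (by simp), List.getElem_replicate]
    by_cases hmem : X i ∈ S.getD i ∅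
    · left
      have h := shift_mem hmem
      rwa [(hSi i).2] at h
    · right
      exact (hab.resolve_left hmem).trans (le_shift hmem)
  · intro X hX X' hX' h
    rw [Finset.mem_coe, Finset.mem_filter, Fintype.mem_piFinset] at hX hX'
    funext i
    exact shift_injOn (hSi i).1 (hX.1 i) (hX'.1 i) (congrFun h i)
end
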